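/- arXiv:2003.13125 — 2 statements merged into one kernel-verified Lean document; each statement's English description precedes it below -/
import Mathlib

section
/- For every n ≥ 1, the covering type of the n-torus T^n satisfies ct(T^n) ≥ (n+1)(n+2)/2; that is, for every topological space Y homotopy equivalent to T^n and every good cover U of Y, U has at least (n+1)(n+2)/2 members. -/
/-- A good cover of `Y`: a finite family of open subsets covering `Y` such that every
nonempty intersection of (finitely many) members is contractible. -/
def IsGoodCover {Y : Type*} [TopologicalSpace Y] (U : Finset (Set Y)) : Prop :=
  (∀ s ∈ U, IsOpen s) ∧ (⋃₀ (U : Set (Set Y)) = Set.univ) ∧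
    ∀ T ⊆ U, T.Nonempty → (⋂₀ (T : Set (Set Y))).Nonempty →
      ContractibleSpace ↥(⋂₀ (T : Set (Set Y)))

namespace TorusCT

open Set MeasureTheory

/-- `f` has a continuous real logarithm on `A`. -/
def Lifts {X : Type*} [TopologicalSpace X] (f : X → Circle) (A : Set X) : Prop :=
  ∃ g : X → ℝ, ContinuousOn g A ∧ ∀ x ∈ A, Circle.exp (g x) = f x

theorem exists_ratio {A : Type*} [TopologicalSpace A] {f₀ f₁ : C(A, Circle)}
    (H : f₀.Homotopic f₁) : ∃ u : C(A, ℝ), ∀ a, f₁ a = f₀ a * Circle.exp (u a) := by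
  obtain ⟨H⟩ := H
  let K : C(unitInterval × A, Circle) := ⟨fun p => (f₀ p.2)⁻¹ * H p, by fun_prop⟩
  have h0 : ∀ a, K (0, a) = Circle.exp ((ContinuousMap.const A (0 : ℝ)) a) := by
    intro a; simp [K]
  let G := Circle.isCoveringMap_exp.liftHomotopy K (ContinuousMap.const A (0 : ℝ)) h0
  have hG : Circle.exp ∘ G = K := Circle.isCoveringMap_exp.liftHomotopy_lifts K _ h0
  refine ⟨⟨fun a => G (1, a), by fun_prop⟩, fun a => ?_⟩
  have := congrFun hG (1, a)
  simp only [Function.comp] at this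
  simp only [ContinuousMap.coe_mk, this, K]
  simp

theorem lifts_of_contractible {Y : Type*} [TopologicalSpace Y] (f : C(Y, Circle)) (s : Set Y)
    [ContractibleSpace s] : Lifts f s := by
  classical
  obtain ⟨y, hy⟩ := id_nullhomotopic s
  have h1 : (ContinuousMap.const s (f y)).Homotopic (f.restrict s) := by
    have := ContinuousMap.Homotopic.comp (ContinuousMap.Homotopic.refl (f.restrict s)) hy
    exact this.symm
  obtain ⟨u, hu⟩ := exists_ratio h1
  obtain ⟨r, hr⟩ : ∃ r, Circle.exp r = f y := ⟨_, Circle.exp_arg _⟩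
  refine ⟨fun x => if h : x ∈ s then r + u ⟨x, h⟩ else 0, ?_, ?_⟩
  · rw [continuousOn_iff_continuous_domRestrict]
    have : s.domRestrict (fun x => if h : x ∈ s then r + u ⟨x, h⟩ else 0) = fun x : s => r + u x := by
      ext x; simp [Set.domRestrict]
    rw [this]; fun_prop
  · intro x hx
    have := hu ⟨x, hx⟩
    simp only [hx, dite_true, Circle.exp_add, hr]
    exact this.symm

theorem glue {X ι : Type*} [TopologicalSpace X] {f : X → Circle} {A : ι → Set X}
    (hA : ∀ i, IsOpen (A i)) (g : ι → X → ℝ) (hg : ∀ i, ContinuousOn (g i) (A i))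
    (hf : ∀ i, ∀ x ∈ A i, Circle.exp (g i x) = f x)
    (hag : ∀ i j x, x ∈ A i → x ∈ A j → g i x = g j x) : Lifts f (⋃ i, A i) := by
  classical
  let G : X → ℝ := fun x => if h : ∃ i, x ∈ A i then g h.choose x else 0
  have hG : ∀ i, ∀ x ∈ A i, G x = g i x := by
    intro i x hx
    have h : ∃ i, x ∈ A i := ⟨i, hx⟩
    simp only [G, h, dite_true]
    exact hag _ _ _ h.choose_spec hx
  refine ⟨G, ?_, ?_⟩
  · intro x hx
    obtain ⟨i, hi⟩ := mem_iUnion.1 hx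
    have h1 : ContinuousAt (g i) x := (hg i).continuousAt ((hA i).mem_nhds hi)
    refine (h1.congr ?_).continuousWithinAt
    filter_upwards [(hA i).mem_nhds hi] with z hz using (hG i z hz).symm
  · intro x hx
    obtain ⟨i, hi⟩ := mem_iUnion.1 hx
    rw [hG i x hi, hf i x hi]

theorem lifts_simplex {Y : Type*} [TopologicalSpace Y] (f : Y → Circle) (σ : Finset (Set Y))
    (ho : ∀ s ∈ σ, IsOpen s) (hne : (⋂₀ (σ : Set (Set Y))).Nonempty)
    (hl : ∀ s ∈ σ, Lifts f s) (hc : ∀ s ∈ σ, ∀ t ∈ σ, IsPreconnected (s ∩ t)) :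
    Lifts f (⋃₀ (σ : Set (Set Y))) := by
  obtain ⟨p, hp⟩ := hne
  have hp' : ∀ s ∈ σ, p ∈ s := fun s hs => hp s hs
  obtain ⟨r, hr⟩ : ∃ r, Circle.exp r = f p := ⟨_, Circle.exp_arg _⟩
  have : ∀ s : {s // s ∈ σ}, ∃ g : Y → ℝ, ContinuousOn g s ∧ (∀ x ∈ s.1, Circle.exp (g x) = f x) ∧
      g p = r := by
    rintro ⟨s, hs⟩
    obtain ⟨g, hg, hgf⟩ := hl s hs
    refine ⟨fun x => g x + (r - g p), hg.add continuousOn_const, ?_, by ring⟩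
    intro x hx
    rw [Circle.exp_add, Circle.exp_sub, hgf x hx, hgf p (hp' s hs), hr]
    simp
  choose g hg hgf hgp using this
  have := glue (f := f) (A := fun s : {s // s ∈ σ} => s.1) (fun s => ho _ s.2) g hg hgf ?_
  · rwa [sUnion_eq_iUnion]
  · intro s t x hs ht
    exact Circle.isCoveringMap_exp.eqOn_of_comp_eqOn (hc s s.2 t t.2)
      ((hg s).mono inter_subset_left) ((hg t).mono inter_subset_right)
      (fun z hz => by simp [hgf s z hz.1, hgf t z hz.2]) ⟨hp' s s.2, hp' t t.2⟩
      (by rw [hgp, hgp]) ⟨hs, ht⟩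

theorem exists_pos_fun {X : Type*} [MetricSpace X] (A : Set X) (hA : IsOpen A) :
    ∃ ψ : X → ℝ, Continuous ψ ∧ ∀ x, (0 < ψ x ↔ x ∈ A) := by
  by_cases h : A = univ
  · exact ⟨fun _ => 1, continuous_const, by simp [h]⟩
  · have hne : Aᶜ.Nonempty := by rwa [nonempty_compl]
    refine ⟨fun x => Metric.infDist x Aᶜ, Metric.continuous_infDist_pt _, fun x => ?_⟩
    rw [← hA.isClosed_compl.notMem_iff_infDist_pos hne]; simp

/-- A family of order at most `k` is refined by `k` open sets of "local type". -/
theorem dim_cover {X Y : Type*} [MetricSpace X] [TopologicalSpace Y] (φ : C(X, Y))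
    (S : Finset (Set Y)) (ho : ∀ s ∈ S, IsOpen s) (k : ℕ)
    (hk : ∀ τ ⊆ S, (⋂₀ (τ : Set (Set Y))).Nonempty → τ.card ≤ k) :
    ∃ O : ℕ → Set X, (∀ i, IsOpen (O i)) ∧ (φ ⁻¹' (⋃₀ (S : Set (Set Y))) ⊆ ⋃ i < k, O i) ∧
      ∀ f : Y → Circle, (∀ s ∈ S, Lifts f s) → ∀ i, Lifts (f ∘ φ) (O i) := by
  classical
  have : ∀ s : Set Y, ∃ ψ : X → ℝ, s ∈ S → Continuous ψ ∧ ∀ x, (0 < ψ x ↔ φ x ∈ s) := by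
    intro s
    by_cases hs : s ∈ S
    · obtain ⟨ψ, h⟩ := exists_pos_fun (φ ⁻¹' s) ((ho s hs).preimage φ.continuous)
      exact ⟨ψ, fun _ => h⟩
    · exact ⟨0, fun h => absurd h hs⟩
  choose ψ hψ using this
  let W : Finset (Set Y) → Set X := fun τ =>
    ⋂ s ∈ τ, ({x | 0 < ψ s x} ∩ ⋂ t ∈ S \ τ, {x | ψ t x < ψ s x})
  have hWo : ∀ τ ⊆ S, IsOpen (W τ) := by
    intro τ hτ
    refine isOpen_biInter_finset fun s hs => IsOpen.inter ?_ ?_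
    · exact isOpen_lt continuous_const (hψ s (hτ hs)).1
    · refine isOpen_biInter_finset fun t ht => ?_
      exact isOpen_lt (hψ t (Finset.mem_sdiff.1 ht).1).1 (hψ s (hτ hs)).1
  have hWm : ∀ τ x, x ∈ W τ ↔ ∀ s ∈ τ, 0 < ψ s x ∧ ∀ t ∈ S, t ∉ τ → ψ t x < ψ s x := by
    intro τ x; simp [W]
  let I : ℕ → Type _ := fun i => {τ : Finset (Set Y) // τ ⊆ S ∧ τ.card = i + 1}
  refine ⟨fun i => ⋃ τ : I i, W τ.1, fun i => isOpen_iUnion fun τ => hWo _ τ.2.1, ?_, ?_⟩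
  · intro x hx
    obtain ⟨s, hs, hxs⟩ := hx
    obtain ⟨m, hm, hmax⟩ := S.exists_max_image (fun s => ψ s x) ⟨s, hs⟩
    have hpos : 0 < ψ m x := ((hψ s hs).2 x |>.2 hxs).trans_le (hmax s hs)
    let τ := S.filter (fun s => ψ s x = ψ m x)
    have hτS : τ ⊆ S := Finset.filter_subset _ _
    have hxτ : x ∈ W τ := by
      rw [hWm]
      intro s hs
      have hs' := (Finset.mem_filter.1 hs).2
      refine ⟨hs' ▸ hpos, fun t ht htτ => ?_⟩
      rw [hs']
      refine lt_of_le_of_ne (hmax t ht) fun h => htτ (Finset.mem_filter.2 ⟨ht, h⟩)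
    have hcard : τ.card ≤ k := by
      refine hk τ hτS ⟨φ x, fun s hs => ?_⟩
      have hs := Finset.mem_coe.1 hs
      exact ((hψ s (hτS hs)).2 x).1 (((hWm _ _).1 hxτ) s hs).1
    have hτpos : 0 < τ.card := Finset.card_pos.2 ⟨m, Finset.mem_filter.2 ⟨hm, rfl⟩⟩
    simp only [mem_iUnion]
    exact ⟨τ.card - 1, by omega, ⟨τ, hτS, by omega⟩, hxτ⟩
  · intro f hf i
    have : ∀ τ : I i, ∃ g : X → ℝ, ContinuousOn g (W τ.1) ∧ ∀ x ∈ W τ.1,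
        Circle.exp (g x) = (f ∘ φ) x := by
      rintro ⟨τ, hτ, hc⟩
      obtain ⟨s, hs⟩ : τ.Nonempty := Finset.card_pos.1 (by omega)
      obtain ⟨g, hg, hgf⟩ := hf s (hτ hs)
      have hsub : ∀ x ∈ W τ, φ x ∈ s := fun x hx =>
        ((hψ s (hτ hs)).2 x).1 (((hWm _ _).1 hx) s hs).1
      exact ⟨g ∘ φ, hg.comp φ.continuous.continuousOn hsub, fun x hx => hgf _ (hsub x hx)⟩
    choose g hg hgf using this
    refine glue (fun τ => hWo _ τ.2.1) g hg hgf ?_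
    intro τ τ' x hx hx'
    have : τ = τ' := by
      by_contra hne
      have hne' : τ.1 ≠ τ'.1 := fun h => hne (Subtype.ext h)
      have h1 : ¬ τ.1 ⊆ τ'.1 := fun h =>
        hne' (Finset.eq_of_subset_of_card_le h (by rw [τ.2.2, τ'.2.2]))
      have h2 : ¬ τ'.1 ⊆ τ.1 := fun h =>
        hne' (Finset.eq_of_subset_of_card_le h (by rw [τ.2.2, τ'.2.2])).symm
      obtain ⟨s, hs, hs'⟩ := Finset.not_subset.1 h1
      obtain ⟨t, ht, ht'⟩ := Finset.not_subset.1 h2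
      have a := (((hWm _ _).1 hx) s hs).2 t (τ'.2.1 ht) ht'
      have b := (((hWm _ _).1 hx') t ht).2 s (τ.2.1 hs) hs'
      exact lt_asymm a b
    rw [this]

theorem main_induction {X Y : Type*} [MetricSpace X] [TopologicalSpace Y] (φ : C(X, Y))
    (f : ℕ → Y → Circle) (U : Finset (Set Y)) (ho : ∀ s ∈ U, IsOpen s)
    (hl : ∀ i, ∀ s ∈ U, Lifts (f i) s) (hc : ∀ s ∈ U, ∀ t ∈ U, IsPreconnected (s ∩ t)) (k : ℕ) :
    ∀ S ⊆ U, S.card < (k + 1) * (k + 2) / 2 →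
      ∃ O : ℕ → Set X, (∀ i, IsOpen (O i)) ∧ (φ ⁻¹' (⋃₀ (S : Set (Set Y))) ⊆ ⋃ i < k, O i) ∧
        ∀ i < k, Lifts (f i ∘ φ) (O i) := by
  classical
  induction k with
  | zero =>
    intro S _ hcard
    have : S = ∅ := Finset.card_eq_zero.1 (by simpa using hcard)
    subst this
    exact ⟨fun _ => ∅, fun _ => isOpen_empty, by simp, by simp⟩
  | succ k ih =>
    intro S hS hcard
    by_cases hσ : ∃ σ ⊆ S, (⋂₀ (σ : Set (Set Y))).Nonempty ∧ k + 2 ≤ σ.card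
    · obtain ⟨σ, hσS, hne, hσc⟩ := hσ
      have hcard' : (S \ σ).card < (k + 1) * (k + 2) / 2 := by
        rw [Finset.card_sdiff_of_subset hσS]
        have : (k + 1 + 1) * (k + 1 + 2) = (k + 1) * (k + 2) + (k + 2) * 2 := by ring
        rw [this, Nat.add_mul_div_right _ _ (by norm_num)] at hcard
        have : (0 : ℕ) < (k + 1) * (k + 2) / 2 := by
          apply Nat.div_pos _ (by norm_num); nlinarith
        omega
      obtain ⟨O, hO, hcov, hlift⟩ := ih (S \ σ) (Finset.sdiff_subset.trans hS) hcard'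
      refine ⟨fun i => if i = k then φ ⁻¹' (⋃₀ (σ : Set (Set Y))) else O i, ?_, ?_, ?_⟩
      · intro i
        dsimp only
        split_ifs
        · exact (isOpen_sUnion fun s hs => ho s (hS (hσS hs))).preimage φ.continuous
        · exact hO i
      · rintro x ⟨s, hs, hxs⟩
        simp only [mem_iUnion]
        by_cases hsσ : s ∈ σ
        · exact ⟨k, by omega, by simp only [if_true]; exact ⟨s, hsσ, hxs⟩⟩
        · have := hcov (a := x) ⟨s, by simpa using ⟨hs, hsσ⟩, hxs⟩
          simp only [mem_iUnion] at this
          obtain ⟨i, hi, hx⟩ := this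
          exact ⟨i, by omega, by rw [if_neg (by omega)]; exact hx⟩
      · intro i hi
        dsimp only
        split_ifs with h
        · obtain ⟨g, hg, hgf⟩ := lifts_simplex (f i) σ (fun s hs => ho s (hS (hσS hs))) hne
            (fun s hs => hl i s (hS (hσS hs)))
            (fun s hs t ht => hc s (hS (hσS hs)) t (hS (hσS ht)))
          exact ⟨g ∘ φ, hg.comp φ.continuous.continuousOn fun x hx => hx, fun x hx => hgf _ hx⟩
        · exact hlift i (by omega)
    · push Not at hσ
      obtain ⟨O, hO, hcov, hlift⟩ := dim_cover φ S (fun s hs => ho s (hS hs)) (k + 1)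
        (fun τ hτ hne => by have := hσ τ hτ hne; omega)
      exact ⟨O, hO, hcov, fun i _ => hlift (f i) (fun s hs => hl i s (hS hs)) i⟩


theorem det_poly {n : ℕ} {E : Type*} [MeasurableSpace E] (μ : Measure E)
    (M : E → Matrix (Fin n) (Fin n) ℝ)
    (hM : ∀ (σ : Equiv.Perm (Fin n)) (s : Finset (Fin n)),
      Integrable (fun y => ∏ i ∈ s, M y (σ i) i) μ) :
    ∃ p : Polynomial ℝ, ∀ t : ℝ, ∫ y, (1 + t • M y).det ∂μ = p.eval t := by
  classical
  let c : Equiv.Perm (Fin n) → Finset (Fin n) → ℝ := fun σ s =>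
    ((Equiv.Perm.sign σ : ℤ) : ℝ) * ∏ i ∈ s, (1 : Matrix (Fin n) (Fin n) ℝ) (σ i) i
  refine ⟨∑ σ : Equiv.Perm (Fin n), ∑ s ∈ (Finset.univ : Finset (Fin n)).powerset,
    Polynomial.C (c σ s * ∫ y, ∏ i ∈ Finset.univ \ s, M y (σ i) i ∂μ) *
      Polynomial.X ^ (Finset.univ \ s).card, fun t => ?_⟩
  have key : ∀ y, (1 + t • M y).det = ∑ σ : Equiv.Perm (Fin n),
      ∑ s ∈ (Finset.univ : Finset (Fin n)).powerset,
        (c σ s * t ^ (Finset.univ \ s).card) * ∏ i ∈ Finset.univ \ s, M y (σ i) i := by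
    intro y
    rw [Matrix.det_apply']
    refine Finset.sum_congr rfl fun σ _ => ?_
    simp only [Matrix.add_apply, Matrix.smul_apply, smul_eq_mul]
    rw [Finset.prod_add, Finset.mul_sum]
    refine Finset.sum_congr rfl fun s _ => ?_
    rw [Finset.prod_mul_distrib, Finset.prod_const]
    simp only [c]; ring
  simp_rw [key]
  rw [integral_finsetSum _ fun σ _ => integrable_finsetSum _ fun s _ => (hM σ _).const_mul _]
  simp only [Polynomial.eval_finsetSum, Polynomial.eval_mul, Polynomial.eval_C,
    Polynomial.eval_pow, Polynomial.eval_X]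
  refine Finset.sum_congr rfl fun σ _ => ?_
  rw [integral_finsetSum _ fun s _ => (hM σ _).const_mul _]
  refine Finset.sum_congr rfl fun s _ => ?_
  rw [integral_const_mul]; ring

noncomputable abbrev bas (n : ℕ) : Module.Basis (Fin n) ℝ (Fin n → ℝ) := Pi.basisFun ℝ (Fin n)
noncomputable abbrev Lat (n : ℕ) : AddSubgroup (Fin n → ℝ) :=
  (Submodule.span ℤ (Set.range (bas n))).toAddSubgroup

theorem image_volume {n : ℕ} (h : (Fin n → ℝ) ≃ₜ (Fin n → ℝ))
    (heq : ∀ y, ∀ v ∈ Lat n, h (y + v) = h y + v) :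
    volume (h '' ZSpan.fundamentalDomain (bas n)) = volume (ZSpan.fundamentalDomain (bas n)) := by
  have : Countable (Lat n) := inferInstanceAs (Countable (Submodule.span ℤ (Set.range (bas n))))
  have hF := ZSpan.isAddFundamentalDomain' (bas n) volume
  have hF2 : IsAddFundamentalDomain (Lat n) (h '' ZSpan.fundamentalDomain (bas n)) volume := by
    refine IsAddFundamentalDomain.mk' ?_ ?_
    · exact (h.toMeasurableEquiv.measurableSet_image.2
        (ZSpan.fundamentalDomain_measurableSet (bas n))).nullMeasurableSet
    · intro x
      have key : ∀ v : Lat n, (v +ᵥ x ∈ h '' ZSpan.fundamentalDomain (bas n)) ↔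
          v +ᵥ (h.symm x) ∈ ZSpan.fundamentalDomain (bas n) := by
        intro v
        have e1 : v +ᵥ x = h (v +ᵥ h.symm x) := by
          have := heq (h.symm x) v v.2
          rw [AddSubgroup.vadd_def, AddSubgroup.vadd_def, vadd_eq_add, vadd_eq_add, add_comm,
            add_comm _ (h.symm x), this]
          simp
        rw [e1]
        exact h.injective.mem_set_image
      simp_rw [key]
      exact ZSpan.exist_unique_vadd_mem_fundamentalDomain (bas n) (h.symm x)
  exact (hF.measure_eq hF2).symm

theorem degree_one {n : ℕ} (h : (Fin n → ℝ) → (Fin n → ℝ)) (hs : ContDiff ℝ 1 h)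
    (heq : ∀ y, ∀ v ∈ Lat n, h (y + v) = h y + v) : ∃ y, (fderiv ℝ h y).det ≠ 0 := by
  set D := ZSpan.fundamentalDomain (bas n) with hD
  let u : (Fin n → ℝ) → (Fin n → ℝ) := fun y => h y - y
  have hu : ContDiff ℝ 1 u := hs.sub contDiff_id
  have hup : ∀ y, ∀ v ∈ Lat n, u (y + v) = u y := by
    intro y v hv; simp only [u, heq y v hv]; abel
  have hdu : Continuous (fderiv ℝ u) := hu.continuous_fderiv one_ne_zero
  have hdup : ∀ y, ∀ v ∈ Lat n, fderiv ℝ u (y + v) = fderiv ℝ u y := by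
    intro y v hv
    rw [← fderiv_comp_add_right v]
    congr 1; ext1 z; exact hup z v hv
  have hDb : Bornology.IsBounded D := ZSpan.fundamentalDomain_isBounded _
  have hDc : IsCompact (closure D) := hDb.isCompact_closure
  obtain ⟨K, hK⟩ := hDc.exists_bound_of_continuousOn hdu.continuousOn
  have hK' : ∀ y, ‖fderiv ℝ u y‖ ≤ K := by
    intro y
    have h1 : ZSpan.fract (bas n) y ∈ D := ZSpan.fract_mem_fundamentalDomain _ y
    have h2 := hdup (ZSpan.fract (bas n) y) (ZSpan.floor (bas n) y) (ZSpan.floor (bas n) y).2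
    rw [ZSpan.fract_apply, sub_add_cancel] at h2
    rw [h2]
    exact hK _ (subset_closure h1)
  have hK0 : 0 ≤ K := (norm_nonneg _).trans (hK' 0)
  obtain ⟨ε, hε, hdet⟩ : ∃ ε > 0, ∀ B : (Fin n → ℝ) →L[ℝ] (Fin n → ℝ), ‖B - 1‖ < ε → 0 < B.det := by
    have : {B : (Fin n → ℝ) →L[ℝ] (Fin n → ℝ) | 0 < B.det} ∈ nhds (1 : (Fin n → ℝ) →L[ℝ] (Fin n → ℝ)) := by
      refine (isOpen_lt continuous_const ContinuousLinearMap.continuous_det).mem_nhds ?_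
      simp [ContinuousLinearMap.det]
    obtain ⟨ε, hε, hb⟩ := Metric.mem_nhds_iff.1 this
    exact ⟨ε, hε, fun B hB => hb (by rwa [Metric.mem_ball, dist_eq_norm])⟩
  have hDm : MeasurableSet D := ZSpan.fundamentalDomain_measurableSet _
  have hDfin : volume D < ⊤ := hDb.measure_lt_top
  have hDpos : volume D ≠ 0 := ZSpan.measure_fundamentalDomain_ne_zero _
  have hint : ∀ w : (Fin n → ℝ) → ℝ, Continuous w → Integrable w (volume.restrict D) := fun w hw =>
    ((hw.continuousOn.integrableOn_compact hDc).mono_set subset_closure)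
  -- the determinant is a polynomial in `t`
  let M : (Fin n → ℝ) → Matrix (Fin n) (Fin n) ℝ := fun y => LinearMap.toMatrix' (fderiv ℝ u y : (Fin n → ℝ) →ₗ[ℝ] (Fin n → ℝ))
  have hMd : ∀ (t : ℝ) y, (1 + t • fderiv ℝ u y : (Fin n → ℝ) →L[ℝ] (Fin n → ℝ)).det = (1 + t • M y).det := by
    intro t y
    rw [ContinuousLinearMap.det, ← LinearMap.det_toMatrix']
    congr 1
    simp [M, LinearMap.toMatrix'_one]
  have hMc : ∀ i j, Continuous fun y => M y i j := by
    intro i j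
    simp only [M, LinearMap.toMatrix'_apply]
    have : Continuous fun y => (fderiv ℝ u y) (Pi.single j 1) := hdu.clm_apply continuous_const
    exact (continuous_apply i).comp this
  obtain ⟨p, hp⟩ := det_poly (volume.restrict D) M fun σ s =>
    hint _ (continuous_finsetProd _ fun i _ => hMc _ _)
  have hsmall : ∀ t : ℝ, 0 < t → t * K < min ε 1 → p.eval t = volume.real D := by
    intro t ht htK
    have hlip : ApproximatesLinearOn (fun y => y + t • u y)
        ((ContinuousLinearEquiv.refl ℝ (Fin n → ℝ) : (Fin n → ℝ) ≃L[ℝ] (Fin n → ℝ)) : (Fin n → ℝ) →L[ℝ] (Fin n → ℝ)) univ (Real.toNNReal (t * K)) := by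
      intro x _ y _
      have h1 : ‖u x - u y‖ ≤ K * ‖x - y‖ :=
        Convex.norm_image_sub_le_of_norm_fderiv_le (s := univ)
          (fun z _ => (hu.differentiable one_ne_zero) z) (fun z _ => hK' z) convex_univ
          (mem_univ _) (mem_univ _)
      have h2 : x + t • u x - (y + t • u y) -
          ((ContinuousLinearEquiv.refl ℝ (Fin n → ℝ) : (Fin n → ℝ) ≃L[ℝ] (Fin n → ℝ)) : (Fin n → ℝ) →L[ℝ] (Fin n → ℝ)) (x - y) =
            t • (u x - u y) := by
        simp [smul_sub]; abel
      rw [h2, norm_smul, Real.norm_of_nonneg ht.le, Real.coe_toNNReal _ (by positivity), mul_assoc]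
      gcongr
    have hc : Subsingleton (Fin n → ℝ) ∨ Real.toNNReal (t * K) <
        ‖((ContinuousLinearEquiv.refl ℝ (Fin n → ℝ) : (Fin n → ℝ) ≃L[ℝ] (Fin n → ℝ)).symm : (Fin n → ℝ) →L[ℝ] (Fin n → ℝ))‖₊⁻¹ := by
      rcases subsingleton_or_nontrivial (Fin n → ℝ) with h | h
      · exact Or.inl h
      · right
        have : ‖((ContinuousLinearEquiv.refl ℝ (Fin n → ℝ) : (Fin n → ℝ) ≃L[ℝ] (Fin n → ℝ)).symm : (Fin n → ℝ) →L[ℝ] (Fin n → ℝ))‖₊ = 1 := by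
          apply NNReal.eq
          exact ContinuousLinearMap.norm_id
        rw [this, inv_one, Real.toNNReal_lt_one]
        exact htK.trans_le (min_le_right _ _)
    let H : (Fin n → ℝ) ≃ₜ (Fin n → ℝ) := hlip.toHomeomorph _ hc
    have hH : ∀ y, H y = y + t • u y := fun y => rfl
    have hvol : volume (H '' D) = volume D := image_volume H fun y v hv => by
      rw [hH, hH, hup y v hv]; abel
    have hder : ∀ y ∈ D, HasFDerivWithinAt H (1 + t • fderiv ℝ u y) D y := by
      intro y _
      have : HasFDerivAt (fun y => y + t • u y) (1 + t • fderiv ℝ u y) y :=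
        (hasFDerivAt_id y).add (((hu.differentiable one_ne_zero) y).hasFDerivAt.const_smul t)
      exact this.hasFDerivWithinAt
    have hcv := lintegral_abs_det_fderiv_eq_addHaar_image volume hDm hder H.injective.injOn
    have hpos : ∀ y, 0 < (1 + t • fderiv ℝ u y : (Fin n → ℝ) →L[ℝ] (Fin n → ℝ)).det := by
      intro y
      apply hdet
      rw [add_sub_cancel_left, norm_smul, Real.norm_of_nonneg ht.le]
      calc t * ‖fderiv ℝ u y‖ ≤ t * K := by gcongr; exact hK' y
        _ < ε := htK.trans_le (min_le_left _ _)
    rw [← hp t]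
    simp_rw [← hMd]
    rw [integral_eq_lintegral_of_nonneg_ae (Filter.Eventually.of_forall fun y => (hpos y).le)]
    · rw [Measure.real, ← hvol, ← hcv]
      congr 1
      refine lintegral_congr fun y => ?_
      rw [abs_of_pos (hpos y)]
    · refine (hint _ ?_).aestronglyMeasurable
      exact ContinuousLinearMap.continuous_det.comp (by fun_prop)
  have hpC : p = Polynomial.C (volume.real D) := by
    apply Polynomial.eq_of_infinite_eval_eq
    have hm : 0 < min ε 1 := lt_min hε one_pos
    refine Set.Infinite.mono ?_ (Set.Ioo_infinite (a := (0 : ℝ)) (b := min ε 1 / (K + 1)) (by positivity))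
    rintro t ⟨h0, h1⟩
    simp only [Set.mem_ofPred_eq, Polynomial.eval_C]
    refine hsmall t h0 ?_
    rw [lt_div_iff₀ (by positivity)] at h1
    nlinarith
  have h1 := hp 1
  rw [hpC, Polynomial.eval_C] at h1
  by_contra hcon
  push Not at hcon
  have h2 : ∀ y, (1 + (1 : ℝ) • M y).det = 0 := by
    intro y
    rw [← hMd, ← hcon y]
    congr 1
    have : fderiv ℝ u y = fderiv ℝ h y - 1 := by
      have := ((hs.differentiable one_ne_zero) y).hasFDerivAt.sub (hasFDerivAt_id y)
      exact this.fderiv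
    rw [this]; simp
  simp only [h2, integral_zero] at h1
  have : volume.real D ≠ 0 := by
    rw [Measure.real, ENNReal.toReal_ne_zero]; exact ⟨hDpos, hDfin.ne⟩
  exact this h1.symm
theorem torus_essential (n : ℕ) (O : Fin n → Set (Fin n → Circle)) (hO : ∀ i, IsOpen (O i))
    (hcov : ⋃ i, O i = univ) (hl : ∀ i, Lifts (fun x => x i) (O i)) : False := by
  classical
  choose g hg hgf using hl
  obtain ⟨V, hVcov, hVo, hVO⟩ := exists_iUnion_eq_closure_subset hO (fun _ => Set.toFinite _) hcov
  have hVO' : ∀ i, V i ⊆ O i := fun i => subset_closure.trans (hVO i)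
  have hB : ∀ i, ∃ B : ℝ, ∀ x ∈ V i, ‖g i x‖ ≤ B := by
    intro i
    obtain ⟨B, hB⟩ := (isClosed_closure (s := V i)).isCompact.exists_bound_of_continuousOn
      ((hg i).mono (hVO i))
    exact ⟨B, fun x hx => hB x (subset_closure hx)⟩
  choose B hB using hB
  let q : (Fin n → ℝ) → (Fin n → Circle) := fun y i => Circle.exp (2 * Real.pi * y i)
  have hq : Continuous q := by fun_prop
  have hint : ∀ v ∈ Lat n, ∀ i, ∃ m : ℤ, v i = m := by
    intro v hv i
    have := (Module.Basis.mem_span_iff_repr_mem ℤ (bas n) v).1 hv i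
    obtain ⟨m, hm⟩ := this
    exact ⟨m, by simpa using hm.symm⟩
  have hqp : ∀ y, ∀ v ∈ Lat n, q (y + v) = q y := by
    intro y v hv
    ext1 i
    obtain ⟨m, hm⟩ := hint v hv i
    refine Circle.exp_eq_exp.2 ⟨m, ?_⟩
    rw [Pi.add_apply, hm]; ring
  let W : Fin n → Set (Fin n → ℝ) := fun i => q ⁻¹' V i
  have hWo : ∀ i, IsOpen (W i) := fun i => (hVo i).preimage hq
  let w : Fin n → (Fin n → ℝ) → ℝ := fun i => (W i).indicator fun y => - (g i (q y) / (2 * Real.pi))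
  let b : Fin n → (Fin n → ℝ) → ℝ := fun i y => y i + w i y
  have hbW : ∀ i, ∀ y ∈ W i, b i y = y i - g i (q y) / (2 * Real.pi) := by
    intro i y hy
    simp only [b, w, indicator_of_mem hy]; ring
  have hgq : ∀ i, ContinuousOn (fun y => g i (q y)) (W i) := fun i =>
    (hg i).comp hq.continuousOn fun y hy => hVO' i hy
  have hbc : ∀ i, ContinuousOn (b i) (W i) := by
    intro i
    refine ContinuousOn.congr ?_ (hbW i)
    exact (continuous_apply i).continuousOn.sub ((hgq i).div_const _)
  have hbe : ∀ i, ∀ y ∈ W i, Circle.exp (2 * Real.pi * b i y) = 1 := by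
    intro i y hy
    have : 2 * Real.pi * b i y = 2 * Real.pi * y i - g i (q y) := by
      rw [hbW i y hy]; field_simp
    rw [this, Circle.exp_sub, hgf i _ (hVO' i hy)]
    simp [q]
  have hconst : ∀ i s, IsPreconnected s → s ⊆ W i → ∀ x ∈ s, ∀ y ∈ s, b i x = b i y := by
    intro i s hs hsW x hx y hy
    have := Circle.isCoveringMap_exp.eqOn_of_comp_eqOn (g₁ := fun z => 2 * Real.pi * b i z)
      (g₂ := fun _ => 2 * Real.pi * b i y) hs (continuousOn_const.mul ((hbc i).mono hsW))
      continuousOn_const (fun z hz => by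
        simp only [Function.comp, hbe i z (hsW hz), hbe i y (hsW hy)]) hy rfl hx
    have hpi : (2 * Real.pi) ≠ 0 := by positivity
    exact mul_left_cancel₀ hpi this
  have hbp : ∀ i y, ∀ v ∈ Lat n, b i (y + v) = b i y + v i := by
    intro i y v hv
    have : w i (y + v) = w i y := by
      simp only [w, indicator, W, mem_preimage, hqp y v hv]
    simp only [b, this, Pi.add_apply]; ring
  have hbint : ∀ i, LocallyIntegrable (b i) volume := by
    intro i
    refine LocallyIntegrable.add (continuous_apply i).locallyIntegrable ?_
    refine (locallyIntegrable_const (|B i| / (2 * Real.pi))).mono ?_ (Filter.Eventually.of_forall ?_)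
    · rw [aestronglyMeasurable_indicator_iff (hWo i).measurableSet]
      exact ((hgq i).div_const _).neg.aestronglyMeasurable (hWo i).measurableSet
    · intro y
      have hnn : 0 ≤ |B i| / (2 * Real.pi) := by positivity
      rw [Real.norm_of_nonneg hnn]
      by_cases hy : y ∈ W i
      · simp only [w, indicator_of_mem hy, norm_neg, norm_div]
        rw [Real.norm_of_nonneg (by positivity : (0 : ℝ) ≤ 2 * Real.pi)]
        gcongr
        exact (hB i _ hy).trans (le_abs_self _)
      · simp only [w, indicator_of_notMem hy, norm_zero]; exact hnn
  -- Lebesgue number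
  obtain ⟨δ, hδ, hleb⟩ : ∃ δ > 0, ∀ y, ∃ i, Metric.ball y δ ⊆ W i := by
    have hDc : IsCompact (closure (ZSpan.fundamentalDomain (bas n))) :=
      (ZSpan.fundamentalDomain_isBounded (bas n)).isCompact_closure
    obtain ⟨δ, hδ, h⟩ := lebesgue_number_lemma_of_metric hDc hWo (by
      intro y _
      have : q y ∈ ⋃ i, V i := by rw [hVcov]; trivial
      simpa [W] using this)
    refine ⟨δ, hδ, fun y => ?_⟩
    obtain ⟨i, hi⟩ := h (ZSpan.fract (bas n) y)
      (subset_closure (ZSpan.fract_mem_fundamentalDomain _ y))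
    refine ⟨i, fun z hz => ?_⟩
    have h1 : z + -(ZSpan.floor (bas n) y : Fin n → ℝ) ∈
        Metric.ball (ZSpan.fract (bas n) y) δ := by
      rw [ZSpan.fract_apply, Metric.mem_ball, sub_eq_add_neg, dist_add_right]; exact hz
    have h2 := hi h1
    simp only [W, mem_preimage] at h2 ⊢
    rwa [hqp z _ ((Lat n).neg_mem (ZSpan.floor (bas n) y).2)] at h2
  let φ : ContDiffBump (0 : Fin n → ℝ) := ⟨δ / 4, δ / 2, by positivity, by linarith⟩
  let c : Fin n → (Fin n → ℝ) → ℝ := fun i =>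
    MeasureTheory.convolution (φ.normed volume) (b i) (ContinuousLinearMap.lsmul ℝ ℝ) volume
  have hcs : ∀ i, ContDiff ℝ 1 (c i) := fun i =>
    φ.hasCompactSupport_normed.contDiff_convolution_left (n := 1) _ φ.contDiff_normed (hbint i)
  have hcp : ∀ i y, ∀ v ∈ Lat n, c i (y + v) = c i y + v i := by
    intro i y v hv
    have hex : Integrable (fun t => φ.normed volume t • b i (y - t)) volume :=
      (φ.hasCompactSupport_normed.convolutionExists_left (ContinuousLinearMap.lsmul ℝ ℝ)
        φ.continuous_normed (hbint i) y)
    simp only [c, MeasureTheory.convolution, ContinuousLinearMap.lsmul_apply]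
    have : ∀ t, φ.normed volume t • b i (y + v - t) =
        φ.normed volume t • b i (y - t) + φ.normed volume t * v i := by
      intro t
      rw [show y + v - t = (y - t) + v by abel, hbp i _ v hv, smul_eq_mul, smul_eq_mul]; ring
    simp_rw [this]
    rw [integral_add hex (φ.integrable_normed.mul_const _), integral_mul_const,
      φ.integral_normed, one_mul]
  have hcc : ∀ y, ∃ i, fderiv ℝ (c i) y = 0 := by
    intro y
    obtain ⟨i, hi⟩ := hleb y
    refine ⟨i, ?_⟩
    have : c i =ᶠ[nhds y] fun _ => b i y := by
      filter_upwards [Metric.ball_mem_nhds y (half_pos hδ)] with z hz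
      have hsub : Metric.ball z φ.rOut ⊆ Metric.ball y δ := by
        apply Metric.ball_subset_ball'
        have : φ.rOut = δ / 2 := rfl
        rw [this]; have := Metric.mem_ball.1 hz; linarith
      have hzz : z ∈ Metric.ball y δ := hsub (Metric.mem_ball_self φ.rOut_pos)
      have hpre : IsPreconnected (Metric.ball y δ) := (convex_ball y δ).isPreconnected
      have h1 : c i z = b i z := φ.normed_convolution_eq_right fun x hx =>
        hconst i _ hpre hi x (hsub hx) z hzz
      rw [h1]
      exact hconst i _ hpre hi z hzz y (Metric.mem_ball_self hδ)
    rw [this.fderiv_eq]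
    simp
  obtain ⟨y, hy⟩ := degree_one (fun y i => c i y) (contDiff_pi.2 hcs) fun y v hv => by
    ext1 i; exact hcp i y v hv
  obtain ⟨i, hi⟩ := hcc y
  apply hy
  have hd : ∀ i, DifferentiableAt ℝ (c i) y := fun i => (hcs i).differentiable one_ne_zero y
  rw [ContinuousLinearMap.det, ← LinearMap.det_toMatrix']
  apply Matrix.det_eq_zero_of_row_eq_zero i
  intro j
  rw [LinearMap.toMatrix'_apply, fderiv_pi hd]
  simp [hi]

end TorusCT

open TorusCT

/-- The covering type of the `n`-torus `T^n = (S¹)^n` is at least `(n+1)(n+2)/2`: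
every good cover of any space homotopy equivalent to `T^n` has at least
`(n+1)(n+2)/2` members. -/
theorem stmt7 (n : ℕ) (hn : 1 ≤ n) (Y : Type*) [TopologicalSpace Y]
    (h : Nonempty (ContinuousMap.HomotopyEquiv (Fin n → Circle) Y))
    (U : Finset (Set Y)) (hU : IsGoodCover U) :
    (n + 1) * (n + 2) / 2 ≤ U.card := by
  classical
  by_contra hlt
  push Not at hlt
  obtain ⟨e⟩ := h
  obtain ⟨ho, hcov, hgood⟩ := hU
  let F : ℕ → C(Y, Circle) := fun i =>
    if h : i < n then ⟨fun y => e.invFun y ⟨i, h⟩, by fun_prop⟩ else ContinuousMap.const _ 1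
  have hl : ∀ i, ∀ s ∈ U, Lifts (F i) s := by
    intro i s hs
    by_cases hne : s.Nonempty
    · have := hgood {s} (by simpa using hs) (by simp) (by simpa using hne)
      rw [show ⋂₀ (({s} : Finset (Set Y)) : Set (Set Y)) = s by simp] at this
      exact lifts_of_contractible (F i) s
    · rw [Set.not_nonempty_iff_eq_empty] at hne
      subst hne
      exact ⟨0, by simp, by simp⟩
  have hc : ∀ s ∈ U, ∀ t ∈ U, IsPreconnected (s ∩ t) := by
    intro s hs t ht
    by_cases hne : (s ∩ t).Nonempty
    · have := hgood {s, t} (by simp [Finset.insert_subset_iff, hs, ht]) (by simp)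
        (by simpa using hne)
      rw [show ⋂₀ (({s, t} : Finset (Set Y)) : Set (Set Y)) = s ∩ t by simp] at this
      exact isPreconnected_iff_preconnectedSpace.2 inferInstance
    · rw [Set.not_nonempty_iff_eq_empty] at hne
      rw [hne]; exact isPreconnected_empty
  obtain ⟨O, hO, hOc, hOl⟩ := main_induction e.toFun (fun i => F i) U ho hl hc n U subset_rfl hlt
  refine torus_essential n (fun i => O i) (fun i => hO i) ?_ ?_
  · rw [Set.eq_univ_iff_forall]
    intro x
    have : x ∈ e.toFun ⁻¹' (⋃₀ (U : Set (Set Y))) := by rw [hcov]; trivial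
    have := hOc this
    simp only [Set.mem_iUnion] at this ⊢
    obtain ⟨i, hi, hx⟩ := this
    exact ⟨⟨i, hi⟩, hx⟩
  · intro i
    obtain ⟨g, hg, hgf⟩ := hOl i i.2
    let pr : C(Fin n → Circle, Circle) := ⟨fun x => x i, by fun_prop⟩
    have hH : (pr.comp (e.invFun.comp e.toFun)).Homotopic (pr.comp (ContinuousMap.id _)) :=
      ContinuousMap.Homotopic.comp (ContinuousMap.Homotopic.refl pr) e.left_inv
    obtain ⟨u, hu⟩ := exists_ratio hH
    refine ⟨fun x => g x + u x, hg.add u.continuous.continuousOn, fun x hx => ?_⟩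
    have h1 := hgf x hx
    have h2 := hu x
    simp only [Function.comp, F, i.2, dite_true, ContinuousMap.coe_mk, Fin.eta] at h1
    simp only [pr, ContinuousMap.comp_apply, ContinuousMap.coe_mk, ContinuousMap.id_apply] at h2
    rw [Circle.exp_add, h1, ← h2]
end

section
/- For every n ≥ 2, the covering type of the unitary group U(n) satisfies ct(U(n)) ≥ (4n³ + 3n² + 5n + 12)/6; that is, for every topological space Y homotopy equivalent to U(n) and every good cover U of Y, U has at least (4n³ + 3n² + 5n + 12)/6 members. -/
section
open Filter Topology

namespace CT

/-! ### Cochains on lists, mod 2 -/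

def d {X : Type*} : (List X → ZMod 2) → List X → ZMod 2
  | _, [] => 0
  | φ, x :: v => φ v + d (fun w => φ (x :: w)) v

@[simp] lemma d_nil {X : Type*} (φ : List X → ZMod 2) : d φ [] = 0 := by simp [d]

lemma d_cons {X : Type*} (φ : List X → ZMod 2) (x : X) (v : List X) :
    d φ (x :: v) = φ v + d (fun w => φ (x :: w)) v := by simp [d]

lemma d_add {X : Type*} (φ ψ : List X → ZMod 2) : d (φ + ψ) = d φ + d ψ := by
  funext l
  induction l generalizing φ ψ with
  | nil => simp
  | cons x v ih =>
    have h : (fun w => (φ + ψ) (x :: w)) = (fun w => φ (x :: w)) + fun w => ψ (x :: w) := rfl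
    simp only [Pi.add_apply] at ih ⊢
    have e := ih (fun w => φ (x :: w)) (fun w => ψ (x :: w))
    rw [d_cons, d_cons, d_cons, h, e]
    simp only [Pi.add_apply]; ring

lemma d_zero {X : Type*} : d (0 : List X → ZMod 2) = 0 := by
  have := d_add (0 : List X → ZMod 2) 0
  simpa using this

lemma d_const_mul {X : Type*} (c : ZMod 2) (φ : List X → ZMod 2) (l : List X) :
    d (fun w => c * φ w) l = c * d φ l := by
  induction l generalizing φ with
  | nil => simp
  | cons x v ih => rw [d_cons, d_cons, ih (fun w => φ (x :: w))]; ring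

lemma d_d {X : Type*} (φ : List X → ZMod 2) : d (d φ) = 0 := by
  funext l
  induction l generalizing φ with
  | nil => simp
  | cons x v ih =>
    have h : (fun w => d φ (x :: w)) = φ + d (fun w => φ (x :: w)) := by
      funext w; simp [d_cons]
    rw [d_cons, h, d_add, Pi.add_apply, ih]
    simp [CharTwo.add_self_eq_zero]

lemma d_map {X X' : Type*} (f : X → X') (φ : List X' → ZMod 2) (l : List X) :
    d (fun w => φ (w.map f)) l = d φ (l.map f) := by
  induction l generalizing φ with
  | nil => simp
  | cons x v ih =>
    rw [d_cons, List.map_cons, d_cons]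
    have := ih (fun w => φ (f x :: w))
    simp only [List.map_cons]
    rw [this]

lemma d_congr {X : Type*} {φ ψ : List X → ZMod 2} {l : List X} {m : ℕ}
    (hl : l.length = m + 1)
    (h : ∀ l' : List X, l' ⊆ l → l'.length = m → φ l' = ψ l') : d φ l = d ψ l := by
  induction l generalizing φ ψ m with
  | nil => simp at hl
  | cons x v ih =>
    simp only [List.length_cons, add_left_inj] at hl
    rw [d_cons, d_cons, h v (by simp) hl]
    congr 1
    cases m with
    | zero => 
      have : v = [] := List.length_eq_zero_iff.1 hl
      subst this; simp
    | succ m =>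
      refine ih (m := m) hl ?_
      intro l' hs hl'
      exact h _ (List.cons_subset_cons x hs) (by simp [hl'])

def cup {X : Type*} (p : ℕ) (φ ψ : List X → ZMod 2) : List X → ZMod 2 :=
  fun l => φ (l.take (p+1)) * ψ (l.drop p)

lemma cup_assoc {X : Type*} (p q : ℕ) (φ ψ χ : List X → ZMod 2) :
    cup (p+q) (cup p φ ψ) χ = cup p φ (cup q ψ χ) := by
  funext l
  simp only [cup, List.take_take, List.drop_take, List.drop_drop, mul_assoc]
  rw [show min (p+1) (p+q+1) = p+1 by omega, show p+q+1-p = q+1 by omega]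

lemma leibniz {X : Type*} (p : ℕ) (φ ψ : List X → ZMod 2) (l : List X) (hl : p + 2 ≤ l.length) :
    d (cup p φ ψ) l = cup (p+1) (d φ) ψ l + cup p φ (d ψ) l := by
  induction p generalizing φ ψ l with
  | zero =>
    match l, hl with
    | x :: y :: v, _ =>
      have h1 : (fun w => cup 0 φ ψ (x :: w)) = fun w => φ [x] * (fun w => ψ (x :: w)) w := by
        funext w; simp [cup]
      rw [d_cons, h1, d_const_mul]
      simp only [cup, List.take_succ_cons, List.take_zero, List.drop_zero, List.drop_succ_cons, 
        d_cons, d_nil]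
      have := CharTwo.add_self_eq_zero (φ [x] * ψ (y :: v))
      linear_combination -this
  | succ p ih =>
    match l, hl with
    | x :: v, hl =>
      have hv : p + 2 ≤ v.length := by simpa using hl
      have h1 : (fun w => cup (p+1) φ ψ (x :: w)) = cup p (fun w => φ (x :: w)) ψ := by
        funext w; simp [cup]
      rw [d_cons, h1, ih _ _ _ hv]
      simp only [cup, List.take_succ_cons, List.drop_succ_cons, d_cons]
      ring

/-- prism operator -/
def prism {X X' : Type*} (f g : X → X') : (List X' → ZMod 2) → List X → ZMod 2
  | _, [] => 0
  | φ, x :: v => φ (f x :: g x :: v.map g) + prism f g (fun w => φ (f x :: w)) v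

@[simp] lemma prism_nil {X X' : Type*} (f g : X → X') (φ : List X' → ZMod 2) :
    prism f g φ [] = 0 := by simp [prism]

lemma prism_cons {X X' : Type*} (f g : X → X') (φ : List X' → ZMod 2) (x : X) (v : List X) :
    prism f g φ (x :: v) = φ (f x :: g x :: v.map g) + prism f g (fun w => φ (f x :: w)) v := by
  simp [prism]

lemma prism_add {X X' : Type*} (f g : X → X') (φ ψ : List X' → ZMod 2) (l : List X) :
    prism f g (φ + ψ) l = prism f g φ l + prism f g ψ l := by
  induction l generalizing φ ψ with
  | nil => simp
  | cons x v ih =>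
    have h : (fun w => (φ + ψ) (f x :: w)) = (fun w => φ (f x :: w)) + fun w => ψ (f x :: w) := rfl
    rw [prism_cons, prism_cons, prism_cons, h, ih]
    simp only [Pi.add_apply]; ring

lemma prism_d {X X' : Type*} (f g : X → X') (φ : List X' → ZMod 2) (l : List X) :
    d (prism f g φ) l + prism f g (d φ) l = φ (l.map f) + φ (l.map g) := by
  induction l generalizing φ with
  | nil => simp [CharTwo.add_self_eq_zero]
  | cons x v ih =>
    have h1 : (fun w => prism f g φ (x :: w)) =
        (fun w => (fun u => φ (f x :: g x :: u)) (w.map g)) + prism f g (fun w => φ (f x :: w)) := by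
      funext w; simp [prism_cons]
    have h2 : (fun w => d φ (f x :: w)) = φ + d (fun w => φ (f x :: w)) := by
      funext w; simp [d_cons]
    have h3 := ih (fun w => φ (f x :: w))
    rw [d_cons, h1, d_add, prism_cons, h2, prism_add, Pi.add_apply,
      d_map g (fun u => φ (f x :: g x :: u)), d_cons, d_cons]
    simp only [List.map_cons]
    have e1 := CharTwo.add_self_eq_zero (prism f g φ v)
    have e2 := CharTwo.add_self_eq_zero (d (fun u => φ (f x :: g x :: u)) (v.map g))
    have e3 := CharTwo.add_self_eq_zero (φ (f x :: v.map g))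
    linear_combination h3 + e1 + e2 + e3

lemma prism_vanish {X X' : Type*} (f g : X → X') (φ : List X' → ZMod 2) (l : List X)
    (h : ∀ l' : List X', l'.length = l.length + 1 → l' ⊆ l.map f ++ l.map g → φ l' = 0) :
    prism f g φ l = 0 := by
  induction l generalizing φ with
  | nil => simp
  | cons x v ih =>
    rw [prism_cons, h _ (by simp) (by
      intro z hz
      simp only [List.mem_cons, List.map_cons, List.mem_append] at hz ⊢; tauto), ih, add_zero]
    intro l' hl' hs
    apply h _ (by simp [hl'])
    intro z hz
    simp only [List.mem_cons, List.map_cons, List.mem_append] at hz ⊢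
    rcases hz with rfl | hz
    · simp
    · have := hs hz
      simp only [List.mem_append] at this; tauto

end CT
end

section
open Filter Topology

namespace CT

/-! ### Germs of cochains near a set -/

def Small {X : Type*} [MetricSpace X] (A : Set X) (ε : ℝ) (l : List X) : Prop :=
  l ≠ [] → ∃ a ∈ A, ∀ x ∈ l, dist x a < ε

lemma Small.mono {X : Type*} [MetricSpace X] {A B : Set X} {ε ε' : ℝ} {l : List X}
    (h : Small A ε l) (hA : A ⊆ B) (he : ε ≤ ε') : Small B ε' l := fun hl => by
  obtain ⟨a, ha, hx⟩ := h hl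
  exact ⟨a, hA ha, fun x hxl => (hx x hxl).trans_le he⟩

lemma Small.sub {X : Type*} [MetricSpace X] {A : Set X} {ε : ℝ} {l l' : List X}
    (h : Small A ε l) (hl : l' ⊆ l) : Small A ε l' := fun hne => by
  obtain ⟨a, ha, hx⟩ := h (by rintro rfl; exact hne (List.subset_nil.1 hl))
  exact ⟨a, ha, fun x hxl => (hx x (hl hxl))⟩

def N {X : Type*} [MetricSpace X] (A : Set X) (m : ℕ) : Filter (List X) where
  sets := {s | ∃ ε > 0, ∀ l : List X, l.length = m → Small A ε l → l ∈ s}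
  univ_sets := ⟨1, one_pos, fun _ _ _ => trivial⟩
  sets_of_superset := by
    rintro s t ⟨ε, he, h⟩ hst
    exact ⟨ε, he, fun l hl hs => hst (h l hl hs)⟩
  inter_sets := by
    rintro s t ⟨ε, he, h⟩ ⟨ε', he', h'⟩
    exact ⟨min ε ε', lt_min he he', fun l hl hs => 
      ⟨h l hl (hs.mono subset_rfl (min_le_left _ _)), h' l hl (hs.mono subset_rfl (min_le_right _ _))⟩⟩

lemma mem_N {X : Type*} [MetricSpace X] {A : Set X} {m : ℕ} {s : Set (List X)} :
    s ∈ N A m ↔ ∃ ε > 0, ∀ l : List X, l.length = m → Small A ε l → l ∈ s := Iff.rfl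

lemma eventually_N {X : Type*} [MetricSpace X] {A : Set X} {m : ℕ} {p : List X → Prop} :
    (∀ᶠ l in N A m, p l) ↔ ∃ ε > 0, ∀ l : List X, l.length = m → Small A ε l → p l := Iff.rfl

lemma length_N {X : Type*} [MetricSpace X] (A : Set X) (m : ℕ) : ∀ᶠ l in N A m, l.length = m :=
  ⟨1, one_pos, fun _ h _ => h⟩

lemma N_mono {X : Type*} [MetricSpace X] {A B : Set X} (h : A ⊆ B) (m : ℕ) : N A m ≤ N B m := by
  rintro s ⟨ε, he, hs⟩
  exact ⟨ε, he, fun l hl hsm => hs l hl (hsm.mono h le_rfl)⟩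

lemma N_union {X : Type*} [MetricSpace X] (A B : Set X) (m : ℕ) :
    N (A ∪ B) m = N A m ⊔ N B m := by
  apply le_antisymm
  · rintro s ⟨⟨ε, he, h⟩, ⟨ε', he', h'⟩⟩
    refine ⟨min ε ε', lt_min he he', fun l hl hs => ?_⟩
    by_cases hne : l = []
    · exact h l hl (fun h0 => absurd hne h0)
    · obtain ⟨a, ha, hx⟩ := hs hne
      rcases ha with ha | ha
      · exact h l hl (fun _ => ⟨a, ha, fun x hxl => (hx x hxl).trans_le (min_le_left _ _)⟩)
      · exact h' l hl (fun _ => ⟨a, ha, fun x hxl => (hx x hxl).trans_le (min_le_right _ _)⟩)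
  · exact sup_le (N_mono Set.subset_union_left m) (N_mono Set.subset_union_right m)

lemma compact_inter {X : Type*} [MetricSpace X] {A B : Set X} (hA : IsCompact A)
    (hB : IsCompact B) {ε : ℝ} (he : 0 < ε) :
    ∃ δ > 0, ∀ a ∈ A, ∀ b ∈ B, dist a b < δ → ∃ c ∈ A ∩ B, dist a c < ε := by
  set S : Set (X × X) := (A ×ˢ B) ∩ {p | ∀ c ∈ A ∩ B, ε ≤ dist p.1 c} with hS
  have hcl : IsClosed {p : X × X | ∀ c ∈ A ∩ B, ε ≤ dist p.1 c} := by
    have : {p : X × X | ∀ c ∈ A ∩ B, ε ≤ dist p.1 c} = ⋂ c ∈ A ∩ B, {p | ε ≤ dist p.1 c} := by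
      ext p; simp
    rw [this]
    exact isClosed_biInter fun c _ => isClosed_le continuous_const (by fun_prop)
  have hc : IsCompact S := (hA.prod hB).inter_right hcl
  by_cases hne : S.Nonempty
  · obtain ⟨p, hp, hmin⟩ := hc.exists_isMinOn hne
      (f := fun p : X × X => dist p.1 p.2) (by fun_prop)
    refine ⟨dist p.1 p.2, ?_, ?_⟩
    · apply dist_pos.2
      intro h
      have := hp.2 p.1 ⟨hp.1.1, h ▸ hp.1.2⟩
      simp at this; linarith
    · intro a ha b hb hab
      by_contra! hcon
      have : (a, b) ∈ S := ⟨⟨ha, hb⟩, hcon⟩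
      exact absurd (hmin this) (not_le.2 hab)
  · refine ⟨1, one_pos, fun a ha b hb _ => ?_⟩
    by_contra! hcon
    exact hne ⟨(a, b), ⟨ha, hb⟩, hcon⟩

lemma N_inter {X : Type*} [MetricSpace X] {A B : Set X} (hA : IsCompact A)
    (hB : IsCompact B) {m : ℕ} {s : Set (List X)} (hs : s ∈ N (A ∩ B) m) :
    ∃ sA ∈ N A m, ∃ sB ∈ N B m, sA ∩ sB ⊆ s := by
  obtain ⟨ε, he, h⟩ := hs
  obtain ⟨δ, hd, hδ⟩ := compact_inter hA hB (half_pos he)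
  set η := min (δ/2) (ε/2) with hη
  have hη0 : 0 < η := lt_min (half_pos hd) (half_pos he)
  refine ⟨{l | l.length = m ∧ Small A η l}, ⟨η, hη0, fun l hl hs => ⟨hl, hs⟩⟩,
    {l | l.length = m ∧ Small B η l}, ⟨η, hη0, fun l hl hs => ⟨hl, hs⟩⟩, ?_⟩
  rintro l ⟨⟨hl, h1⟩, ⟨_, h2⟩⟩
  apply h l hl
  intro hne
  obtain ⟨a, ha, hxa⟩ := h1 hne
  obtain ⟨b, hb, hxb⟩ := h2 hne
  obtain ⟨x0, hx0⟩ := List.exists_mem_of_ne_nil l hne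
  have e1 := hxa x0 hx0
  have e2 := hxb x0 hx0
  have e3 : η ≤ δ/2 := min_le_left _ _
  have e4 : η ≤ ε/2 := min_le_right _ _
  obtain ⟨c, hc, hac⟩ := hδ a ha b hb (by
    have := dist_triangle_left a b x0
    linarith)
  refine ⟨c, hc, fun x hx => ?_⟩
  have := dist_triangle x a c
  have := hxa x hx
  linarith

lemma glue {X : Type*} [MetricSpace X] {A B : Set X} (hA : IsCompact A)
    (hB : IsCompact B) {m : ℕ} {φ ψ : List X → ZMod 2} (h : φ =ᶠ[N (A ∩ B) m] ψ) :
    ∃ χ : List X → ZMod 2, χ =ᶠ[N A m] φ ∧ χ =ᶠ[N B m] ψ := by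
  classical
  obtain ⟨sA, hsA, sB, hsB, hs⟩ := N_inter hA hB h
  refine ⟨fun l => if l ∈ sA then φ l else ψ l, ?_, ?_⟩
  · filter_upwards [hsA] with l hl
    simp [hl]
  · filter_upwards [hsB] with l hl
    by_cases h1 : l ∈ sA
    · simp only [h1, if_true]; exact hs ⟨h1, hl⟩
    · simp [h1]

lemma d_eventuallyEq {X : Type*} [MetricSpace X] {A : Set X} {m : ℕ} {φ ψ : List X → ZMod 2}
    (h : φ =ᶠ[N A m] ψ) : d φ =ᶠ[N A (m+1)] d ψ := by
  obtain ⟨ε, he, h⟩ := h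
  refine ⟨ε, he, fun l hl hs => ?_⟩
  exact d_congr hl (fun l' hs' hl' => h l' hl' (hs.sub hs'))

def Z {X : Type*} [MetricSpace X] (A : Set X) (m : ℕ) (φ : List X → ZMod 2) : Prop :=
  d φ =ᶠ[N A (m+1)] 0

def B {X : Type*} [MetricSpace X] (A : Set X) (m : ℕ) (φ : List X → ZMod 2) : Prop :=
  ∃ ψ, φ =ᶠ[N A m] d ψ

def Acyc {X : Type*} [MetricSpace X] (A : Set X) (m : ℕ) : Prop := ∀ φ, Z A m φ → B A m φ

section
variable {X : Type*} [MetricSpace X] {A A' : Set X} {m : ℕ} {φ ψ : List X → ZMod 2}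

lemma Z.mono (h : Z A m φ) (hs : A' ⊆ A) : Z A' m φ := Filter.Eventually.filter_mono (N_mono hs _) h
lemma B.mono (h : B A m φ) (hs : A' ⊆ A) : B A' m φ :=
  h.imp fun _ hψ => Filter.Eventually.filter_mono (N_mono hs _) hψ
lemma Z.congr (h : Z A m φ) (e : φ =ᶠ[N A m] ψ) : Z A m ψ := (d_eventuallyEq e).symm.trans h
lemma B.congr (h : B A m φ) (e : φ =ᶠ[N A m] ψ) : B A m ψ := h.imp fun _ hh => e.symm.trans hh
lemma Z.add (h : Z A m φ) (h' : Z A m ψ) : Z A m (φ + ψ) := by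
  unfold Z at *; rw [d_add]; simpa using EventuallyEq.add h h'
lemma B.add (h : B A m φ) (h' : B A m ψ) : B A m (φ + ψ) := by
  obtain ⟨a, ha⟩ := h; obtain ⟨b, hb⟩ := h'
  exact ⟨a + b, by rw [d_add]; exact EventuallyEq.add ha hb⟩
lemma Z_d : Z A (m+1) (d φ) := by unfold Z; rw [d_d]
lemma Z_d' : Z A m (d φ) := by unfold Z; rw [d_d]
lemma B_d : B A m (d φ) := ⟨φ, EventuallyEq.rfl⟩
lemma B_zero : B A m 0 := ⟨0, by rw [d_zero]⟩
lemma Z.union {A B : Set X} (h : Z A m φ) (h' : Z B m φ) : Z (A ∪ B) m φ := by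
  unfold Z EventuallyEq at *; rw [N_union]; exact eventually_sup.2 ⟨h, h'⟩
lemma add_self_fun (φ : List X → ZMod 2) : φ + φ = 0 := by
  funext l; exact CharTwo.add_self_eq_zero _

lemma mv_core {A C : Set X} (hA : IsCompact A) (hC : IsCompact C) {k : ℕ}
    {φ α β : List X → ZMod 2} (h1 : φ =ᶠ[N A (k+1)] d α) (h2 : φ =ᶠ[N C (k+1)] d β)
    (h3 : B (A ∩ C) k (α + β)) : B (A ∪ C) (k+1) φ := by
  obtain ⟨γ, hγ⟩ := h3
  have : α + d γ =ᶠ[N (A ∩ C) k] β := by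
    filter_upwards [hγ] with l hl
    simp only [Pi.add_apply] at hl ⊢
    rw [← hl]
    have := CharTwo.add_self_eq_zero (α l)
    linear_combination this
  obtain ⟨χ, hχ1, hχ2⟩ := glue hA hC this
  refine ⟨χ, ?_⟩
  unfold EventuallyEq
  rw [N_union]
  refine eventually_sup.2 ⟨?_, ?_⟩
  · have := d_eventuallyEq hχ1
    rw [d_add, d_d, add_zero] at this
    exact h1.trans this.symm
  · exact h2.trans (d_eventuallyEq hχ2).symm

lemma B_nil (hne : A.Nonempty ∨ True) : B A 0 φ ↔ φ [] = 0 := by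
  constructor
  · rintro ⟨ψ, ε, he, h⟩
    have := h [] rfl (fun h => absurd rfl h)
    simpa using this
  · intro h
    refine ⟨0, 1, one_pos, fun l hl _ => ?_⟩
    rw [List.length_eq_zero_iff.1 hl]; simpa using h

lemma Z_sum {α β : List X → ZMod 2} {k : ℕ} (h1 : φ =ᶠ[N A (k+1)] d α)
    (h2 : φ =ᶠ[N A (k+1)] d β) : Z A k (α + β) := by
  unfold Z; rw [d_add]
  filter_upwards [h1, h2] with l e1 e2
  simp only [Pi.add_apply, ← e1, ← e2, Pi.zero_apply]
  exact CharTwo.add_self_eq_zero _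

lemma mv {A C : Set X} (hA : IsCompact A) (hC : IsCompact C) {k : ℕ}
    (h1 : Acyc A (k+1)) (h2 : Acyc C (k+1)) (h3 : Acyc (A ∩ C) k) : Acyc (A ∪ C) (k+1) := by
  intro φ hφ
  obtain ⟨α, ha⟩ := h1 φ (hφ.mono Set.subset_union_left)
  obtain ⟨β, hb⟩ := h2 φ (hφ.mono Set.subset_union_right)
  refine mv_core hA hC ha hb (h3 _ (Z_sum (φ := φ) ?_ ?_))
  exacts [Filter.Eventually.filter_mono (N_mono Set.inter_subset_left _) ha, 
    Filter.Eventually.filter_mono (N_mono Set.inter_subset_right _) hb]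

lemma acyc_zero (hA : A.Nonempty) : Acyc A 0 := by
  rintro φ ⟨ε, he, h⟩
  obtain ⟨a, ha⟩ := hA
  rw [B_nil (.inr trivial)]
  have := h [a] rfl (fun _ => ⟨a, ha, by simpa using he⟩)
  simpa [d_cons] using this

lemma acyc_empty (m : ℕ) : Acyc (∅ : Set X) (m+1) := by
  intro φ _
  refine ⟨0, 1, one_pos, fun l hl hs => ?_⟩
  obtain ⟨a, ha, _⟩ := hs (by rintro rfl; simp at hl)
  exact ha.elim

lemma acyc_singleton (a : X) (m : ℕ) : Acyc ({a} : Set X) m := by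
  rintro φ ⟨ε, he, h⟩
  refine ⟨fun l => φ (a :: l), ε, he, fun l hl hs => ?_⟩
  have this : d φ (a :: l) = 0 := by
    refine h (a :: l) (by simp [hl]) (fun _ => ⟨a, rfl, ?_⟩)
    intro x hx
    rcases List.mem_cons.1 hx with rfl | hx
    · simpa using he
    · obtain ⟨b, hb, h'⟩ := hs (by rintro rfl; simp at hx)
      rw [Set.mem_singleton_iff.1 hb] at h'
      exact h' x hx
  rw [d_cons] at this
  exact CharTwo.add_eq_zero.1 this

end

section maps
variable {X X' : Type*} [MetricSpace X] [MetricSpace X']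

def Near2 (A : Set X) (A' : Set X') (f g : X → X') : Prop :=
  ∀ ε' > 0, ∃ ε > 0, ∀ a ∈ A, ∃ a' ∈ A', ∀ x, dist x a < ε → dist (f x) a' < ε' ∧ dist (g x) a' < ε'

def Htp (A : Set X) (A' : Set X') (f g : X → X') : Prop :=
  ∀ ε' > 0, ∃ ε > 0, ∃ (n : ℕ) (F : ℕ → X → X'), F 0 = f ∧ F n = g ∧ ∀ i < n, ∀ a ∈ A, ∃ a' ∈ A',
    ∀ x, dist x a < ε → dist (F i x) a' < ε' ∧ dist (F (i+1) x) a' < ε'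

lemma Near2.htp {A : Set X} {A' : Set X'} {f g : X → X'} (h : Near2 A A' f g) : Htp A A' f g := by
  intro ε' he'
  obtain ⟨ε, he, h⟩ := h ε' he'
  refine ⟨ε, he, 1, fun i => if i = 0 then f else g, by simp, by simp, ?_⟩
  intro i hi
  obtain rfl : i = 0 := by omega
  simpa using h

lemma Near2.left {A : Set X} {A' : Set X'} {f g : X → X'} (h : Near2 A A' f g) :
    Near2 A A' f f := by
  intro ε' he'
  obtain ⟨ε, he, h⟩ := h ε' he'
  refine ⟨ε, he, fun a ha => ?_⟩
  obtain ⟨a', ha', h⟩ := h a ha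
  exact ⟨a', ha', fun x hx => ⟨(h x hx).1, (h x hx).1⟩⟩

lemma Near2.tendsto {A : Set X} {A' : Set X'} {f : X → X'} (h : Near2 A A' f f) (m : ℕ) :
    Tendsto (List.map f) (N A m) (N A' m) := by
  rintro s ⟨ε', he', hs⟩
  obtain ⟨ε, he, h⟩ := h ε' he'
  refine ⟨ε, he, fun l hl hsm => hs _ (by simpa using hl) ?_⟩
  intro hne
  obtain ⟨a, ha, hx⟩ := hsm (by rintro rfl; simp at hne)
  obtain ⟨a', ha', h⟩ := h a ha
  refine ⟨a', ha', fun y hy => ?_⟩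
  obtain ⟨x, hxl, rfl⟩ := List.mem_map.1 hy
  exact (h x (hx x hxl)).1

lemma Z.pull {A : Set X} {A' : Set X'} {f : X → X'} {m : ℕ} {φ : List X' → ZMod 2}
    (h : Z A' m φ) (hf : Near2 A A' f f) : Z A m (fun l => φ (l.map f)) := by
  unfold Z
  filter_upwards [(hf.tendsto (m+1)).eventually h] with l hl
  rw [d_map f φ, hl]; rfl

lemma B.pull {A : Set X} {A' : Set X'} {f : X → X'} {m : ℕ} {φ : List X' → ZMod 2}
    (h : B A' m φ) (hf : Near2 A A' f f) : B A m (fun l => φ (l.map f)) := by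
  obtain ⟨ψ, h⟩ := h
  refine ⟨fun l => ψ (l.map f), ?_⟩
  filter_upwards [(hf.tendsto m).eventually h] with l hl
  rw [d_map f ψ, hl]

lemma htp_B {A : Set X} {A' : Set X'} {f g : X → X'} {m : ℕ} {φ : List X' → ZMod 2}
    (h : Z A' m φ) (hf : Htp A A' f g) : 
    B A m ((fun l => φ (l.map f)) + fun l => φ (l.map g)) := by
  obtain ⟨ε', he', h⟩ := h
  obtain ⟨ε, he, n, F, rfl, rfl, hF⟩ := hf ε' he'
  have step : ∀ i < n, ∀ l : List X, l.length = m → Small A ε l →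
      φ (l.map (F i)) + φ (l.map (F (i+1))) = d (prism (F i) (F (i+1)) φ) l := by
    intro i hi l hl hs
    rw [← prism_d, prism_vanish, add_zero]
    intro l' hl' hsub
    refine h l' (by rw [hl', hl]) ?_
    intro hne
    obtain ⟨a, ha, hx⟩ := hs (by rintro rfl; simp at hsub; exact hne hsub)
    obtain ⟨a', ha', hh⟩ := hF i hi a ha
    refine ⟨a', ha', fun y hy => ?_⟩
    rcases List.mem_append.1 (hsub hy) with hy | hy
    · obtain ⟨x, hxl, rfl⟩ := List.mem_map.1 hy
      exact (hh x (hx x hxl)).1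
    · obtain ⟨x, hxl, rfl⟩ := List.mem_map.1 hy
      exact (hh x (hx x hxl)).2
  have key : ∀ k ≤ n, ∃ ψ, ∀ l : List X, l.length = m → Small A ε l → 
      φ (l.map (F 0)) + φ (l.map (F k)) = d ψ l := by
    intro k
    induction k with
    | zero => intro _; exact ⟨0, fun l _ _ => by rw [d_zero]; exact CharTwo.add_self_eq_zero _⟩
    | succ k ih =>
      intro hk
      obtain ⟨ψ, hψ⟩ := ih (by omega)
      refine ⟨ψ + prism (F k) (F (k+1)) φ, fun l hl hs => ?_⟩
      rw [d_add, Pi.add_apply, ← hψ l hl hs, ← step k (by omega) l hl hs]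
      have := CharTwo.add_self_eq_zero (φ (l.map (F k)))
      linear_combination -this
  obtain ⟨ψ, hψ⟩ := key n le_rfl
  exact ⟨ψ, ε, he, fun l hl hs => hψ l hl hs⟩

/-- If `φ ∘ f` is a coboundary so is `φ ∘ g`. -/
lemma B.htp {A : Set X} {A' : Set X'} {f g : X → X'} {m : ℕ} {φ : List X' → ZMod 2}
    (hB : B A m (fun l => φ (l.map f))) (h : Z A' m φ) (hf : Htp A A' f g) :
    B A m (fun l => φ (l.map g)) := by
  have := (htp_B h hf).add hB
  convert this using 1
  funext l
  simp only [Pi.add_apply]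
  have := CharTwo.add_self_eq_zero (φ (l.map f))
  linear_combination -this

lemma B.htp' {A : Set X} {A' : Set X'} {f g : X → X'} {m : ℕ} {φ : List X' → ZMod 2}
    (hB : B A m (fun l => φ (l.map g))) (h : Z A' m φ) (hf : Htp A A' f g) :
    B A m (fun l => φ (l.map f)) := by
  have := (htp_B h hf).add hB
  convert this using 1
  funext l
  simp only [Pi.add_apply]
  have := CharTwo.add_self_eq_zero (φ (l.map g))
  linear_combination -this

end maps

section proj
variable {X X' : Type*} [MetricSpace X] [MetricSpace X']

lemma exists_proj {A : Set X} (hA : IsCompact A) (x : X) :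
    ∃ r : X, A.Nonempty → r ∈ A ∧ ∀ a ∈ A, dist x r ≤ dist x a := by
  by_cases hne : A.Nonempty
  · obtain ⟨r, hr, h⟩ := hA.exists_infDist_eq_dist hne x
    exact ⟨r, fun _ => ⟨hr, fun a ha => h ▸ Metric.infDist_le_dist_of_mem ha⟩⟩
  · exact ⟨x, fun h => absurd h hne⟩

noncomputable def pr {A : Set X} (hA : IsCompact A) (x : X) : X := (exists_proj hA x).choose

lemma pr_mem {A : Set X} (hA : IsCompact A) (hne : A.Nonempty) (x : X) : pr hA x ∈ A :=
  ((exists_proj hA x).choose_spec hne).1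

lemma pr_le {A : Set X} (hA : IsCompact A) (x : X) {a : X} (ha : a ∈ A) :
    dist x (pr hA x) ≤ dist x a :=
  ((exists_proj hA x).choose_spec ⟨a, ha⟩).2 a ha

lemma pr_self {A : Set X} (hA : IsCompact A) {a : X} (ha : a ∈ A) : pr hA a = a := by
  have := pr_le hA a ha
  rw [dist_self] at this
  exact (dist_le_zero.1 this).symm

lemma pr_dist {A : Set X} (hA : IsCompact A) (x : X) {a : X} (ha : a ∈ A) :
    dist (pr hA x) a ≤ 2 * dist x a := by
  have h1 := pr_le hA x ha
  have h2 := dist_triangle (pr hA x) x a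
  rw [dist_comm _ x] at h2
  linarith

lemma near2_pr {A : Set X} (hA : IsCompact A) : Near2 A A id (pr hA) := by
  intro ε he
  refine ⟨ε/2, half_pos he, fun a ha => ⟨a, ha, fun x hx => ⟨?_, ?_⟩⟩⟩
  · simp only [id]; linarith
  · have := pr_dist hA x ha
    linarith

lemma near2_cont {A : Set X} {A' : Set X'} (hA : IsCompact A) {r : X → X'}
    (hr : ContinuousOn r A) (hm : ∀ a ∈ A, r a ∈ A') :
    Near2 A A' (r ∘ pr hA) (r ∘ pr hA) := by
  intro ε he
  obtain ⟨δ, hd, h⟩ := Metric.uniformContinuousOn_iff.1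
    (hA.uniformContinuousOn_of_continuous hr) ε he
  refine ⟨δ/2, half_pos hd, fun a ha => ⟨r a, hm a ha, fun x hx => ?_⟩⟩
  have h1 := pr_dist hA x ha
  have := h _ (pr_mem hA ⟨a, ha⟩ x) a ha (by linarith)
  exact ⟨this, this⟩

lemma near2_retract {A A' : Set X} (hA : IsCompact A) (hs : A' ⊆ A) {r : X → X}
    (hr : ContinuousOn r A) (hid : ∀ a ∈ A', r a = a) :
    Near2 A' A' (r ∘ pr hA) id := by
  intro ε he
  obtain ⟨δ, hd, h⟩ := Metric.uniformContinuousOn_iff.1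
    (hA.uniformContinuousOn_of_continuous hr) ε he
  refine ⟨min (δ/2) ε, lt_min (half_pos hd) he, fun a ha => ⟨a, ha, fun x hx => ?_⟩⟩
  have h1 := pr_dist hA x (hs ha)
  have h2 := min_le_left (δ/2) ε
  have h3 := min_le_right (δ/2) ε
  have := h _ (pr_mem hA ⟨a, hs ha⟩ x) a (hs ha) (by linarith)
  rw [hid a ha] at this
  exact ⟨this, by simp only [id]; linarith⟩

lemma htp_cont {A : Set X} {A' : Set X'} (hA : IsCompact A) {H : ℝ × X → X'}
    (hr : ContinuousOn H (Set.Icc 0 1 ×ˢ A)) (hm : ∀ t ∈ Set.Icc (0:ℝ) 1, ∀ a ∈ A, H (t, a) ∈ A') :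
    Htp A A' (fun x => H (0, pr hA x)) (fun x => H (1, pr hA x)) := by
  intro ε he
  obtain ⟨δ, hd, h⟩ := Metric.uniformContinuousOn_iff.1
    ((isCompact_Icc.prod hA).uniformContinuousOn_of_continuous hr) ε he
  obtain ⟨n, hn⟩ := exists_nat_gt (1/δ)
  have hn0 : (0:ℝ) < n := lt_trans (by positivity) hn
  have hnd : 1 / (n:ℝ) < δ := by
    rw [div_lt_comm₀ hn0 hd]; exact hn
  refine ⟨δ/2, half_pos hd, n, fun i x => H ((i:ℝ)/n, pr hA x), by simp, ?_, ?_⟩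
  · funext x; simp [hn0.ne']
  intro i hi a ha
  have hmem : ∀ j ≤ n, (j:ℝ)/n ∈ Set.Icc (0:ℝ) 1 := fun j hj =>
    ⟨by positivity, by rw [div_le_one hn0]; exact_mod_cast hj⟩
  refine ⟨H ((i:ℝ)/n, a), hm _ (hmem i hi.le) a ha, fun x hx => ?_⟩
  have h1 := pr_dist hA x ha
  have hp := pr_mem hA ⟨a, ha⟩ x
  constructor
  · refine h _ ⟨hmem i hi.le, hp⟩ _ ⟨hmem i hi.le, ha⟩ ?_
    rw [Prod.dist_eq]
    simp only [dist_self]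
    exact max_lt hd (by linarith)
  · refine h _ ⟨hmem (i+1) hi, hp⟩ _ ⟨hmem i hi.le, ha⟩ ?_
    rw [Prod.dist_eq]
    refine max_lt ?_ (by simp only; linarith)
    rw [Real.dist_eq]
    have : ((i+1:ℕ):ℝ)/n - (i:ℝ)/n = 1/n := by push_cast; ring
    simp only [this]
    rwa [abs_of_pos (by positivity)]

def Inj (A A' : Set X) (m : ℕ) : Prop := ∀ φ, Z A m φ → B A' m φ → B A m φ
def Surj (A A' : Set X) (m : ℕ) : Prop := ∀ w, Z A' m w → ∃ w', Z A m w' ∧ w' =ᶠ[N A' m] w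

lemma inj_of {A A' : Set X} (hA : IsCompact A) {H : ℝ × X → X}
    (hr : ContinuousOn H (Set.Icc 0 1 ×ˢ A)) (hm : ∀ t ∈ Set.Icc (0:ℝ) 1, ∀ a ∈ A, H (t, a) ∈ A)
    (h0 : ∀ a ∈ A, H (0, a) = a) (h1 : ∀ a ∈ A, H (1, a) ∈ A') (m : ℕ) : Inj A A' m := by
  intro φ hφ hB
  rcases A.eq_empty_or_nonempty with rfl | hne
  · cases m with
    | zero => 
      rw [B_nil (.inr trivial)] at hB ⊢; exact hB
    | succ m => exact acyc_empty m φ hφ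
  have hc : ContinuousOn (fun x => H (1, x)) A :=
    hr.comp (by fun_prop) (fun x hx => ⟨by simp, hx⟩)
  have e1 := hB.pull (near2_cont hA hc h1)
  have e2 := B.htp' (f := fun x => H (0, pr hA x)) (A := A) e1 hφ (htp_cont hA hr hm)
  have e3 : (fun x => H (0, pr hA x)) = pr hA := by
    funext x; exact h0 _ (pr_mem hA hne x)
  rw [e3] at e2
  have e4 := B.htp' (f := id) e2 hφ (near2_pr hA).htp
  simpa using e4

lemma surj_of {A A' : Set X} (hA : IsCompact A) (hs : A' ⊆ A) {r : X → X}
    (hr : ContinuousOn r A) (hm : ∀ a ∈ A, r a ∈ A') (hid : ∀ a ∈ A', r a = a) (m : ℕ) :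
    Surj A A' m := by
  intro w hw
  have n2 := near2_retract hA hs hr hid
  have e1 := htp_B hw n2.htp
  obtain ⟨ψ, hψ⟩ := e1
  refine ⟨(fun l => w (l.map (r ∘ pr hA))) + d ψ, ?_, ?_⟩
  · exact (hw.pull (near2_cont hA hr hm)).add Z_d'
  · filter_upwards [hψ] with l hl
    simp only [Pi.add_apply, List.map_id] at hl ⊢
    rw [← hl]
    have := CharTwo.add_self_eq_zero (w (l.map (r ∘ pr hA)))
    linear_combination this

lemma Acyc.of_inj {A A' : Set X} {m : ℕ} (h : Inj A A' m) (hs : A' ⊆ A) (h' : Acyc A' m) :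
    Acyc A m := fun φ hφ => h φ hφ (h' φ (hφ.mono hs))

end proj

section cups
variable {X : Type*} [MetricSpace X] {A A' : Set X} {p q : ℕ} {φ ψ φ' ψ' : List X → ZMod 2}

lemma tendsto_take (h : p ≤ q) : Tendsto (List.take p) (N A q) (N A p) := by
  rintro s ⟨ε, he, hs⟩
  refine ⟨ε, he, fun l hl hsm => hs _ (by simp; omega) (hsm.sub (List.take_subset _ _))⟩

lemma tendsto_drop : Tendsto (List.drop p) (N A (p+q)) (N A q) := by
  rintro s ⟨ε, he, hs⟩
  refine ⟨ε, he, fun l hl hsm => hs _ (by simp; omega) (hsm.sub (List.drop_subset _ _))⟩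

lemma cup_congr (h : φ =ᶠ[N A (p+1)] φ') (h' : ψ =ᶠ[N A (q+1)] ψ') :
    cup p φ ψ =ᶠ[N A (p+q+1)] cup p φ' ψ' := by
  filter_upwards [(tendsto_take (q := p+q+1) (by omega)).eventually h, 
    (tendsto_drop (p := p) (q := q+1)).eventually h'] with l h1 h2
  simp only [cup, h1, h2]

lemma cup_union {A C : Set X} (h : φ =ᶠ[N A (p+1)] 0) (h' : ψ =ᶠ[N C (q+1)] 0) :
    cup p φ ψ =ᶠ[N (A ∪ C) (p+q+1)] 0 := by
  unfold EventuallyEq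
  rw [N_union]
  refine eventually_sup.2 ⟨?_, ?_⟩
  · filter_upwards [(tendsto_take (q := p+q+1) (by omega)).eventually h] with l h1
    simp [cup, h1]
  · filter_upwards [(tendsto_drop (p := p) (q := q+1)).eventually h'] with l h1
    simp [cup, h1]

lemma leibniz_N : d (cup p φ ψ) =ᶠ[N A (p+q+2)] cup (p+1) (d φ) ψ + cup p φ (d ψ) := by
  filter_upwards [length_N A (p+q+2)] with l hl
  rw [leibniz _ _ _ _ (by omega), Pi.add_apply]

lemma Z.cup (h : Z A (p+1) φ) (h' : Z A (q+1) ψ) : Z A (p+q+1) (cup p φ ψ) := by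
  unfold Z
  refine (leibniz_N (q := q)).trans ?_
  have e1 : CT.cup (p+1) (d φ) ψ =ᶠ[N A (p+1+q+1)] CT.cup (p+1) 0 ψ := cup_congr h EventuallyEq.rfl
  have e2 : CT.cup p φ (d ψ) =ᶠ[N A (p+(q+1)+1)] CT.cup p φ 0 := cup_congr EventuallyEq.rfl h'
  rw [show p+1+q+1 = p+q+2 by ring] at e1
  rw [show p+(q+1)+1 = p+q+2 by ring] at e2
  filter_upwards [e1, e2] with l h1 h2
  simp only [Pi.add_apply, h1, h2]
  simp [CT.cup]

/-- vanishing on two pieces -/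
lemma B.cup_union {A C : Set X} (hφ : Z (A ∪ C) (p+2) φ) (hψ : Z (A ∪ C) (q+2) ψ)
    (h : B A (p+2) φ) (h' : B C (q+2) ψ) : B (A ∪ C) (p+q+3) (cup (p+1) φ ψ) := by
  obtain ⟨α, ha⟩ := h
  obtain ⟨β, hb⟩ := h'
  have e : CT.cup (p+1) (φ + d α) (ψ + d β) =ᶠ[N (A ∪ C) (p+1+(q+1)+1)] 0 := by
    apply CT.cup_union
    · filter_upwards [ha] with l hl
      simp [hl, CharTwo.add_self_eq_zero]
    · filter_upwards [hb] with l hl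
      simp [hl, CharTwo.add_self_eq_zero]
  have l1 : d (CT.cup p α (ψ + d β)) =ᶠ[N (A ∪ C) (p+(q+1)+2)] _ := leibniz_N
  have l2 : d (CT.cup (p+1) φ β) =ᶠ[N (A ∪ C) ((p+1)+q+2)] _ := leibniz_N
  have z2 : CT.cup (p+1+1) (d φ) β =ᶠ[N (A ∪ C) ((p+1+1)+q+1)] CT.cup (p+1+1) 0 β :=
    cup_congr hφ EventuallyEq.rfl
  have z3 : CT.cup p α (d (ψ + d β)) =ᶠ[N (A ∪ C) (p+(q+2)+1)] CT.cup p α 0 := by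
    apply cup_congr EventuallyEq.rfl
    rw [d_add, d_d, add_zero]; exact hψ
  refine ⟨CT.cup p α (ψ + d β) + CT.cup (p+1) φ β, ?_⟩
  rw [d_add]
  rw [show p+1+(q+1)+1 = p+q+3 by ring] at e
  rw [show p+(q+1)+2 = p+q+3 by ring] at l1
  rw [show (p+1)+q+2 = p+q+3 by ring] at l2
  rw [show (p+1+1)+q+1 = p+q+3 by ring] at z2
  rw [show p+(q+2)+1 = p+q+3 by ring] at z3
  filter_upwards [e, l1, l2, z2, z3] with l e l1 l2 z2 z3
  simp only [Pi.add_apply] at l1 l2 ⊢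
  rw [l1, l2, z2, z3]
  simp only [CT.cup, Pi.add_apply, Pi.zero_apply] at e ⊢
  have key : ∀ a b c x : ZMod 2, (a + b) * (c + x) = 0 → a * c = b * (c + x) + a * x := by decide
  rw [mul_zero, zero_mul, add_zero, zero_add]
  exact key _ _ _ _ e

end cups

end CT
end

section
open Filter Topology

namespace CT

/-! ### Filtration arguments -/

lemma B.of_add {X : Type*} [MetricSpace X] {A : Set X} {m : ℕ} {φ ψ : List X → ZMod 2}
    (h : B A m (φ + ψ)) (h' : B A m ψ) : B A m φ := by
  have := h.add h'
  rwa [add_assoc, add_self_fun, add_zero] at this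

lemma N_empty {X : Type*} [MetricSpace X] (m : ℕ) (p : List X → Prop) :
    ∀ᶠ l in N (∅ : Set X) (m+1), p l := by
  refine ⟨1, one_pos, fun l hl hs => ?_⟩
  obtain ⟨a, ha, _⟩ := hs (by rintro rfl; simp at hl)
  exact ha.elim

structure Filt {X : Type*} [MetricSpace X] (E Ep Em : ℕ → Set X) (K : ℕ) : Prop where
  cp : ∀ k, IsCompact (Ep k)
  cm : ∀ k, IsCompact (Em k)
  un : ∀ k, E k = Ep k ∪ Em k
  int : ∀ k, Ep (k+1) ∩ Em (k+1) = E k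
  int0 : Ep 0 ∩ Em 0 = ∅
  ipp : ∀ k, k + 1 ≤ K → ∀ m, Inj (Ep (k+1)) (Ep 0) m
  ipm : ∀ k, k + 1 ≤ K → ∀ m, Inj (Ep (k+1)) (Em 0) m
  imp : ∀ k, k + 1 ≤ K → ∀ m, Inj (Em (k+1)) (Ep 0) m
  imm : ∀ k, k + 1 ≤ K → ∀ m, Inj (Em (k+1)) (Em 0) m
  spp : ∀ k, k + 1 ≤ K → ∀ m, Surj (Ep (k+1)) (Ep 0) m
  spm : ∀ k, k + 1 ≤ K → ∀ m, Surj (Ep (k+1)) (Em 0) m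
  smp : ∀ k, k + 1 ≤ K → ∀ m, Surj (Em (k+1)) (Ep 0) m

namespace Filt
variable {X : Type*} [MetricSpace X] {E Ep Em : ℕ → Set X} {K : ℕ}

lemma sp (F : Filt E Ep Em K) (k : ℕ) : Ep k ⊆ E k := by rw [F.un]; exact Set.subset_union_left
lemma sm (F : Filt E Ep Em K) (k : ℕ) : Em k ⊆ E k := by rw [F.un]; exact Set.subset_union_right
lemma ssp (F : Filt E Ep Em K) (k : ℕ) : E k ⊆ Ep (k+1) := by
  rw [← F.int]; exact Set.inter_subset_left
lemma ssm (F : Filt E Ep Em K) (k : ℕ) : E k ⊆ Em (k+1) := by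
  rw [← F.int]; exact Set.inter_subset_right
lemma zE (F : Filt E Ep Em K) (k : ℕ) : E 0 ⊆ E k := by
  induction k with
  | zero => rfl
  | succ k ih => exact ih.trans ((F.ssp k).trans (F.sp _))
lemma mE (F : Filt E Ep Em K) {k j : ℕ} (h : k ≤ j) : E k ⊆ E j := by
  induction h with
  | refl => rfl
  | step _ ih => exact ih.trans ((F.ssp _).trans (F.sp _))
lemma zp (F : Filt E Ep Em K) (k : ℕ) : Ep 0 ⊆ E k := (F.sp 0).trans (F.zE k)
lemma zm (F : Filt E Ep Em K) (k : ℕ) : Em 0 ⊆ E k := (F.sm 0).trans (F.zE k)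

lemma vanish (F : Filt E Ep Em K) {D : ℕ} (h1 : ∀ m, D + 1 < m → Acyc (Ep 0) m)
    (h2 : ∀ m, D + 1 < m → Acyc (Em 0) m) (k : ℕ) (hk : k ≤ K) :
    ∀ m, D + k + 1 < m → Acyc (E k) m := by
  induction k with
  | zero =>
    intro m hm
    obtain ⟨j, rfl⟩ : ∃ j, m = j + 1 + 1 := ⟨m - 2, by omega⟩
    rw [F.un]
    refine mv (F.cp 0) (F.cm 0) (h1 _ hm) (h2 _ hm) ?_
    rw [F.int0]; exact acyc_empty j
  | succ k ih =>
    intro m hm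
    obtain ⟨j, rfl⟩ : ∃ j, m = j + 1 := ⟨m - 1, by omega⟩
    rw [F.un]
    refine mv (F.cp _) (F.cm _) (Acyc.of_inj (F.ipp k hk _) ((F.zp k).trans (F.ssp k))
      (h1 _ (by omega))) (Acyc.of_inj (F.imm k hk _) ((F.zm k).trans (F.ssm k))
      (h2 _ (by omega))) ?_
    rw [F.int]; exact ih (by omega) j (by omega)

lemma injE (F : Filt E Ep Em K) (k : ℕ) (hk : k ≤ K) :
    ∀ m ≤ k, ∀ u, Z (E k) m u → B (Ep 0) m u → B (E k) m u := by
  induction k with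
  | zero =>
    intro m hm u _ hB
    obtain rfl : m = 0 := by omega
    rw [B_nil (.inr trivial)] at hB ⊢; exact hB
  | succ k ih =>
    intro m hm u hu hB
    cases m with
    | zero => rw [B_nil (.inr trivial)] at hB ⊢; exact hB
    | succ j =>
      obtain ⟨α, ha⟩ := F.ipp k hk _ u (hu.mono (F.sp _)) hB
      obtain ⟨β, hb⟩ := F.imp k hk _ u (hu.mono (F.sm _)) hB
      have ha' : u =ᶠ[N (E k) (j+1)] d α := Filter.Eventually.filter_mono (N_mono (F.ssp k) _) ha
      have hb' : u =ᶠ[N (E k) (j+1)] d β := Filter.Eventually.filter_mono (N_mono (F.ssm k) _) hb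
      have hz := Z_sum ha' hb'
      obtain ⟨w, hw, hwe⟩ := F.smp k hk j _ (hz.mono (F.zp k))
      have hb2 : u =ᶠ[N (Em (k+1)) (j+1)] d (β + w) := by
        rw [d_add]
        unfold Z at hw
        filter_upwards [hb, hw] with l e1 e2
        simp [e1, e2]
      rw [F.un]
      refine mv_core (F.cp _) (F.cm _) ha hb2 ?_
      rw [F.int]
      apply ih (by omega) j (by omega)
      · rw [← add_assoc]; exact hz.add (hw.mono (F.ssm k))
      · refine B_zero.congr ?_
        filter_upwards [hwe] with l e
        simp only [Pi.add_apply, Pi.zero_apply] at e ⊢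
        rw [e, ← add_assoc, CharTwo.add_self_eq_zero]

lemma extend (F : Filt E Ep Em K) {k : ℕ} (hk : k + 1 ≤ K) {m : ℕ} (hm : m ≤ k)
    {x : List X → ZMod 2} (hx : Z (Ep 0) m x) :
    ∃ x', Z (E (k+1)) m x' ∧ x' =ᶠ[N (Ep 0) m] x := by
  obtain ⟨a, ha, hae⟩ := F.spp k hk m x hx
  obtain ⟨b, hb, hbe⟩ := F.smp k hk m x hx
  have h1 : B (E k) m (a + b) := by
    apply F.injE k (by omega) m hm
    · exact (ha.mono (F.ssp k)).add (hb.mono (F.ssm k))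
    · refine B_zero.congr ?_
      filter_upwards [hae, hbe] with l e1 e2
      simp only [Pi.add_apply, Pi.zero_apply, e1, e2]
      rw [CharTwo.add_self_eq_zero]
  obtain ⟨γ, hγ⟩ := h1
  have hg : a =ᶠ[N (Ep (k+1) ∩ Em (k+1)) m] b + d γ := by
    rw [F.int]
    filter_upwards [hγ] with l hl
    simp only [Pi.add_apply] at hl ⊢
    rw [← hl]
    have := CharTwo.add_self_eq_zero (b l)
    linear_combination -this
  obtain ⟨χ, h1, h2⟩ := glue (F.cp _) (F.cm _) hg
  refine ⟨χ, ?_, ?_⟩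
  · rw [F.un]
    exact Z.union (ha.congr h1.symm) ((hb.add Z_d').congr h2.symm)
  · exact EventuallyEq.trans (Filter.Eventually.filter_mono (N_mono ((F.zp k).trans (F.ssp k)) _) h1) hae

lemma tau0 (F : Filt E Ep Em K) : ∃ τ : List X → ZMod 2,
    τ =ᶠ[N (Ep 0) 1] (fun _ => 1) ∧ τ =ᶠ[N (Em 0) 1] 0 ∧ Z (E 0) 1 τ := by
  obtain ⟨τ, h1, h2⟩ := glue (F.cp 0) (F.cm 0) (m := 1) (φ := fun _ => 1) (ψ := 0)
    (by rw [F.int0]; exact N_empty 0 _)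
  refine ⟨τ, h1, h2, ?_⟩
  rw [F.un]
  refine Z.union ?_ ?_
  · refine Z.congr ?_ h1.symm
    unfold Z
    filter_upwards [length_N (Ep 0) 2] with l hl
    match l, hl with
    | [x, y], _ => simp [d_cons, CharTwo.add_self_eq_zero]
  · refine Z.congr ?_ h2.symm
    unfold Z; rw [d_zero]

lemma tauS (F : Filt E Ep Em K) (k : ℕ) {τ : List X → ZMod 2} (h : Z (E k) (k+1) τ) :
    ∃ τ', τ' =ᶠ[N (Ep (k+1)) (k+2)] d τ ∧ τ' =ᶠ[N (Em (k+1)) (k+2)] 0 ∧ Z (E (k+1)) (k+2) τ' := by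
  obtain ⟨τ', h1, h2⟩ := glue (F.cp (k+1)) (F.cm (k+1)) (m := k+2) (φ := d τ) (ψ := 0)
    (by rw [F.int]; exact h)
  refine ⟨τ', h1, h2, ?_⟩
  rw [F.un]
  refine Z.union (Z_d.congr h1.symm) (Z.congr ?_ h2.symm)
  unfold Z; rw [d_zero]

/-- common analysis -/
lemma tau_split (F : Filt E Ep Em K) (k D : ℕ) {τ τ' x η : List X → ZMod 2}
    (h1 : τ' =ᶠ[N (Ep (k+1)) (k+2)] d τ) (h2 : τ' =ᶠ[N (Em (k+1)) (k+2)] 0)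
    (hx : Z (E (k+1)) (D+1) x)
    (hη : cup (k+1) τ' x =ᶠ[N (E (k+1)) (k+1+D+1)] d η) :
    Z (Em (k+1)) (k+D+1) η ∧ Z (Ep (k+1)) (k+D+1) (cup k τ x + η) := by
  constructor
  · unfold Z
    have e1 : cup (k+1) τ' x =ᶠ[N (Em (k+1)) (k+1+D+1)] cup (k+1) 0 x :=
      cup_congr h2 EventuallyEq.rfl
    have e2 := Filter.Eventually.filter_mono (N_mono (F.sm (k+1)) _) hη
    rw [show k+D+1+1 = k+1+D+1 by ring]
    filter_upwards [e1, e2] with l e1 e2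
    rw [← e2, e1]; simp [cup]
  · unfold Z
    have e1 : cup (k+1) τ' x =ᶠ[N (Ep (k+1)) (k+1+D+1)] cup (k+1) (d τ) x :=
      cup_congr h1 EventuallyEq.rfl
    have e2 := Filter.Eventually.filter_mono (N_mono (F.sp (k+1)) _) hη
    have e3 : d (cup k τ x) =ᶠ[N (Ep (k+1)) (k+D+2)] _ := leibniz_N
    have e4 : cup k τ (d x) =ᶠ[N (Ep (k+1)) (k+(D+1)+1)] cup k τ 0 :=
      cup_congr EventuallyEq.rfl (hx.mono (F.sp _))
    rw [show k+(D+1)+1 = k+1+D+1 by ring] at e4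
    rw [show k+D+2 = k+1+D+1 by ring] at e3
    rw [show k+D+1+1 = k+1+D+1 by ring, d_add]
    filter_upwards [e1, e2, e3, e4] with l e1 e2 e3 e4
    rw [Pi.add_apply, e3, Pi.add_apply, e4, ← e2, e1]
    simp only [cup, Pi.zero_apply, mul_zero, add_zero]
    exact CharTwo.add_self_eq_zero _

lemma nonvanish (F : Filt E Ep Em K) (hK : 2 ≤ K) {D : ℕ}
    (hp : ∀ m, D + 1 < m → Acyc (Ep 0) m) (hm : ∀ m, D + 1 < m → Acyc (Em 0) m)
    {x : List X → ZMod 2} (hx : Z (E K) (D+1) x) (hnB : ¬ B (Ep 0) (D+1) x) (k : ℕ) (hk : k + 1 ≤ K) :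
    ∃ τ, Z (E (k+1)) (k+2) τ ∧ ¬ B (E (k+1)) (k+1+D+1) (cup (k+1) τ x) := by
  induction k with
  | zero =>
    obtain ⟨τ, t1, t2, t3⟩ := F.tau0
    obtain ⟨τ', s1, s2, s3⟩ := F.tauS 0 t3
    refine ⟨τ', s3, ?_⟩
    rintro ⟨η, hη⟩
    have hx1 : Z (E 1) (D+1) x := hx.mono (F.mE hk)
    obtain ⟨z1, z2⟩ := F.tau_split 0 D s1 s2 hx1 hη
    rw [zero_add D] at z1 z2
    obtain ⟨w, hw, hwe⟩ := F.spm 1 hK (D+1) η (z1.mono ((F.zm 0).trans (F.ssm 0)))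
    have hw1 : Z (E 1) (D+1) w := hw.mono (F.ssp 1)
    have b0 : B (Em 0) (D+1) (η + w) := by
      refine B_zero.congr ?_
      filter_upwards [hwe] with l e
      simp only [Pi.add_apply, Pi.zero_apply] at e ⊢
      rw [e, CharTwo.add_self_eq_zero]
    have b1 := F.imm 0 hk _ _ (z1.add (hw1.mono (F.sm _))) b0
    have b2 : B (Em 0) (D+1) (cup 0 τ x + (η + w)) := by
      refine b0.congr ?_
      have e : cup 0 τ x =ᶠ[N (Em 0) (0+D+1)] cup 0 0 x := cup_congr t2 EventuallyEq.rfl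
      rw [zero_add D] at e
      filter_upwards [e] with l e
      rw [Pi.add_apply (cup 0 τ x), e]; simp [cup]
    have b3 := F.ipm 0 hk _ _ (by
      have := z2.add (hw1.mono (F.sp _))
      rwa [add_assoc] at this) b2
    have b4 := (b3.mono ((F.zp 0).trans (F.ssp 0))).of_add (b1.mono ((F.zp 0).trans (F.ssm 0)))
    apply hnB
    refine b4.congr ?_
    have e : cup 0 τ x =ᶠ[N (Ep 0) (0+D+1)] cup 0 (fun _ => 1) x := cup_congr t1 EventuallyEq.rfl
    rw [zero_add D] at e
    filter_upwards [e] with l e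
    rw [e]; simp [cup]
  | succ k ih =>
    obtain ⟨τ, t1, t2⟩ := ih (by omega)
    obtain ⟨τ', s1, s2, s3⟩ := F.tauS (k+1) t1
    refine ⟨τ', s3, ?_⟩
    rintro ⟨η, hη⟩
    obtain ⟨z1, z2⟩ := F.tau_split (k+1) D s1 s2 (hx.mono (F.mE hk)) hη
    have b1 := Acyc.of_inj (F.imm (k+1) hk (k+1+D+1)) ((F.zm (k+1)).trans (F.ssm (k+1)))
      (hm _ (by omega)) _ z1
    have b2 := Acyc.of_inj (F.ipp (k+1) hk (k+1+D+1)) ((F.zp (k+1)).trans (F.ssp (k+1)))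
      (hp _ (by omega)) _ z2
    exact t2 ((b2.mono (F.ssp _)).of_add (b1.mono (F.ssm _)))

lemma circle (F : Filt E Ep Em K) (hK : 1 ≤ K) {a b : X} (ha : Ep 0 = {a}) (hb : Em 0 = {b}) :
    ∃ τ, Z (E 1) 2 τ ∧ ¬ B (E 1) 2 τ := by
  obtain ⟨τ, t1, t2, t3⟩ := F.tau0
  obtain ⟨τ', s1, s2, s3⟩ := F.tauS 0 t3
  refine ⟨τ', s3, ?_⟩
  rintro ⟨η, hη⟩
  have h1 := Filter.Eventually.filter_mono (N_mono (F.sm 1) _) hη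
  have h2 := Filter.Eventually.filter_mono (N_mono (F.sp 1) _) hη
  have z1 : Z (Em 1) 1 η := by
    unfold Z
    filter_upwards [h1, s2] with l e1 e2
    rw [← e1, e2]
  have z2 : Z (Ep 1) 1 (τ + η) := by
    unfold Z; rw [d_add]
    filter_upwards [h2, s1] with l e1 e2
    rw [Pi.add_apply, ← e1, e2]; exact CharTwo.add_self_eq_zero _
  obtain ⟨u, hu⟩ := Acyc.of_inj (F.imm 0 hK 1) ((F.zm 0).trans (F.ssm 0))
      (by rw [hb]; exact acyc_singleton b 1) _ z1
  obtain ⟨v, hv⟩ := Acyc.of_inj (F.ipp 0 hK 1) ((F.zp 0).trans (F.ssp 0))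
      (by rw [ha]; exact acyc_singleton a 1) _ z2
  have ev : ∀ (A : Set X) (c : X) (p : List X → Prop), c ∈ A → (∀ᶠ l in N A 1, p l) → p [c] := by
    rintro A c p hc ⟨ε, he, h⟩
    exact h [c] rfl (fun _ => ⟨c, hc, by simpa using he⟩)
  have haE : a ∈ Ep 0 := by simp [ha]
  have hbE : b ∈ Em 0 := by simp [hb]
  have q1 := ev _ a _ ((F.zp 0).trans (F.ssm 0) haE) hu
  have q2 := ev _ b _ ((F.zm 0).trans (F.ssm 0) hbE) hu
  have q3 := ev _ a _ ((F.zp 0).trans (F.ssp 0) haE) hv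
  have q4 := ev _ b _ ((F.zm 0).trans (F.ssp 0) hbE) hv
  have q5 := ev _ a _ haE t1
  have q6 := ev _ b _ hbE t2
  simp only [Pi.add_apply, d_cons, d_nil, add_zero, Pi.zero_apply] at q1 q2 q3 q4 q5 q6
  rw [q1, q5] at q3
  rw [q2, q6, ← q3] at q4
  revert q4
  generalize u [] = c
  revert c; decide

end Filt
end CT
end

section
open Filter Topology Matrix

namespace CT

attribute [local instance] Matrix.normedAddCommGroup

/-! ### Unitary matrices -/

def UG (n : ℕ) : Set (Matrix (Fin n) (Fin n) ℂ) := {M | Mᴴ * M = 1}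

lemma isCompact_UG (n : ℕ) : IsCompact (UG n) := by
  have : ProperSpace (Matrix (Fin n) (Fin n) ℂ) :=
    inferInstanceAs (ProperSpace (Fin n → Fin n → ℂ))
  apply Metric.isCompact_of_isClosed_isBounded
  · exact isClosed_eq (by fun_prop) continuous_const
  · rw [isBounded_iff_forall_norm_le]
    refine ⟨1, fun M hM => ?_⟩
    rw [Matrix.norm_le_iff zero_le_one]
    intro i j
    exact entry_norm_bound_of_unitary (Matrix.mem_unitaryGroup_iff'.2 hM) i j

section refl
variable {n : ℕ}

def nsq (g : Fin n → ℂ) : ℝ := ∑ j, Complex.normSq (g j)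

lemma star_dot_self (g : Fin n → ℂ) : star g ⬝ᵥ g = (nsq g : ℂ) := by
  simp [nsq, dotProduct, Complex.normSq_eq_conj_mul_self]

lemma nsq_ne {g : Fin n → ℂ} (h : g ≠ 0) : 0 < nsq g := by
  obtain ⟨j, hj⟩ := Function.ne_iff.1 h
  exact Finset.sum_pos' (fun i _ => Complex.normSq_nonneg _) ⟨j, by simp, Complex.normSq_pos.2 hj⟩

noncomputable def R (w v : Fin n → ℂ) : Matrix (Fin n) (Fin n) ℂ :=
  1 + (star v ⬝ᵥ w - 1)⁻¹ • vecMulVec (v - w) (star (v - w))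

lemma R_mul {w v : Fin n → ℂ} (hw : star w ⬝ᵥ w = 1) (h : star v ⬝ᵥ w ≠ 1) : R w v *ᵥ w = v := by
  have h' : star v ⬝ᵥ w - 1 ≠ 0 := sub_ne_zero.2 h
  rw [R, add_mulVec, one_mulVec, smul_mulVec, vecMulVec_mulVec, star_sub, sub_dotProduct, hw]
  ext i
  simp
  field_simp
  ring

lemma R_unit {w v : Fin n → ℂ} (hw : star w ⬝ᵥ w = 1) (hv : star v ⬝ᵥ v = 1) (h : star v ⬝ᵥ w ≠ 1) :
    R w v ∈ UG n := by
  have h1 : star v ⬝ᵥ w - 1 ≠ 0 := sub_ne_zero.2 h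
  have h2 : star w ⬝ᵥ v = star (star v ⬝ᵥ w) := by
    simp [dotProduct, mul_comm]
  have h3 : star (star v ⬝ᵥ w) - 1 ≠ 0 := by
    intro h0
    apply h1
    have := congrArg star h0
    simpa using this
  have hn : star (v - w) ⬝ᵥ (v - w) = 2 - star v ⬝ᵥ w - star (star v ⬝ᵥ w) := by
    rw [star_sub, sub_dotProduct, dotProduct_sub, dotProduct_sub, hw, hv, h2]; ring
  have hP : (vecMulVec (v - w) (star (v - w)))ᴴ = vecMulVec (v - w) (star (v - w)) := by
    rw [conjTranspose_vecMulVec]; simp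
  show (R w v)ᴴ * R w v = 1
  rw [R, conjTranspose_add, conjTranspose_one, conjTranspose_smul, hP, add_mul, mul_add, mul_add,
    one_mul, one_mul, mul_one, smul_mul_smul_comm, vecMulVec_mul_vecMulVec, hn]
  have : (vecMulVec ((v - w)) ((2 - star v ⬝ᵥ w - star (star v ⬝ᵥ w)) • star (v - w))) =
      (2 - star v ⬝ᵥ w - star (star v ⬝ᵥ w)) • vecMulVec (v - w) (star (v - w)) := by
    rw [vecMulVec_smul]
  rw [this, add_assoc, smul_smul, ← add_smul, ← add_smul]
  convert add_zero _ using 2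
  convert zero_smul ℂ _ using 2
  generalize star v ⬝ᵥ w = a at *
  rw [star_inv₀, star_sub, star_one]
  generalize star a = b at *
  field_simp
  ring

end refl

end CT
end

section
open Filter Topology Matrix

namespace CT

attribute [local instance] Matrix.normedAddCommGroup

section coords
variable {n : ℕ}

noncomputable def e (k : ℕ) : Fin (n+1) → ℂ :=
  fun j => if j.val = k / 2 then (if k % 2 = 0 then 1 else Complex.I) else 0

noncomputable def co (k : ℕ) (v : Fin (n+1) → ℂ) : ℝ :=
  if h : k / 2 < n + 1 then
    (if k % 2 = 0 then (v ⟨k/2, h⟩).re else (v ⟨k/2, h⟩).im) else 0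

lemma co_add (k : ℕ) (v w : Fin (n+1) → ℂ) : co k (v + w) = co k v + co k w := by
  unfold co; split_ifs <;> simp

lemma co_smul (k : ℕ) (c : ℝ) (v : Fin (n+1) → ℂ) : co k (c • v) = c * co k v := by
  unfold co; split_ifs <;> simp

@[fun_prop] lemma continuous_co (k : ℕ) : Continuous (co k : (Fin (n+1) → ℂ) → ℝ) := by
  unfold co; split_ifs <;> fun_prop

lemma co_e (k : ℕ) (hk : k ≤ 2*n+1) : co k (e k : Fin (n+1) → ℂ) = 1 := by
  have : k / 2 < n + 1 := by omega
  unfold co e; simp [this]; split_ifs <;> simp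

lemma co_e_ne (k i : ℕ) (h : i ≠ k) : co i (e k : Fin (n+1) → ℂ) = 0 := by
  unfold co e; split_ifs <;> simp_all <;> omega

lemma star_e_dot (k : ℕ) (v : Fin (n+1) → ℂ) : (star v ⬝ᵥ e k).re = co k v := by
  unfold co
  split_ifs with h h2
  · have : star v ⬝ᵥ e k = star (v ⟨k/2, h⟩) := by
      rw [dotProduct, Finset.sum_eq_single ⟨k/2, h⟩]
      · simp [e, h2]
      · intro b _ hb
        have : b.val ≠ k / 2 := fun hh => hb (Fin.ext hh)
        simp [e, this]
      · simp
    simp [this]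
  · have : star v ⬝ᵥ e k = star (v ⟨k/2, h⟩) * Complex.I := by
      rw [dotProduct, Finset.sum_eq_single ⟨k/2, h⟩]
      · simp [e, h2]
      · intro b _ hb
        have : b.val ≠ k / 2 := fun hh => hb (Fin.ext hh)
        simp [e, this]
      · simp
    simp [this]
  · have : (e k : Fin (n+1) → ℂ) = 0 := by
      funext j
      have : j.val ≠ k / 2 := by have := j.2; omega
      simp [e, this]
    simp [this]

lemma e_unit (k : ℕ) (hk : k ≤ 2*n+1) : star (e k) ⬝ᵥ (e k : Fin (n+1) → ℂ) = 1 := by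
  have h : k / 2 < n + 1 := by omega
  rw [dotProduct, Finset.sum_eq_single ⟨k/2, h⟩]
  · simp only [Pi.star_apply, e, if_true]; split_ifs <;> simp
  · intro b _ hb
    have : b.val ≠ k / 2 := fun hh => hb (Fin.ext hh)
    simp [e, this]
  · simp

lemma co_even (j : Fin (n+1)) (v : Fin (n+1) → ℂ) : co (2*j) v = (v j).re := by
  unfold co
  have h : (2 * j.val) / 2 = j.val := by omega
  have hj : ¬ n < j.val := by have := j.2; omega
  simp [h, hj]

lemma co_odd (j : Fin (n+1)) (v : Fin (n+1) → ℂ) : co (2*j+1) v = (v j).im := by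
  unfold co
  have h : (2 * j.val + 1) / 2 = j.val := by omega
  have h2 : (2 * j.val + 1) % 2 = 1 := by omega
  have hj : ¬ n < j.val := by have := j.2; omega
  simp [h, h2, hj]

lemma ext_co {v w : Fin (n+1) → ℂ} (h : ∀ i, co i v = co i w) : v = w := by
  funext j
  apply Complex.ext
  · rw [← co_even, ← co_even, h]
  · rw [← co_odd, ← co_odd, h]

lemma co_zero_of_gt (k : ℕ) (hk : 2*n+1 < k) (v : Fin (n+1) → ℂ) : co k v = 0 := by
  unfold co; rw [dif_neg (by omega)]

/-! the path on the sphere -/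
noncomputable def gp (σ s : ℝ) (k : ℕ) (t : ℝ) (v : Fin (n+1) → ℂ) : Fin (n+1) → ℂ :=
  (1 - t) • v + (t * (1 - t) * σ) • e k + (t * s) • e 0

noncomputable def nm (g : Fin (n+1) → ℂ) : Fin (n+1) → ℂ := (Real.sqrt (nsq g))⁻¹ • g

lemma nm_unit {g : Fin (n+1) → ℂ} (h : g ≠ 0) : star (nm g) ⬝ᵥ nm g = 1 := by
  have h0 := nsq_ne h
  have h1 := Real.sq_sqrt h0.le
  have h2 : Real.sqrt (nsq g) ≠ 0 := (Real.sqrt_pos.2 h0).ne'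
  rw [nm, star_smul, smul_dotProduct, dotProduct_smul, star_dot_self, star_trivial,
    Complex.real_smul, Complex.real_smul]
  norm_cast
  field_simp
  exact h1.symm

lemma nm_of_unit {g : Fin (n+1) → ℂ} (h : star g ⬝ᵥ g = 1) : nm g = g := by
  rw [star_dot_self] at h
  have : nsq g = 1 := by exact_mod_cast h
  simp [nm, this]

lemma co_nm (i : ℕ) (g : Fin (n+1) → ℂ) : co i (nm g) = (Real.sqrt (nsq g))⁻¹ * co i g := co_smul _ _ _

lemma co_gp (σ s : ℝ) (k i : ℕ) (t : ℝ) (v : Fin (n+1) → ℂ) : co i (gp σ s k t v) =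
    (1 - t) * co i v + t * (1 - t) * σ * co i (e k : Fin (n+1) → ℂ) +
      t * s * co i (e 0 : Fin (n+1) → ℂ) := by
  rw [gp, co_add, co_add, co_smul, co_smul, co_smul]

lemma sq_one {s : ℝ} (hs : s * s = 1) : s ≠ 0 := by rintro rfl; simp at hs

lemma gp_ne {σ s : ℝ} (hσ : σ * σ = 1) (hs : s * s = 1) {k : ℕ} (hk : 1 ≤ k) (hk' : k ≤ 2*n+1)
    {t : ℝ} (ht : t ∈ Set.Icc (0:ℝ) 1) {v : Fin (n+1) → ℂ} (hv : star v ⬝ᵥ v = 1)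
    (hc : 0 ≤ σ * co k v) : gp σ s k t v ≠ 0 := by
  intro h
  rcases eq_or_lt_of_le ht.1 with rfl | h0
  · have : v = 0 := by simpa [gp] using h
    simp [this] at hv
  rcases eq_or_lt_of_le ht.2 with rfl | h1
  · have : (e 0 : Fin (n+1) → ℂ) = 0 := by simpa [gp, sq_one hs] using h
    have h2 := co_e (n := n) 0 (by omega)
    rw [this] at h2
    simp [co] at h2
  · have := co_gp σ s k k t v
    rw [h, co_e k hk', co_e_ne 0 k (by omega)] at this
    have h0' : co k (0 : Fin (n+1) → ℂ) = 0 := by simp [co]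
    rw [h0'] at this
    have h3 : (1 - t) * (σ * co k v + t) = 0 := by
      linear_combination (-σ) * this - t * (1-t) * hσ
    rcases mul_eq_zero.1 h3 with h3 | h3 <;> linarith

noncomputable def cc (σ s : ℝ) (k : ℕ) (t : ℝ) (v : Fin (n+1) → ℂ) : Fin (n+1) → ℂ :=
  nm (gp σ s k t v)

def col (M : Matrix (Fin (n+1)) (Fin (n+1)) ℂ) : Fin (n+1) → ℂ := fun i => M i 0

lemma col_mul (A M : Matrix (Fin (n+1)) (Fin (n+1)) ℂ) : col (A * M) = A *ᵥ col M := by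
  funext i; simp [col, Matrix.mul_apply, mulVec, dotProduct]

lemma col_unit {M : Matrix (Fin (n+1)) (Fin (n+1)) ℂ} (h : M ∈ UG (n+1)) :
    star (col M) ⬝ᵥ col M = 1 := by
  have := congrFun (congrFun h 0) 0
  simpa [Matrix.mul_apply, col, dotProduct] using this

@[fun_prop] lemma continuous_col : Continuous (col : Matrix (Fin (n+1)) (Fin (n+1)) ℂ → _) := by
  unfold col; fun_prop

def EE (n k : ℕ) : Set (Matrix (Fin (n+1)) (Fin (n+1)) ℂ) :=
  {M | M ∈ UG (n+1) ∧ ∀ i, k < i → co i (col M) = 0}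

def SS (n : ℕ) (σ : ℝ) (k : ℕ) : Set (Matrix (Fin (n+1)) (Fin (n+1)) ℂ) :=
  {M | M ∈ EE n k ∧ 0 ≤ σ * co k (col M)}

lemma isCompact_SS (n : ℕ) (σ : ℝ) (k : ℕ) : IsCompact (SS n σ k) := by
  have : SS n σ k = UG (n+1) ∩ ((⋂ i, ⋂ (_ : k < i), {M | co i (col M) = 0}) ∩
      {M | 0 ≤ σ * co k (col M)}) := by
    ext M; simp [SS, EE]; tauto
  rw [this]
  apply (isCompact_UG _).inter_right
  apply IsClosed.inter
  · exact isClosed_iInter fun i => isClosed_iInter fun _ => isClosed_eq (by fun_prop) (by fun_prop)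
  · exact isClosed_le (by fun_prop) (by fun_prop)

lemma SS_zero {s : ℝ} (hs : s * s = 1) (M : Matrix (Fin (n+1)) (Fin (n+1)) ℂ) :
    M ∈ SS n s 0 ↔ M ∈ UG (n+1) ∧ col M = s • e 0 := by
  constructor
  · rintro ⟨⟨hM, hi⟩, h0⟩
    refine ⟨hM, ?_⟩
    have h1 : col M = co 0 (col M) • e 0 := by
      apply ext_co
      intro i
      rw [co_smul]
      by_cases hi0 : i = 0
      · subst hi0; rw [co_e _ (by omega), mul_one]
      · rw [co_e_ne 0 i hi0, hi i (by omega), mul_zero]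
    have h2 := col_unit hM
    rw [h1, star_smul, smul_dotProduct, dotProduct_smul, e_unit 0 (by omega), star_trivial,
      Complex.real_smul, Complex.real_smul] at h2
    have h3 : co 0 (col M) * co 0 (col M) = 1 := by
      have : ((co 0 (col M) * co 0 (col M) : ℝ) : ℂ) = 1 := by push_cast; rw [← h2]; ring
      exact_mod_cast this
    have h4 : co 0 (col M) = s := by
      have : (co 0 (col M) - s) * (co 0 (col M) + s) = 0 := by linear_combination h3 - hs
      rcases mul_eq_zero.1 this with h | h
      · linarith
      · have h5 : co 0 (col M) = -s := by linarith
        rw [h5] at h0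
        nlinarith
    rw [h1, h4]
  · rintro ⟨hM, h⟩
    refine ⟨⟨hM, fun i hi => ?_⟩, ?_⟩
    · rw [h, co_smul, co_e_ne 0 i (by omega), mul_zero]
    · rw [h, co_smul, co_e 0 (by omega), mul_one, hs]; exact zero_le_one

/-! the deformation -/
noncomputable def ww (σ : ℝ) (k : ℕ) : Fin (n+1) → ℂ := (-σ) • e k

noncomputable def HH (σ s : ℝ) (k : ℕ) (p : ℝ × Matrix (Fin (n+1)) (Fin (n+1)) ℂ) :
    Matrix (Fin (n+1)) (Fin (n+1)) ℂ :=
  R (ww σ k) (cc σ s k p.1 (col p.2)) * ((R (ww σ k) (col p.2))ᴴ * p.2)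

lemma ww_unit {σ : ℝ} (hσ : σ * σ = 1) {k : ℕ} (hk' : k ≤ 2*n+1) :
    star (ww σ k) ⬝ᵥ (ww σ k : Fin (n+1) → ℂ) = 1 := by
  rw [ww, star_smul, smul_dotProduct, dotProduct_smul, e_unit k hk', star_trivial,
      Complex.real_smul, Complex.real_smul]
  push_cast
  have : (σ:ℂ) * σ = 1 := by exact_mod_cast hσ
  linear_combination this

lemma dot_ww_ne {σ : ℝ} {k : ℕ} {v : Fin (n+1) → ℂ} (h : 0 ≤ σ * co k v) :
    star v ⬝ᵥ ww σ k ≠ 1 := by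
  intro h1
  have := congrArg Complex.re h1
  rw [ww, dotProduct_smul, Complex.real_smul, Complex.re_ofReal_mul, star_e_dot,
    Complex.one_re] at this
  linarith

lemma UG_mul {m : ℕ} {A C : Matrix (Fin m) (Fin m) ℂ} (hA : A ∈ UG m) (hC : C ∈ UG m) :
    A * C ∈ UG m := by
  show (A * C)ᴴ * (A * C) = 1
  have h1 : Aᴴ * A = 1 := hA
  have h2 : Cᴴ * C = 1 := hC
  rw [conjTranspose_mul, mul_assoc, ← mul_assoc Aᴴ, h1, one_mul, h2]

lemma UG_right {m : ℕ} {A : Matrix (Fin m) (Fin m) ℂ} (hA : A ∈ UG m) : A * Aᴴ = 1 :=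
  mul_eq_one_comm.1 hA

lemma UG_star {m : ℕ} {A : Matrix (Fin m) (Fin m) ℂ} (hA : A ∈ UG m) : Aᴴ ∈ UG m := by
  show Aᴴᴴ * Aᴴ = 1
  rw [conjTranspose_conjTranspose]; exact UG_right hA

section
variable {σ s : ℝ} (hσ : σ * σ = 1) (hs : s * s = 1) {k : ℕ} (hk : 1 ≤ k) (hk' : k ≤ 2*n+1)
include hσ hs hk hk'

lemma cc_props {t : ℝ} (ht : t ∈ Set.Icc (0:ℝ) 1) {v : Fin (n+1) → ℂ} (hv : star v ⬝ᵥ v = 1)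
    (hc : 0 ≤ σ * co k v) : star (cc σ s k t v) ⬝ᵥ (cc σ s k t v) = 1 ∧ 0 ≤ σ * co k (cc σ s k t v) := by
  refine ⟨nm_unit (gp_ne hσ hs hk hk' ht hv hc), ?_⟩
  rw [cc, co_nm, co_gp, co_e k hk', co_e_ne 0 k (by omega)]
  have : 0 ≤ (√(nsq (gp σ s k t v)))⁻¹ := by positivity
  have h2 : 0 ≤ (1 - t) * (σ * co k v) + t * (1 - t) := by
    have := ht.1; have := sub_nonneg.2 ht.2
    positivity
  have := mul_nonneg this h2
  refine this.trans_eq ?_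
  linear_combination (- (√(nsq (gp σ s k t v)))⁻¹ * t * (1-t)) * hσ

lemma HH_unit {t : ℝ} (ht : t ∈ Set.Icc (0:ℝ) 1) {M : Matrix (Fin (n+1)) (Fin (n+1)) ℂ}
    (hM : M ∈ SS n σ k) : HH σ s k (t, M) ∈ UG (n+1) := by
  have hw := ww_unit (n := n) hσ hk'
  obtain ⟨h1, h2⟩ := cc_props hσ hs hk hk' ht (col_unit hM.1.1) hM.2
  exact UG_mul (R_unit hw h1 (dot_ww_ne h2)) (UG_mul (UG_star (R_unit hw (col_unit hM.1.1)
    (dot_ww_ne hM.2))) hM.1.1)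

lemma HH_col {t : ℝ} (ht : t ∈ Set.Icc (0:ℝ) 1) {M : Matrix (Fin (n+1)) (Fin (n+1)) ℂ}
    (hM : M ∈ SS n σ k) : col (HH σ s k (t, M)) = cc σ s k t (col M) := by
  have hw := ww_unit (n := n) hσ hk'
  obtain ⟨h1, h2⟩ := cc_props hσ hs hk hk' ht (col_unit hM.1.1) hM.2
  have h3 : (R (ww σ k) (col M))ᴴ *ᵥ col M = ww σ k := by
    have hu : (R (ww σ k) (col M))ᴴ * R (ww σ k) (col M) = 1 :=
      R_unit hw (col_unit hM.1.1) (dot_ww_ne hM.2)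
    have e1 := R_mul hw (dot_ww_ne hM.2)
    calc (R (ww σ k) (col M))ᴴ *ᵥ col M 
        = (R (ww σ k) (col M))ᴴ *ᵥ (R (ww σ k) (col M) *ᵥ ww σ k) := by rw [e1]
      _ = ww σ k := by rw [mulVec_mulVec, hu, one_mulVec]
  rw [HH, col_mul, col_mul]
  simp only
  rw [h3, R_mul hw (dot_ww_ne h2)]

lemma HH_of_eq {t : ℝ} {M : Matrix (Fin (n+1)) (Fin (n+1)) ℂ}
    (hM : M ∈ SS n σ k) (h : cc σ s k t (col M) = col M) : HH σ s k (t, M) = M := by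
  have hw := ww_unit (n := n) hσ hk'
  rw [HH]
  simp only
  rw [h, ← mul_assoc, UG_right (R_unit hw (col_unit hM.1.1) (dot_ww_ne hM.2)), one_mul]

lemma HH_mem {t : ℝ} (ht : t ∈ Set.Icc (0:ℝ) 1) {M : Matrix (Fin (n+1)) (Fin (n+1)) ℂ}
    (hM : M ∈ SS n σ k) : HH σ s k (t, M) ∈ SS n σ k := by
  refine ⟨⟨HH_unit hσ hs hk hk' ht hM, fun i hi => ?_⟩, ?_⟩
  · rw [HH_col hσ hs hk hk' ht hM, cc, co_nm, co_gp, hM.1.2 i hi, co_e_ne k i (by omega),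
      co_e_ne 0 i (by omega)]
    simp
  · rw [HH_col hσ hs hk hk' ht hM]
    exact (cc_props hσ hs hk hk' ht (col_unit hM.1.1) hM.2).2

lemma cc_one {v : Fin (n+1) → ℂ} : cc σ s k 1 v = s • e 0 := by
  have : gp σ s k 1 v = s • e 0 := by simp [gp]
  rw [cc, this, nm_of_unit]
  rw [star_smul, smul_dotProduct, dotProduct_smul, e_unit 0 (by omega), star_trivial,
      Complex.real_smul, Complex.real_smul]
  have : (s:ℂ) * s = 1 := by exact_mod_cast hs
  linear_combination this

lemma HH_cont : ContinuousOn (HH (n := n) σ s k) (Set.Icc 0 1 ×ˢ SS n σ k) := by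
  have hR : ContinuousOn (R (ww σ k : Fin (n+1) → ℂ)) {v | 0 ≤ σ * co k v} := by
    unfold R
    have i1 : ContinuousOn (fun v : Fin (n+1) → ℂ => (star v ⬝ᵥ ww σ k - 1)⁻¹)
        {v | 0 ≤ σ * co k v} := by
      apply ContinuousOn.inv₀
      · apply Continuous.continuousOn
        apply Continuous.sub _ continuous_const
        exact Continuous.dotProduct (by fun_prop) (by fun_prop)
      · intro v hv; exact sub_ne_zero.2 (dot_ww_ne hv)
    have i2 : ContinuousOn (fun v : Fin (n+1) → ℂ => vecMulVec (v - ww σ k) (star (v - ww σ k)))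
        {v | 0 ≤ σ * co k v} := by
      apply Continuous.continuousOn
      exact Continuous.matrix_vecMulVec (by fun_prop) (by fun_prop)
    exact ContinuousOn.add continuousOn_const (ContinuousOn.smul i1 i2)
  have hg : Continuous (fun p : ℝ × Matrix (Fin (n+1)) (Fin (n+1)) ℂ => gp σ s k p.1 (col p.2)) := by
    unfold gp; fun_prop
  have hc : ContinuousOn (fun p : ℝ × Matrix (Fin (n+1)) (Fin (n+1)) ℂ => cc σ s k p.1 (col p.2))
      (Set.Icc 0 1 ×ˢ SS n σ k) := by
    unfold cc nm
    have i1 : ContinuousOn (fun p : ℝ × Matrix (Fin (n+1)) (Fin (n+1)) ℂ => 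
        (√(nsq (gp σ s k p.1 (col p.2))))⁻¹) (Set.Icc 0 1 ×ˢ SS n σ k) := by
      apply ContinuousOn.inv₀
      · apply Continuous.continuousOn
        apply Real.continuous_sqrt.comp
        unfold nsq
        refine continuous_finsetSum _ fun j _ => Complex.continuous_normSq.comp ?_
        exact (continuous_apply j).comp hg
      · rintro ⟨t, M⟩ ⟨ht, hM⟩
        exact (Real.sqrt_pos.2 (nsq_ne (gp_ne hσ hs hk hk' ht (col_unit hM.1.1) hM.2))).ne'
    exact ContinuousOn.smul i1 hg.continuousOn
  unfold HH
  refine ContinuousOn.mul (hR.comp hc ?_) (ContinuousOn.mul ?_ continuousOn_snd)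
  · rintro ⟨t, M⟩ ⟨ht, hM⟩
    exact (cc_props hσ hs hk hk' ht (col_unit hM.1.1) hM.2).2
  · have : ContinuousOn (fun p : ℝ × Matrix (Fin (n+1)) (Fin (n+1)) ℂ => R (ww σ k) (col p.2))
      (Set.Icc 0 1 ×ˢ SS n σ k) := by
      refine hR.comp (f := fun p : ℝ × Matrix (Fin (n+1)) (Fin (n+1)) ℂ => col p.2)
        (by fun_prop) ?_
      rintro ⟨t, M⟩ ⟨ht, hM⟩
      exact hM.2
    exact (continuous_id.matrix_conjTranspose).comp_continuousOn this

lemma SS_sub : SS n s 0 ⊆ SS n σ k := by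
  intro M hM
  have h := (SS_zero hs M).1 hM
  refine ⟨⟨h.1, fun i hi => ?_⟩, ?_⟩
  · rw [h.2, co_smul, co_e_ne 0 i (by omega), mul_zero]
  · rw [h.2, co_smul, co_e_ne 0 k (by omega), mul_zero, mul_zero]

lemma HH_one {M : Matrix (Fin (n+1)) (Fin (n+1)) ℂ} (hM : M ∈ SS n σ k) :
    HH σ s k (1, M) ∈ SS n s 0 := by
  rw [SS_zero hs, HH_col hσ hs hk hk' (by simp) hM]
  exact ⟨HH_unit hσ hs hk hk' (by simp) hM, cc_one hσ hs hk hk'⟩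

lemma SS_inj (m : ℕ) : Inj (SS n σ k) (SS n s 0) m := by
  refine inj_of (isCompact_SS n σ k) (HH_cont hσ hs hk hk') 
    (fun t ht M hM => HH_mem hσ hs hk hk' ht hM) (fun M hM => ?_)
    (fun M hM => HH_one hσ hs hk hk' hM) m
  apply HH_of_eq hσ hs hk hk' hM
  rw [cc]
  have : gp σ s k 0 (col M) = col M := by simp [gp]
  rw [this, nm_of_unit (col_unit hM.1.1)]

lemma SS_surj (m : ℕ) : Surj (SS n σ k) (SS n s 0) m := by
  refine surj_of (r := fun M => HH σ s k (1, M)) (isCompact_SS n σ k) (SS_sub hσ hs hk hk') ?_ 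
    (fun M hM => HH_one hσ hs hk hk' hM) (fun M hM => ?_) m
  · exact (HH_cont hσ hs hk hk').comp (by fun_prop) (fun x hx => ⟨by simp, hx⟩)
  · apply HH_of_eq hσ hs hk hk' (SS_sub hσ hs hk hk' hM)
    rw [cc_one hσ hs hk hk', ((SS_zero hs M).1 hM).2]

end

lemma filtU (n : ℕ) : Filt (EE n) (SS n 1) (SS n (-1)) (2*n+1) where
  cp k := isCompact_SS _ _ _
  cm k := isCompact_SS _ _ _
  un k := by
    ext M
    simp only [SS, Set.mem_union, Set.mem_ofPred_eq, ← and_or_left]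
    refine ⟨fun h => ⟨h, ?_⟩, fun h => h.1⟩
    rcases le_total 0 (co k (col M)) with h | h
    · left; linarith
    · right; linarith
  int k := by
    ext M
    simp only [SS, EE, Set.mem_inter_iff, Set.mem_ofPred_eq]
    constructor
    · rintro ⟨⟨⟨h1, h2⟩, h3⟩, ⟨_, h4⟩⟩
      refine ⟨h1, fun i hi => ?_⟩
      rcases eq_or_lt_of_le (Nat.succ_le_of_lt hi) with h | h
      · rw [← h]; simp only [Nat.succ_eq_add_one]; linarith
      · exact h2 i h
    · rintro ⟨h1, h2⟩
      have := h2 (k+1) (by omega)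
      refine ⟨⟨⟨h1, fun i hi => h2 i (by omega)⟩, ?_⟩, ⟨h1, fun i hi => h2 i (by omega)⟩, ?_⟩ <;>
        simp [this]
  int0 := by
    ext M
    rw [Set.mem_inter_iff, SS_zero (by norm_num), SS_zero (by norm_num)]
    simp only [Set.mem_empty_iff_false, iff_false]
    rintro ⟨⟨_, h1⟩, ⟨_, h2⟩⟩
    have := congrArg (co 0) (h1.symm.trans h2)
    rw [co_smul, co_smul, co_e 0 (by omega)] at this
    norm_num at this
  ipp k hk m := SS_inj (by norm_num) (by norm_num) (by omega) hk m
  ipm k hk m := SS_inj (by norm_num) (by norm_num) (by omega) hk m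
  imp k hk m := SS_inj (by norm_num) (by norm_num) (by omega) hk m
  imm k hk m := SS_inj (by norm_num) (by norm_num) (by omega) hk m
  spp k hk m := SS_surj (by norm_num) (by norm_num) (by omega) hk m
  spm k hk m := SS_surj (by norm_num) (by norm_num) (by omega) hk m
  smp k hk m := SS_surj (by norm_num) (by norm_num) (by omega) hk m

lemma EE_top (n : ℕ) : EE n (2*n+1) = UG (n+1) := by
  ext M
  exact ⟨fun h => h.1, fun h => ⟨h, fun i hi => co_zero_of_gt i hi _⟩⟩

end coords

end CT
end

section
open Filter Topology Matrix

namespace CT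

attribute [local instance] Matrix.normedAddCommGroup

lemma near2_of_continuous {X X' : Type*} [MetricSpace X] [MetricSpace X'] {A : Set X} {A' : Set X'}
    (hA : IsCompact A) {f g : X → X'} (hf : Continuous f) (hg : Continuous g)
    (hm : ∀ a ∈ A, f a ∈ A') (he : ∀ a ∈ A, f a = g a) : Near2 A A' f g := by
  intro ε hε
  have h1 := hA.uniformContinuousAt_of_continuousAt f (fun a _ => hf.continuousAt)
    (Metric.dist_mem_uniformity hε)
  have h2 := hA.uniformContinuousAt_of_continuousAt g (fun a _ => hg.continuousAt)
    (Metric.dist_mem_uniformity hε)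
  obtain ⟨δ, hd, h⟩ := Metric.mem_uniformity_dist.1 (Filter.inter_mem h1 h2)
  refine ⟨δ, hd, fun a ha => ⟨f a, hm a ha, fun x hx => ?_⟩⟩
  have h3 : (a, x) ∈ _ := h (by rwa [dist_comm])
  have h4 := h3.1 ha
  have h5 := h3.2 ha
  simp only [Set.mem_ofPred_eq] at h4 h5
  rw [dist_comm (f x), dist_comm (g x), he a ha]
  exact ⟨by rwa [← he a ha], h5⟩

section blocks
variable {n : ℕ}

def kap (M : Matrix (Fin (n+1)) (Fin (n+1)) ℂ) : Matrix (Fin n) (Fin n) ℂ :=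
  fun i j => M i.succ j.succ

def iot (M : Matrix (Fin n) (Fin n) ℂ) : Matrix (Fin (n+1)) (Fin (n+1)) ℂ :=
  fun i j => Fin.cases (motive := fun _ => ℂ) (Fin.cases (motive := fun _ => ℂ) 1 (fun _ => 0) j)
    (fun i' => Fin.cases (motive := fun _ => ℂ) 0 (fun j' => M i' j') j) i

lemma kap_iot (M : Matrix (Fin n) (Fin n) ℂ) : kap (iot M) = M := by
  ext i j; simp [kap, iot]

lemma continuous_kap : Continuous (kap (n := n)) := by
  unfold kap; fun_prop

lemma continuous_iot : Continuous (iot (n := n)) := by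
  refine continuous_matrix fun i j => ?_
  cases i using Fin.cases with
  | zero => cases j using Fin.cases <;> simp [iot] <;> fun_prop
  | succ i => cases j using Fin.cases <;> simp [iot] <;> fun_prop

lemma col_e {M : Matrix (Fin (n+1)) (Fin (n+1)) ℂ} (h : M ∈ SS n 1 0) :
    (M 0 0 = 1) ∧ (∀ i : Fin n, M i.succ 0 = 0) ∧ ∀ j : Fin n, M 0 j.succ = 0 := by
  obtain ⟨h1, h2⟩ := (SS_zero (by norm_num) M).1 h
  rw [one_smul] at h2
  have h3 : M 0 0 = 1 := by
    have := congrFun h2 0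
    simpa [col, e] using this
  have h4 : ∀ i : Fin n, M i.succ 0 = 0 := by
    intro i
    have := congrFun h2 i.succ
    simpa [col, e] using this
  refine ⟨h3, h4, fun j => ?_⟩
  have := congrFun (congrFun h1 0) j.succ
  rw [Matrix.mul_apply, Fin.sum_univ_succ] at this
  simpa [h3, h4, (Fin.succ_ne_zero j).symm] using this

lemma kap_mem {M : Matrix (Fin (n+1)) (Fin (n+1)) ℂ} (h : M ∈ SS n 1 0) : kap M ∈ UG n := by
  obtain ⟨h1, h2, h3⟩ := col_e h
  show (kap M)ᴴ * kap M = 1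
  ext i j
  have := congrFun (congrFun h.1.1 i.succ) j.succ
  rw [Matrix.mul_apply, Fin.sum_univ_succ] at this
  rw [Matrix.mul_apply]
  simpa [h1, h2, h3, kap, Matrix.one_apply] using this

lemma iot_mem {M : Matrix (Fin n) (Fin n) ℂ} (h : M ∈ UG n) : iot M ∈ SS n 1 0 := by
  rw [SS_zero (by norm_num)]
  constructor
  · show (iot M)ᴴ * iot M = 1
    have h' : Mᴴ * M = 1 := h
    ext i j
    have e1 := fun i j => congrFun (congrFun h' i) j
    simp only [Matrix.mul_apply, Matrix.conjTranspose_apply] at e1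
    rw [Matrix.mul_apply, Fin.sum_univ_succ]
    cases i using Fin.cases with
    | zero => cases j using Fin.cases with
      | zero => simp [iot]
      | succ j => simp [iot, Matrix.one_apply, (Fin.succ_ne_zero j).symm]
    | succ i => cases j using Fin.cases with
      | zero => simp [iot, Matrix.one_apply]
      | succ j => simpa [iot, Matrix.one_apply] using e1 i j
  · funext i
    cases i using Fin.cases <;> simp [col, iot, e]

lemma iot_kap {M : Matrix (Fin (n+1)) (Fin (n+1)) ℂ} (h : M ∈ SS n 1 0) : iot (kap M) = M := by
  obtain ⟨h1, h2, h3⟩ := col_e h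
  ext i j
  cases i using Fin.cases <;> cases j using Fin.cases <;> simp [iot, kap, h1, h2, h3]

lemma near_kap : Near2 (SS n 1 0) (UG n) kap kap :=
  near2_of_continuous (isCompact_SS _ _ _) continuous_kap continuous_kap
    (fun _ h => kap_mem h) (fun _ _ => rfl)

lemma near_iot : Near2 (UG n) (SS n 1 0) iot iot :=
  near2_of_continuous (isCompact_UG _) continuous_iot continuous_iot
    (fun _ h => iot_mem h) (fun _ _ => rfl)

lemma near_id : Near2 (SS n 1 0) (SS n 1 0) (iot ∘ kap) id :=
  near2_of_continuous (isCompact_SS _ _ _) (continuous_iot.comp continuous_kap) continuous_id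
    (fun a h => by rw [Function.comp_apply, iot_kap h]; exact h) (fun _ h => iot_kap h)

lemma acyc_p {m : ℕ} (h : Acyc (UG n) m) : Acyc (SS n 1 0) m := by
  intro φ hφ
  have h1 := (h _ (hφ.pull near_iot)).pull near_kap
  simp only [List.map_map] at h1
  have := B.htp h1 hφ near_id.htp
  simpa using this

lemma acyc_m {m : ℕ} (h : Acyc (UG n) m) : Acyc (SS n (-1) 0) m := by
  intro φ hφ
  have F := filtU n
  obtain ⟨w, hw, hwe⟩ := F.spm 0 (by omega) m φ hφ
  have h1 := F.ipp 0 (by omega) m w hw (acyc_p h w (hw.mono ((F.zp 0).trans (F.ssp 0))))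
  exact (h1.mono ((F.zm 0).trans (F.ssp 0))).congr hwe

end blocks

def Pd {X : Type*} (φ : ℕ → List X → ZMod 2) : ℕ → List X → ZMod 2
  | 0 => φ 0
  | k+1 => cup (2*k+3) (φ (k+1)) (Pd φ k)

lemma Z_Pd {X : Type*} [MetricSpace X] {A : Set X} {φ : ℕ → List X → ZMod 2} (k : ℕ)
    (h : ∀ i ≤ k, Z A (2*i+2) (φ i)) : Z A ((k+1)^2+1) (Pd φ k) := by
  induction k with
  | zero => exact h 0 le_rfl
  | succ k ih =>
    have h1 := ih (fun i hi => h i (by omega))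
    have h2 : Z A ((2*k+3)+1) (φ (k+1)) := h (k+1) le_rfl
    have := h2.cup h1
    rw [show (k+1+1)^2 + 1 = 2*k+3+(k+1)^2+1 by ring]
    exact this

lemma Pd_congr {X : Type*} [MetricSpace X] {A : Set X} {φ ψ : ℕ → List X → ZMod 2} (k : ℕ)
    (h : ∀ i ≤ k, φ i =ᶠ[N A (2*i+2)] ψ i) : Pd φ k =ᶠ[N A ((k+1)^2+1)] Pd ψ k := by
  induction k with
  | zero => exact h 0 le_rfl
  | succ k ih =>
    have h1 := ih (fun i hi => h i (by omega))
    have h2 : φ (k+1) =ᶠ[N A ((2*k+3)+1)] ψ (k+1) := h (k+1) le_rfl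
    have := cup_congr h2 h1
    rw [show (k+1+1)^2 + 1 = 2*k+3+(k+1)^2+1 by ring]
    exact this

lemma Pd_map {X X' : Type*} (f : X → X') (φ : ℕ → List X' → ZMod 2) (k : ℕ) (l : List X) :
    Pd (fun i l => φ i (l.map f)) k l = Pd φ k (l.map f) := by
  induction k generalizing l with
  | zero => rfl
  | succ k ih => simp [Pd, cup, ih, List.map_take, List.map_drop]

theorem UG_acyc (n : ℕ) : ∀ m, n^2 + 1 < m → Acyc (UG n) m := by
  induction n with
  | zero =>
    intro m _
    have : UG 0 = {1} := by
      ext M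
      exact ⟨fun _ => Subsingleton.elim _ _, fun _ => Subsingleton.elim _ _⟩
    rw [this]; exact acyc_singleton _ _
  | succ n ih =>
    intro m hm
    rw [← EE_top]
    apply (filtU n).vanish (D := n^2) (fun m hm => acyc_p (ih m hm)) (fun m hm => acyc_m (ih m hm))
      _ le_rfl
    calc _ = (n+1)^2+1 := by ring
      _ < m := hm

theorem UG_prod (n : ℕ) : ∃ φ : ℕ → List (Matrix (Fin (n+1)) (Fin (n+1)) ℂ) → ZMod 2,
    (∀ i ≤ n, Z (UG (n+1)) (2*i+2) (φ i)) ∧ ¬ B (UG (n+1)) ((n+1)^2+1) (Pd φ n) := by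
  induction n with
  | zero =>
    have key : ∀ s : ℝ, s * s = 1 → SS 0 s 0 = {(fun _ _ => (s:ℂ))} := by
      intro s hs
      ext M
      rw [SS_zero hs]
      constructor
      · rintro ⟨_, h⟩
        have := congrFun h 0
        ext i j
        fin_cases i; fin_cases j
        simpa [col, e] using this
      · rintro rfl
        constructor
        · ext i j
          fin_cases i; fin_cases j
          have hs' : (s:ℂ) * s = 1 := by exact_mod_cast hs
          show ∑ k : Fin 1, star (s:ℂ) * (s:ℂ) = (1 : Matrix (Fin 1) (Fin 1) ℂ) 0 0
          simpa using hs'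
        · funext i
          fin_cases i; simp [col, e]
    obtain ⟨τ, h1, h2⟩ := (filtU 0).circle (by norm_num) (key 1 (by norm_num)) (key (-1) (by norm_num))
    rw [show EE 0 1 = UG (0+1) from EE_top 0] at h1 h2
    refine ⟨fun _ => τ, ?_, h2⟩
    intro i hi
    obtain rfl : i = 0 := by omega
    exact h1
  | succ n ih =>
    obtain ⟨φ, h1, h2⟩ := ih
    have F := filtU (n+1)
    have hex : ∀ i, ∃ x', i ≤ n → (Z (EE (n+1) (2*(n+1)+1)) (2*i+2) x' ∧
        x' =ᶠ[N (SS (n+1) 1 0) (2*i+2)] fun l => φ i (l.map kap)) := by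
      intro i
      by_cases hi : i ≤ n
      · obtain ⟨x', hx⟩ := F.extend (k := 2*(n+1)) le_rfl (m := 2*i+2) (by omega)
          ((h1 i hi).pull near_kap)
        exact ⟨x', fun _ => hx⟩
      · exact ⟨0, fun h => absurd h hi⟩
    choose ψ hψ using hex
    have hx : Z (EE (n+1) (2*(n+1)+1)) ((n+1)^2+1) (Pd ψ n) := Z_Pd n fun i hi => (hψ i hi).1
    have hnB : ¬ B (SS (n+1) 1 0) ((n+1)^2+1) (Pd ψ n) := by
      intro hB
      apply h2
      have e1 := hB.congr (Pd_congr n fun i hi => (hψ i hi).2)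
      have e2 := e1.pull near_iot
      convert e2 using 1
      funext l
      rw [Pd_map kap φ n]
      rw [List.map_map]
      have : (kap ∘ iot : Matrix (Fin (n+1)) (Fin (n+1)) ℂ → _) = id := funext kap_iot
      rw [this, List.map_id]
    obtain ⟨τ, t1, t2⟩ := F.nonvanish (by omega) (D := (n+1)^2)
      (fun m hm => acyc_p (UG_acyc (n+1) m hm)) (fun m hm => acyc_m (UG_acyc (n+1) m hm)) hx hnB
      (2*(n+1)) le_rfl
    rw [EE_top] at t1 t2
    have t2' : ¬ B (UG (n+1+1)) ((n+1+1)^2+1) (cup (2*(n+1)+1) τ (Pd ψ n)) := by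
      convert t2 using 2
      ring
    refine ⟨fun i => if i ≤ n then ψ i else τ, fun i hi => ?_, ?_⟩
    · by_cases hin : i ≤ n
      · simp only [hin, if_true]
        have := (hψ i hin).1
        rwa [EE_top] at this
      · obtain rfl : i = n+1 := by omega
        simp only [hin, if_false]
        exact t1
    · intro hB
      apply t2'
      have hP : ∀ k ≤ n, Pd (fun i => if i ≤ n then ψ i else τ) k = Pd ψ k := by
        intro k
        induction k with
        | zero => intro _; simp [Pd]
        | succ k ih => intro hk; simp only [Pd]; rw [ih (by omega)]; simp [hk]
      have e : Pd (fun i => if i ≤ n then ψ i else τ) (n+1) = cup (2*(n+1)+1) τ (Pd ψ n) := by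
        rw [Pd, hP n le_rfl]
        simp [show 2*(n+1)+1 = 2*n+3 by ring]
      rwa [e] at hB

end CT
end

section
open Filter Topology

namespace CT

/-! ### Good closed families -/

section fam
variable {X V : Type*} [MetricSpace X] [DecidableEq V]

def Un (G : V → Set X) (S : Finset V) : Set X := {x | ∃ i ∈ S, x ∈ G i}
def In (G : V → Set X) (S : Finset V) : Set X := {x | ∀ i ∈ S, x ∈ G i}

def GoodF (G : V → Set X) (S : Finset V) : Prop :=
  (∀ i ∈ S, IsCompact (G i)) ∧
    ∀ T ⊆ S, T.Nonempty → (In G T).Nonempty → ∀ m, Acyc (In G T) m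

lemma GoodF.mono {G : V → Set X} {S T : Finset V} (h : GoodF G S) (hT : T ⊆ S) : GoodF G T :=
  ⟨fun i hi => h.1 i (hT hi), fun T' h' => h.2 T' (h'.trans hT)⟩

lemma In_inter (G : V → Set X) (v : V) {T : Finset V} (hT : T.Nonempty) :
    In (fun i => G i ∩ G v) T = In G (insert v T) := by
  ext x
  simp only [In, Set.mem_ofPred_eq, Set.mem_inter_iff, Finset.mem_insert, forall_eq_or_imp]
  obtain ⟨i, hi⟩ := hT
  exact ⟨fun h => ⟨(h i hi).2, fun j hj => (h j hj).1⟩, fun h j hj => ⟨h.2 j hj, h.1⟩⟩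

lemma GoodF.link {G : V → Set X} {S : Finset V} {v : V} (h : GoodF G (insert v S)) :
    GoodF (fun i => G i ∩ G v) S := by
  refine ⟨fun i hi => ?_, fun T hT hne => ?_⟩
  · exact (h.1 i (by simp [hi])).inter (h.1 v (by simp))
  · rw [In_inter G v hne]
    exact h.2 _ (Finset.insert_subset_insert v hT) (by simp)

lemma Un_insert (G : V → Set X) (S : Finset V) (v : V) : Un G (insert v S) = Un G S ∪ G v := by
  ext x
  simp only [Un, Finset.mem_insert, exists_eq_or_imp, Set.mem_union, Set.mem_ofPred_eq]
  exact or_comm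

lemma Un_inter (G : V → Set X) (S : Finset V) (v : V) :
    Un G S ∩ G v = Un (fun i => G i ∩ G v) S := by
  ext x; simp [Un]; tauto

lemma Un_empty (G : V → Set X) : Un G ∅ = ∅ := by
  ext x; simp [Un]

lemma Un_union (G : V → Set X) (S T : Finset V) : Un G (S ∪ T) = Un G S ∪ Un G T := by
  ext x; simp [Un]; grind

lemma Un_compact {G : V → Set X} {S : Finset V} (h : GoodF G S) : IsCompact (Un G S) := by
  have : Un G S = ⋃ i ∈ S, G i := by ext x; simp [Un]
  rw [this]
  exact S.isCompact_biUnion h.1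

lemma In_single (G : V → Set X) (v : V) : In G {v} = G v := by
  ext x; simp [In]

lemma GoodF.vert {G : V → Set X} {S : Finset V} {v : V} (h : GoodF G (insert v S)) (m : ℕ) :
    Acyc (G v) (m+1) := by
  rcases (G v).eq_empty_or_nonempty with he | hne
  · rw [he]; exact acyc_empty m
  · rw [← In_single G v] at hne ⊢
    exact h.2 {v} (by simp) (by simp) hne _

lemma mv_ins {G : V → Set X} {S : Finset V} {v : V} (h : GoodF G (insert v S)) {k : ℕ}
    (h1 : Acyc (Un G S) (k+1)) (h3 : Acyc (Un (fun i => G i ∩ G v) S) k) :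
    Acyc (Un G (insert v S)) (k+1) := by
  rw [Un_insert]
  refine mv (Un_compact (h.mono (Finset.subset_insert v S))) (h.1 v (by simp)) h1 (h.vert k) ?_
  rw [Un_inter]; exact h3

lemma acyc_full {G : V → Set X} {S : Finset V} (h : GoodF G S) (hS : S.Nonempty)
    (hI : (In G S).Nonempty) (m : ℕ) : Acyc (Un G S) m := by
  induction S using Finset.induction_on generalizing G m with
  | empty => simp at hS
  | insert v S hv ih =>
    obtain ⟨x, hx⟩ := hI
    cases m with
    | zero => exact acyc_zero ⟨x, v, by simp, hx v (by simp)⟩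
    | succ k =>
      rcases S.eq_empty_or_nonempty with rfl | hne
      · have : Un G (insert v ∅) = G v := by rw [Un_insert, Un_empty, Set.empty_union]
        rw [this]; exact h.vert k
      · refine mv_ins h (ih (h.mono (Finset.subset_insert v S)) hne
          ⟨x, fun i hi => hx i (by simp [hi])⟩ _) (ih h.link hne ?_ _)
        rw [In_inter G v hne]; exact ⟨x, hx⟩

lemma exists_T {G : V → Set X} {S : Finset V} (h : GoodF G S) (m : ℕ)
    (hn : ¬ Acyc (Un G S) m) : ∃ T ⊆ S, T.card = m ∧ (T.Nonempty → (In G T).Nonempty) := by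
  induction S using Finset.induction_on generalizing G m with
  | empty =>
    cases m with
    | zero => exact ⟨∅, by simp⟩
    | succ m => rw [Un_empty] at hn; exact absurd (acyc_empty m) hn
  | insert v S hv ih =>
    have hS := Finset.subset_insert v S
    cases m with
    | zero => exact ⟨∅, by simp⟩
    | succ k =>
      by_cases hev : (G v).Nonempty
      · by_cases h1 : Acyc (Un G S) (k+1)
        · obtain ⟨T, hT, hc, hI⟩ := ih h.link k (fun h3 => hn (mv_ins h h1 h3))
          refine ⟨insert v T, Finset.insert_subset_insert v hT, ?_, fun _ => ?_⟩
          · rw [Finset.card_insert_of_notMem (fun h' => hv (hT h')), hc]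
          · rcases T.eq_empty_or_nonempty with rfl | hne
            · have : In G (insert v ∅) = G v := In_single G v
              rw [this]; exact hev
            · rw [← In_inter G v hne]; exact hI hne
        · obtain ⟨T, hT, hc⟩ := ih (h.mono hS) _ h1
          exact ⟨T, hT.trans hS, hc⟩
      · rw [Set.not_nonempty_iff_eq_empty] at hev
        rw [Un_insert, hev, Set.union_empty] at hn
        obtain ⟨T, hT, hc⟩ := ih (h.mono hS) _ hn
        exact ⟨T, hT.trans hS, hc⟩

lemma acyc_card {G : V → Set X} {S : Finset V} (h : GoodF G S) {m : ℕ} (hm : 1 ≤ m)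
    (hS : S.card ≤ m) : Acyc (Un G S) m := by
  by_contra hn
  obtain ⟨T, hT, hc, hI⟩ := exists_T h m hn
  obtain rfl : T = S := Finset.eq_of_subset_of_card_le hT (by omega)
  have hne : T.Nonempty := Finset.card_pos.1 (by omega)
  exact hn (acyc_full h hne (hI hne) m)

lemma acyc_sphere {m : ℕ} : ∀ {G : V → Set X} {S : Finset V}, GoodF G S → 
    S.card = m + 1 → ¬ Acyc (Un G S) m → ∀ j, j ≠ m → Acyc (Un G S) j := by
  induction m with
  | zero =>
    intro G S h hS hn j hj
    obtain ⟨v, rfl⟩ := Finset.card_eq_one.1 hS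
    have : Un G {v} = ∅ := by
      by_contra hne
      exact hn (acyc_zero (Set.nonempty_iff_ne_empty.2 hne))
    rw [this]
    obtain ⟨k, rfl⟩ := Nat.exists_eq_succ_of_ne_zero hj
    exact acyc_empty k
  | succ m ih =>
    intro G S h hS hn j hj
    obtain ⟨T, hT, hc, hI⟩ := exists_T h _ hn
    have hne : T.Nonempty := Finset.card_pos.1 (by omega)
    have hI := hI hne
    obtain ⟨v, hv, rfl⟩ : ∃ v, v ∉ T ∧ insert v T = S := by
      have h1 : (S \ T).card = 1 := by rw [Finset.card_sdiff_of_subset hT]; omega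
      obtain ⟨v, hv⟩ := Finset.card_eq_one.1 h1
      have : v ∈ S \ T := by rw [hv]; simp
      refine ⟨v, (Finset.mem_sdiff.1 this).2, ?_⟩
      rw [Finset.insert_eq, ← hv, Finset.sdiff_union_of_subset hT]
    have hT' := acyc_full (h.mono hT) hne hI
    have hL : ¬ Acyc (Un (fun i => G i ∩ G v) T) m := fun h3 => hn (mv_ins h (hT' _) h3)
    cases j with
    | zero =>
      obtain ⟨x, hx⟩ := hI
      obtain ⟨i, hi⟩ := hne
      exact acyc_zero ⟨x, i, by simp [hi], hx i hi⟩
    | succ k => exact mv_ins h (hT' _) (ih h.link hc hL k (by omega))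

def dgr (r : ℕ → ℕ) : ℕ → ℕ
  | 0 => r 0 + 1
  | b+1 => dgr r b + r (b+1) + 1

def Mb (r : ℕ → ℕ) (ψ : ℕ → List X → ZMod 2) : ℕ → List X → ZMod 2
  | 0 => ψ 0
  | b+1 => cup (dgr r b) (Mb r ψ b) (ψ (b+1))

lemma Z_Mb {A : Set X} {r : ℕ → ℕ} {ψ : ℕ → List X → ZMod 2} (b : ℕ)
    (h : ∀ i ≤ b, Z A (r i + 2) (ψ i)) : Z A (dgr r b + 1) (Mb r ψ b) := by
  induction b with
  | zero => exact h 0 le_rfl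
  | succ b ih =>
    have h1 := ih (fun i hi => h i (by omega))
    have := h1.cup (q := r (b+1) + 1) (h (b+1) le_rfl)
    exact this

lemma dgr_pos (r : ℕ → ℕ) (b : ℕ) : ∃ p, dgr r b = p + 1 := by
  cases b <;> simp [dgr]

lemma cup_step {A C : Set X} {r : ℕ → ℕ} {ψ : ℕ → List X → ZMod 2} (b : ℕ)
    (h : ∀ i ≤ b+1, Z (A ∪ C) (r i + 2) (ψ i)) (h1 : B A (dgr r b + 1) (Mb r ψ b))
    (h2 : B C (r (b+1) + 2) (ψ (b+1))) : B (A ∪ C) (dgr r (b+1) + 1) (Mb r ψ (b+1)) := by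
  obtain ⟨p, hp⟩ := dgr_pos r b
  have hz := Z_Mb b (fun i hi => h i (by omega))
  rw [hp] at h1 hz
  have := B.cup_union hz (h (b+1) le_rfl) h1 h2
  have e : dgr r (b+1) + 1 = p + r (b+1) + 3 := by simp only [dgr, hp]; ring
  rw [e, Mb, hp]
  exact this

lemma main_step {G : V → Set X} {S : Finset V} (hG : GoodF G S) {r : ℕ → ℕ}
    {ψ : ℕ → List X → ZMod 2} (b : ℕ) (h : ∀ i ≤ b+1, Z (Un G S) (r i + 2) (ψ i))
    (hn : ¬ B (Un G S) (dgr r (b+1) + 1) (Mb r ψ (b+1))) :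
    ∃ T ⊆ S, T.card + (dgr r (b+1) + 1) = S.card ∧ ¬ B (Un G T) (dgr r b + 1) (Mb r ψ b) ∧
      ¬ B (Un G T) (r (b+1) + 2) (ψ (b+1)) := by
  have hz := Z_Mb (b+1) h
  obtain ⟨T, hT, hc, hI⟩ := exists_T hG _ (fun ha => hn (ha _ hz))
  have hne : T.Nonempty := Finset.card_pos.1 (by omega)
  have hA := acyc_full (hG.mono hT) hne (hI hne)
  have hU : Un G S = Un G (S \ T) ∪ Un G T := by
    rw [← Un_union, Finset.sdiff_union_of_subset hT]
  have hs1 : Un G (S \ T) ⊆ Un G S := by rw [hU]; exact Set.subset_union_left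
  have hs2 : Un G T ⊆ Un G S := by rw [hU]; exact Set.subset_union_right
  refine ⟨S \ T, Finset.sdiff_subset, ?_, fun hB => ?_, fun hB => ?_⟩
  · rw [Finset.card_sdiff_of_subset hT, hc]
    have := Finset.card_le_card hT
    omega
  · apply hn
    have h2 := hA _ _ ((h (b+1) le_rfl).mono hs2)
    rw [hU] at h ⊢
    exact cup_step b h hB h2
  · apply hn
    have h2 := hA _ _ ((Z_Mb b (fun i hi => h i (by omega))).mono hs2)
    rw [hU, Set.union_comm] at h ⊢
    exact cup_step b h h2 hB

lemma main_count {G : V → Set X} {r : ℕ → ℕ} {ψ : ℕ → List X → ZMod 2} (b : ℕ) :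
    ∀ {S : Finset V}, GoodF G S → 
    (∀ i ≤ b+1, Z (Un G S) (r i + 2) (ψ i)) →
    (¬ B (Un G S) (dgr r (b+1) + 1) (Mb r ψ (b+1))) →
    ∃ T ⊆ S, T.card + ∑ c ∈ Finset.range (b+1), (dgr r (c+1) + 1) ≤ S.card ∧
      ¬ B (Un G T) (r 0 + 2) (ψ 0) ∧ ¬ B (Un G T) (r 1 + 2) (ψ 1) := by
  induction b with
  | zero =>
    intro S hG h hn
    obtain ⟨T, hT, hc, h1, h2⟩ := main_step hG 0 h hn
    exact ⟨T, hT, by simp only [zero_add, Finset.sum_range_one] at hc ⊢; omega, h1, h2⟩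
  | succ b ih =>
    intro S hG h hn
    obtain ⟨T, hT, hc, h1, h2⟩ := main_step hG (b+1) h hn
    have hsub : Un G T ⊆ Un G S := fun x ⟨i, hi, hx⟩ => ⟨i, hT hi, hx⟩
    obtain ⟨T', hT', hc', h'⟩ := ih (hG.mono hT) (fun i hi => (h i (by omega)).mono hsub) h1
    refine ⟨T', hT'.trans hT, ?_, h'⟩
    rw [Finset.sum_range_succ]
    omega

lemma main_bound {G : V → Set X} {r : ℕ → ℕ} {ψ : ℕ → List X → ZMod 2} (b : ℕ)
    {S : Finset V} (hG : GoodF G S)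
    (h : ∀ i ≤ b+1, Z (Un G S) (r i + 2) (ψ i))
    (hn : ¬ B (Un G S) (dgr r (b+1) + 1) (Mb r ψ (b+1))) (hr : r 1 ≠ r 0) :
    r 0 + 4 + ∑ c ∈ Finset.range (b+1), (dgr r (c+1) + 1) ≤ S.card := by
  obtain ⟨T, hT, hc, h0, h1⟩ := main_count b hG h hn
  have hsub : Un G T ⊆ Un G S := fun x ⟨i, hi, hx⟩ => ⟨i, hT hi, hx⟩
  have a0 : ¬ Acyc (Un G T) (r 0 + 2) := fun ha => h0 (ha _ ((h 0 (by omega)).mono hsub))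
  have a1 : ¬ Acyc (Un G T) (r 1 + 2) := fun ha => h1 (ha _ ((h 1 (by omega)).mono hsub))
  have hg := hG.mono hT
  have c1 : r 0 + 2 < T.card := by
    by_contra hcon
    exact a0 (acyc_card hg (by omega) (by omega))
  have c2 : T.card ≠ r 0 + 2 + 1 := fun hcon =>
    a1 (acyc_sphere hg hcon a0 _ (by omega))
  omega

end fam

/-! products in the other order -/
lemma Mb_Pd {X : Type*} [MetricSpace X] (φ : ℕ → List X → ZMod 2) (Pd : ℕ → List X → ZMod 2)
    (h0 : Pd 0 = φ 0) (hs : ∀ k, Pd (k+1) = cup (2*k+3) (φ (k+1)) (Pd k)) (n : ℕ) (b : ℕ)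
    (hb : b + 1 ≤ n) :
    cup (dgr (fun i => 2*(n-i)) b) (Mb (fun i => 2*(n-i)) (fun i => φ (n-i)) b) (Pd (n-b-1)) = Pd n := by
  induction b with
  | zero =>
    obtain ⟨k, rfl⟩ : ∃ k, n = k+1 := ⟨n-1, by omega⟩
    rw [hs]
    simp [dgr, Mb]
    congr 1
  | succ b ih =>
    rw [← ih (by omega)]
    obtain ⟨k, hk⟩ : ∃ k, n = k+1+1+b := ⟨n-b-2, by omega⟩
    have e1 : n - b - 1 = k + 1 := by omega
    have e2 : n - (b+1) - 1 = k := by omega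
    have e3 : n - (b+1) = k + 1 := by omega
    rw [e1, e2, hs]
    simp only [Mb, e3, dgr]
    rw [add_assoc, show 2*(k+1)+1 = 2*k+3 by ring, cup_assoc]

lemma Mb_Pd' {X : Type*} [MetricSpace X] (φ : ℕ → List X → ZMod 2) (Pd : ℕ → List X → ZMod 2)
    (h0 : Pd 0 = φ 0) (hs : ∀ k, Pd (k+1) = cup (2*k+3) (φ (k+1)) (Pd k)) (n : ℕ) :
    Mb (fun i => 2*(n-i)) (fun i => φ (n-i)) n = Pd n := by
  cases n with
  | zero => simp [Mb, h0]
  | succ n =>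
    have := Mb_Pd φ Pd h0 hs (n+1) n le_rfl
    rw [← this, Mb]
    simp [h0]

lemma dgr_eq (n b : ℕ) (hb : b ≤ n) : dgr (fun i => 2*(n-i)) b + (n-b)^2 = (n+1)^2 := by
  induction b with
  | zero => simp [dgr]; ring
  | succ b ih =>
    have := ih (by omega)
    obtain ⟨k, hk⟩ : ∃ k, n = k+1+b := ⟨n-b-1, by omega⟩
    have e1 : n - b = k + 1 := by omega
    have e2 : n - (b+1) = k := by omega
    rw [e1] at this
    simp only [dgr, e2]
    nlinarith

lemma arith (n : ℕ) : (4 * (n+2)^3 + 3 * (n+2)^2 + 5*(n+2) + 12) / 6 =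
    2*(n+1) + 4 + ∑ c ∈ Finset.range (n+1), (dgr (fun i => 2*(n+1-i)) (c+1) + 1) := by
  have h1 : ∀ m k : ℕ, k ≤ m → 6 * ∑ c ∈ Finset.range k, (dgr (fun i => 2*(m-i)) (c+1) + 1) + 
     6 * ∑ c ∈ Finset.range k, (m - (c+1))^2 = 6 * (k * ((m+1)^2 + 1)) := by
    intro m k hk
    rw [← mul_add, ← Finset.sum_add_distrib]
    congr 1
    rw [Finset.sum_congr rfl (g := fun _ => (m+1)^2+1)]
    · simp
    · intro c hc
      have := dgr_eq m (c+1) (by have := Finset.mem_range.1 hc; omega)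
      omega
  have h2 : ∀ m : ℕ, 6 * ∑ c ∈ Finset.range m, (m - (c+1))^2 + 3*m^2 = 2*m^3 + m := by
    intro m
    have : ∑ c ∈ Finset.range m, (m - (c+1))^2 = ∑ c ∈ Finset.range m, c^2 := by
      rw [← Finset.sum_range_reflect]
      apply Finset.sum_congr rfl
      intro c hc
      congr 1
      have := Finset.mem_range.1 hc; omega
    rw [this]
    clear this
    induction m with
    | zero => simp
    | succ m ih => rw [Finset.sum_range_succ]; nlinarith
  have a1 := h1 (n+1) (n+1) le_rfl
  have a2 := h2 (n+1)
  apply Nat.div_eq_of_eq_mul_right (by norm_num)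
  nlinarith

end CT
end

section
open Filter Topology

namespace CT

section poly
open Classical
variable {V : Type*} [Fintype V]

noncomputable def spt (t : V → ℝ) : Finset V := Finset.univ.filter (fun i => 0 < t i)

def Pol (Kx : Finset V → Prop) : Set (V → ℝ) := {t | t ∈ stdSimplex ℝ V ∧ Kx (spt t)}

lemma mem_spt {t : V → ℝ} {i : V} : i ∈ spt t ↔ 0 < t i := by simp [spt]

lemma isCompact_Pol {Kx : Finset V → Prop} (hK : ∀ σ τ, σ ⊆ τ → Kx τ → Kx σ) :
    IsCompact (Pol Kx) := by
  have : Pol Kx = ⋃ σ ∈ {σ : Finset V | Kx σ}, (stdSimplex ℝ V ∩ {t | ∀ i, i ∉ σ → t i = 0}) := by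
    ext t
    simp only [Pol, Set.mem_iUnion, Set.mem_inter_iff, Set.mem_ofPred_eq, exists_prop]
    constructor
    · rintro ⟨h, hk⟩
      refine ⟨_, hk, h, fun i hi => ?_⟩
      rw [mem_spt] at hi
      exact le_antisymm (not_lt.1 hi) (h.1 i)
    · rintro ⟨σ, hk, h, hs⟩
      refine ⟨h, hK _ _ (fun i hi => ?_) hk⟩
      by_contra hc
      rw [mem_spt, hs i hc] at hi
      exact lt_irrefl _ hi
  rw [this]
  refine (Set.toFinite _).isCompact_biUnion fun σ _ => (isCompact_stdSimplex ℝ V).inter_right ?_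
  have : {t : V → ℝ | ∀ i, i ∉ σ → t i = 0} = ⋂ i, ⋂ (_ : i ∉ σ), {t | t i = 0} := by
    ext; simp
  rw [this]
  exact isClosed_iInter fun i => isClosed_iInter fun _ =>
    isClosed_eq (continuous_apply i) continuous_const

def Gv (Kx : Finset V → Prop) (v : V) : Set (V → ℝ) := {t | t ∈ Pol Kx ∧ ∀ j, t j ≤ t v}

lemma exists_pos {t : V → ℝ} (h : t ∈ stdSimplex ℝ V) : ∃ i, 0 < t i := by
  by_contra hc
  push Not at hc
  have := h.2
  have h2 : ∑ i, t i ≤ 0 := Finset.sum_nonpos fun i _ => hc i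
  linarith

lemma isCompact_Gv {Kx : Finset V → Prop} (hK : ∀ σ τ, σ ⊆ τ → Kx τ → Kx σ) (v : V) :
    IsCompact (Gv Kx v) := by
  have : Gv Kx v = Pol Kx ∩ ⋂ j, {t | t j ≤ t v} := by
    ext; simp [Gv]
  rw [this]
  exact (isCompact_Pol hK).inter_right (isClosed_iInter fun j =>
    isClosed_le (continuous_apply j) (continuous_apply v))

lemma Un_Gv (Kx : Finset V → Prop) : Un (Gv Kx) Finset.univ = Pol Kx := by
  ext t
  constructor
  · rintro ⟨i, _, h⟩
    exact h.1
  · intro h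
    obtain ⟨i, _⟩ := exists_pos h.1
    obtain ⟨v, _, hv⟩ := Finset.exists_max_image Finset.univ t ⟨i, Finset.mem_univ _⟩
    exact ⟨v, Finset.mem_univ _, h, fun j => hv j (Finset.mem_univ _)⟩

noncomputable def bary (T : Finset V) : V → ℝ := fun i => if i ∈ T then (T.card : ℝ)⁻¹ else 0

lemma bary_mem {T : Finset V} (hT : T.Nonempty) : bary T ∈ stdSimplex ℝ V := by
  constructor
  · intro i
    simp only [bary]
    split_ifs <;> positivity
  · have : (T.card : ℝ) ≠ 0 := by exact_mod_cast hT.card_pos.ne'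
    simp [bary, this]

lemma goodF_Gv {Kx : Finset V → Prop} (hK : ∀ σ τ, σ ⊆ τ → Kx τ → Kx σ) :
    GoodF (Gv Kx) Finset.univ := by
  refine ⟨fun i _ => isCompact_Gv hK i, fun T _ hT hne m => ?_⟩
  have hTs : ∀ t ∈ In (Gv Kx) T, T ⊆ spt t := by
    intro t ht i hi
    obtain ⟨j, hj⟩ := exists_pos (ht i hi).1.1
    exact mem_spt.2 (hj.trans_le ((ht i hi).2 j))
  have hbs : spt (bary T) ⊆ T := by
    intro i hi
    rw [mem_spt, bary] at hi
    by_contra hc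
    simp [hc] at hi
  have hb : bary T ∈ In (Gv Kx) T := by
    intro i hi
    refine ⟨⟨bary_mem hT, ?_⟩, fun j => ?_⟩
    · obtain ⟨t, ht⟩ := hne
      exact hK _ _ (hbs.trans (hTs t ht)) (ht i hi).1.2
    · simp only [bary, hi, if_true]
      split_ifs
      · exact le_rfl
      · positivity
  have hc : IsCompact (In (Gv Kx) T) := by
    have : In (Gv Kx) T = ⋂ i ∈ T, Gv Kx i := by ext; simp [In]
    rw [this]
    obtain ⟨i, hi⟩ := hT
    exact (isCompact_Gv hK i).of_isClosed_subset
      (isClosed_biInter fun i _ => (isCompact_Gv hK i).isClosed) (Set.biInter_subset_of_mem hi)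
  have hI := inj_of (A' := {bary T}) (H := fun p : ℝ × (V → ℝ) => (1 - p.1) • p.2 + p.1 • bary T) hc
    (by fun_prop) ?_ ?_ ?_ m
  · exact Acyc.of_inj hI (by simpa using hb) (acyc_singleton _ _)
  · rintro s ⟨hs0, hs1⟩ t ht i hi
    refine ⟨⟨convex_stdSimplex ℝ V (ht i hi).1.1 (bary_mem hT) (by linarith) hs0 (by ring), ?_⟩,
      fun j => ?_⟩
    · refine hK _ _ ?_ (ht i hi).1.2
      intro j hj
      by_contra hjc
      have h1 : j ∉ T := fun h => hjc (hTs t ht h)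
      rw [mem_spt] at hj hjc
      have h2 : t j = 0 := le_antisymm (not_lt.1 hjc) ((ht i hi).1.1.1 j)
      simp [bary, h1, h2] at hj
    · have h1 := (ht i hi).2 j
      have h2 := (hb i hi).2 j
      simp only [Pi.add_apply, Pi.smul_apply, smul_eq_mul]
      have : 0 ≤ 1 - s := by linarith
      gcongr
  · intro a ha; simp
  · intro a ha; simp

end poly
end CT
end

section
open Filter Topology

namespace CT

section bridge
open Classical
variable {V Y : Type*} [TopologicalSpace Y]

def UU (W : V → Set Y) (σ : Finset V) : Set Y := {y | ∀ i ∈ σ, y ∈ W i}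

structure Ctr (W : V → Set Y) where
  c : Finset V → Y → ℝ → Y
  b : Finset V → Y
  c0 : ∀ σ y, c σ y 0 = y
  c1 : ∀ σ y, c σ y 1 = b σ
  cm : ∀ σ : Finset V, σ.Nonempty → ∀ y ∈ UU W σ, ∀ s ∈ Set.Icc (0:ℝ) 1, c σ y s ∈ UU W σ
  cc : ∀ σ : Finset V, σ.Nonempty →
    ContinuousOn (fun q : Y × ℝ => c σ q.1 q.2) (UU W σ ×ˢ Set.Icc (0:ℝ) 1)

lemma exists_Ctr (y0 : Y) (W : V → Set Y)
    (hW : ∀ σ : Finset V, σ.Nonempty → (UU W σ).Nonempty → ContractibleSpace ↥(UU W σ)) :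
    Nonempty (Ctr W) := by
  have key : ∀ σ : Finset V, ∃ (c : Y → ℝ → Y) (b : Y), (∀ y, c y 0 = y) ∧ (∀ y, c y 1 = b) ∧
      (σ.Nonempty → ∀ y ∈ UU W σ, ∀ s ∈ Set.Icc (0:ℝ) 1, c y s ∈ UU W σ) ∧
      (σ.Nonempty → ContinuousOn (fun q : Y × ℝ => c q.1 q.2) (UU W σ ×ˢ Set.Icc (0:ℝ) 1)) := by
    intro σ
    by_cases h : σ.Nonempty ∧ (UU W σ).Nonempty
    · have := hW σ h.1 h.2
      obtain ⟨b, ⟨F⟩⟩ := id_nullhomotopic ↥(UU W σ)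
      let c : Y → ℝ → Y := fun y s => if s = 0 then y else
        if hy : y ∈ UU W σ then (F (Set.projIcc 0 1 zero_le_one s, ⟨y, hy⟩) : Y) else b
      have e : ∀ y (hy : y ∈ UU W σ) s, s ∈ Set.Icc (0:ℝ) 1 →
          c y s = (F (Set.projIcc 0 1 zero_le_one s, ⟨y, hy⟩) : Y) := by
        intro y hy s hs
        simp only [c]
        split_ifs with h0
        · subst h0
          rw [Set.projIcc_left]
          have := F.apply_zero ⟨y, hy⟩
          exact (congrArg Subtype.val this).symm
        · rfl
      refine ⟨c, b, fun y => by simp [c], fun y => ?_, fun _ y hy s hs => ?_, fun _ => ?_⟩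
      · by_cases hy : y ∈ UU W σ
        · rw [e y hy 1 (by simp), Set.projIcc_right]
          exact congrArg Subtype.val (F.apply_one ⟨y, hy⟩)
        · simp [c, hy]
      · rw [e y hy s hs]; exact Subtype.coe_prop _
      · rw [continuousOn_iff_continuous_domRestrict]
        have : (UU W σ ×ˢ Set.Icc (0:ℝ) 1).domRestrict (fun q : Y × ℝ => c q.1 q.2) =
            fun q => (F (Set.projIcc 0 1 zero_le_one q.1.2, ⟨q.1.1, q.2.1⟩) : Y) := by
          ext q
          exact e _ q.2.1 _ q.2.2
        rw [this]
        refine continuous_subtype_val.comp (F.continuous.comp ?_)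
        refine Continuous.prodMk (continuous_projIcc.comp (by fun_prop)) ?_
        exact Continuous.subtype_mk (by fun_prop) _
    · refine ⟨fun y s => if s = 0 then y else y0, y0, by simp, by simp, fun h1 y hy => ?_, fun h1 => ?_⟩
      · exact absurd ⟨h1, y, hy⟩ h
      · have : UU W σ = ∅ := Set.not_nonempty_iff_eq_empty.1 fun h2 => h ⟨h1, h2⟩
        rw [this]; simp
  choose c b h0 h1 h2 h3 using key
  exact ⟨⟨c, b, h0, h1, h2, h3⟩⟩

structure Sched (X V : Type*) [TopologicalSpace X] where
  s : Finset V → X → ℝ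
  act : Finset V → X → Prop
  cont : ∀ σ, Continuous (s σ)
  mem : ∀ σ x, s σ x ∈ Set.Icc (0:ℝ) 1
  pos : ∀ σ x, s σ x ≠ 0 → act σ x
  zero : ∀ σ x, ¬ act σ x → ∀ᶠ x' in 𝓝 x, s σ x' = 0
  chain : ∀ σ τ x, act σ x → act τ x → σ ⊆ τ ∨ τ ⊆ σ
  ne : ∀ σ x, act σ x → σ.Nonempty

def fold {W : V → Set Y} (C : Ctr W) (s : Finset V → ℝ) (L : List (Finset V)) (y : Y) : Y :=
  L.foldl (fun y σ => C.c σ y (s σ)) y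

variable {X : Type*} [TopologicalSpace X] {W : V → Set Y}

lemma isOpen_UU (ho : ∀ i, IsOpen (W i)) (σ : Finset V) : IsOpen (UU W σ) := by
  have : UU W σ = ⋂ i ∈ σ, W i := by ext; simp [UU]
  rw [this]
  exact isOpen_biInter_finset fun i _ => ho i

lemma sub_of {S : Sched X V} {σ τ : Finset V} {x : X} (h1 : S.act σ x) (h2 : S.act τ x)
    (h : τ.card ≤ σ.card) : τ ⊆ σ := by
  rcases S.chain _ _ _ h1 h2 with h' | h'
  · exact (Finset.eq_of_subset_of_card_le h' h).symm.subset
  · exact h'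

lemma fold_cont (ho : ∀ i, IsOpen (W i)) (C : Ctr W) (S : Sched X V) (x0 : X)
    (L : List (Finset V)) : ∀ (_ : L.Pairwise (fun σ τ => τ.card ≤ σ.card)) (y : X → Y)
    (_ : ContinuousAt y x0) (_ : ∀ τ ∈ L, ∀ᶠ x in 𝓝 x0, S.act τ x → y x ∈ UU W τ),
    ContinuousAt (fun x => fold C (fun σ => S.s σ x) L (y x)) x0 := by
  induction L with
  | nil => intro _ y hy _; exact hy
  | cons σ L ih =>
    intro hL y hy hi
    rw [List.pairwise_cons] at hL
    refine ih hL.2 (fun x => C.c σ (y x) (S.s σ x)) ?_ ?_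
    · by_cases ha : S.act σ x0
      · have h1 : y x0 ∈ UU W σ := (hi σ (by simp)).self_of_nhds ha
        have hn := S.ne _ _ ha
        have hc := C.cc σ hn (y x0, S.s σ x0) ⟨h1, S.mem _ _⟩
        have ht : Tendsto (fun x => (y x, S.s σ x)) (𝓝 x0)
            (𝓝[UU W σ ×ˢ Set.Icc (0:ℝ) 1] (y x0, S.s σ x0)) := by
          refine tendsto_nhdsWithin_iff.2 ⟨hy.prodMk_nhds (S.cont σ).continuousAt, ?_⟩
          filter_upwards [hy ((isOpen_UU ho σ).mem_nhds h1)] with x hx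
          exact ⟨hx, S.mem _ _⟩
        exact hc.tendsto.comp ht
      · refine hy.congr ?_
        filter_upwards [S.zero _ _ ha] with x hx
        rw [hx, C.c0]
    · intro τ hτ
      filter_upwards [hi σ (by simp), hi τ (by simp [hτ])] with x h1 h2 ha
      by_cases hs : S.s σ x = 0
      · simp only [hs, C.c0]; exact h2 ha
      · have ha' := S.pos _ _ hs
        have hsub := sub_of ha' ha (hL.1 τ hτ)
        have := C.cm σ (S.ne _ _ ha') _ (h1 ha') _ (S.mem σ x)
        exact fun i hi => this i (hsub hi)

lemma fold_reset (C : Ctr W) (s : Finset V → ℝ) (L : List (Finset V)) {σ : Finset V} (hσ : σ ∈ L)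
    (hs : s σ = 1) (y y' : Y) : fold C s L y = fold C s L y' := by
  obtain ⟨L1, L2, rfl⟩ := List.append_of_mem hσ
  simp [fold, List.foldl_append, hs, C.c1]

lemma fold_zero (C : Ctr W) (s : Finset V → ℝ) (L : List (Finset V)) (hs : ∀ σ, s σ = 0) (y : Y) :
    fold C s L y = y := by
  induction L generalizing y with
  | nil => rfl
  | cons σ L ih => simp only [fold, List.foldl_cons, hs, C.c0]; simpa [fold, hs] using ih y

lemma fold_cont_reset (ho : ∀ i, IsOpen (W i)) (C : Ctr W) (S : Sched X V) (x0 : X)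
    (L : List (Finset V)) (hL : L.Pairwise (fun σ τ => τ.card ≤ σ.card)) (y0 : Y)
    {σ : Finset V} (hσ : σ ∈ L) (hs : ∀ᶠ x in 𝓝 x0, S.s σ x = 1) (hU : (UU W σ).Nonempty) :
    ContinuousAt (fun x => fold C (fun σ => S.s σ x) L y0) x0 := by
  obtain ⟨L1, L2, rfl⟩ := List.append_of_mem hσ
  rw [List.pairwise_append, List.pairwise_cons] at hL
  have h1 := fold_cont ho C S x0 L2 hL.2.1.2 (fun _ => C.b σ) continuousAt_const ?_
  · refine h1.congr ?_
    filter_upwards [hs] with x hx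
    simp [fold, List.foldl_append, hx, C.c1]
  · intro τ hτ
    filter_upwards [hs] with x hx ha
    have ha' : S.act σ x := S.pos _ _ (by rw [hx]; norm_num)
    have hsub := sub_of ha' ha (hL.2.1.1 τ hτ)
    obtain ⟨y, hy⟩ := hU
    have := C.cm σ (S.ne _ _ ha') y hy 1 (by simp)
    rw [C.c1] at this
    exact fun i hi => this i (hsub hi)

/-! schedule on the polytope -/
variable [Fintype V]

noncomputable def mu (σ : Finset V) (t : V → ℝ) : ℝ :=
  if σ.Nonempty then (∏ i ∈ σ, ∏ j ∈ σᶜ, max 0 (t i - t j)) * ∏ i ∈ σ, max 0 (t i) else 0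

lemma mu_nonneg (σ : Finset V) (t : V → ℝ) : 0 ≤ mu σ t := by
  unfold mu
  split_ifs
  · exact mul_nonneg (Finset.prod_nonneg fun i _ => Finset.prod_nonneg fun j _ => le_max_left _ _)
      (Finset.prod_nonneg fun i _ => le_max_left _ _)
  · exact le_rfl

lemma mu_cont (σ : Finset V) : Continuous (mu σ) := by
  unfold mu
  by_cases h : σ.Nonempty
  · simp only [h, if_true]; fun_prop
  · simp only [h, if_false]; fun_prop

lemma mu_pos {σ : Finset V} {t : V → ℝ} (h : mu σ t ≠ 0) :
    σ.Nonempty ∧ (∀ i ∈ σ, 0 < t i) ∧ ∀ i ∈ σ, ∀ j, j ∉ σ → t j < t i := by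
  unfold mu at h
  split_ifs at h with hn
  · refine ⟨hn, ?_, ?_⟩
    · intro i hi
      have := Finset.prod_ne_zero_iff.1 (right_ne_zero_of_mul h) i hi
      by_contra hc
      exact this (max_eq_left (not_lt.1 hc))
    · intro i hi j hj
      have := Finset.prod_ne_zero_iff.1 (Finset.prod_ne_zero_iff.1 (left_ne_zero_of_mul h) i hi) j
        (by simpa using hj)
      by_contra hc
      exact this (max_eq_left (by linarith))
  · exact absurd rfl h

lemma mu_spt {t : V → ℝ} (h : t ∈ stdSimplex ℝ V) : 0 < mu (spt t) t := by
  obtain ⟨i, hi⟩ := exists_pos h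
  have : (spt t).Nonempty := ⟨i, mem_spt.2 hi⟩
  simp only [mu, this, if_true]
  refine mul_pos (Finset.prod_pos fun i hi => Finset.prod_pos fun j hj => ?_)
    (Finset.prod_pos fun i hi => ?_)
  · have h1 := mem_spt.1 hi
    have h2 : ¬ 0 < t j := fun hh => by simp [mem_spt, hh] at hj
    exact lt_max_of_lt_right (by linarith)
  · exact lt_max_of_lt_right (mem_spt.1 hi)

noncomputable def muS (t : V → ℝ) : ℝ := ∑ σ : Finset V, mu σ t

lemma muS_pos {t : V → ℝ} (h : t ∈ stdSimplex ℝ V) : 0 < muS t :=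
  (mu_spt h).trans_le (Finset.single_le_sum (f := fun σ => mu σ t) (fun σ _ => mu_nonneg σ t) (Finset.mem_univ _))

noncomputable def MM (V : Type*) [Fintype V] : ℝ := (Fintype.card (Finset V) : ℝ)

noncomputable def sf (σ : Finset V) (t : V → ℝ) : ℝ :=
  min 1 (max 0 (4 * MM V * mu σ t / muS t - 1))

noncomputable def schedP (Kx : Finset V → Prop) : Sched ↥(Pol Kx) V where
  s σ x := sf σ x
  act σ x := mu σ (x : V → ℝ) ≠ 0
  cont σ := by
    have h1 : Continuous fun x : ↥(Pol Kx) => mu σ (x : V → ℝ) := (mu_cont σ).comp continuous_subtype_val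
    have h2 : Continuous fun x : ↥(Pol Kx) => muS (x : V → ℝ) := by
      unfold muS
      exact continuous_finsetSum _ fun σ _ => (mu_cont σ).comp continuous_subtype_val
    have h3 : ∀ x : ↥(Pol Kx), muS (x : V → ℝ) ≠ 0 := fun x => (muS_pos x.2.1).ne'
    exact continuous_const.min (continuous_const.max
      (((continuous_const.mul h1).div h2 h3).sub continuous_const))
  mem σ x := ⟨le_min zero_le_one (le_max_left _ _), min_le_left _ _⟩
  pos σ x h := by
    intro hc
    apply h
    simp [sf, hc]
  zero σ x h := by
    have h1 : Continuous fun x : ↥(Pol Kx) => mu σ (x : V → ℝ) := (mu_cont σ).comp continuous_subtype_val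
    have h2 : Continuous fun x : ↥(Pol Kx) => muS (x : V → ℝ) := by
      unfold muS
      exact continuous_finsetSum _ fun σ _ => (mu_cont σ).comp continuous_subtype_val
    have h3 : ∀ᶠ x' : ↥(Pol Kx) in 𝓝 x, 4 * MM V * mu σ (x' : V → ℝ) < muS (x' : V → ℝ) := by
      refine (continuous_const.mul h1).continuousAt.eventually_lt h2.continuousAt ?_
      change 4 * MM V * mu σ (x : V → ℝ) < muS (x : V → ℝ)
      rw [not_ne_iff.1 h, mul_zero]
      exact muS_pos x.2.1
    filter_upwards [h3] with x' h
    have := muS_pos x'.2.1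
    have h4 : 4 * MM V * mu σ (x' : V → ℝ) / muS (x' : V → ℝ) ≤ 1 := by
      rw [div_le_one this]; exact h.le
    rw [sf, max_eq_left (by linarith)]
    simp
  chain σ τ x h1 h2 := by
    by_contra hc
    push Not at hc
    obtain ⟨i, hi, hi'⟩ := Finset.not_subset.1 hc.1
    obtain ⟨j, hj, hj'⟩ := Finset.not_subset.1 hc.2
    have e1 := (mu_pos h1).2.2 i hi j hj'
    have e2 := (mu_pos h2).2.2 j hj i hi'
    linarith
  ne σ x h := (mu_pos h).1

lemma sched_one (Kx : Finset V → Prop) (x : ↥(Pol Kx)) :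
    ∃ σ, (∀ᶠ x' in 𝓝 x, (schedP Kx).s σ x' = 1) ∧ (schedP Kx).s σ x = 1 ∧ (schedP Kx).act σ x := by
  have hM : 0 < MM V := by unfold MM; exact_mod_cast Fintype.card_pos
  have h1 : ∀ σ, Continuous fun x : ↥(Pol Kx) => mu σ (x : V → ℝ) := fun σ => (mu_cont σ).comp continuous_subtype_val
  have h2 : Continuous fun x : ↥(Pol Kx) => muS (x : V → ℝ) := by
      unfold muS
      exact continuous_finsetSum _ fun σ _ => (mu_cont σ).comp continuous_subtype_val
  have hS := muS_pos x.2.1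
  obtain ⟨σ, hσ⟩ : ∃ σ, muS (x : V → ℝ) ≤ MM V * mu σ (x : V → ℝ) := by
    by_contra hc
    push Not at hc
    have : ∑ σ : Finset V, MM V * mu σ (x : V → ℝ) < ∑ _σ : Finset V, muS (x : V → ℝ) :=
      Finset.sum_lt_sum_of_nonempty ⟨∅, Finset.mem_univ _⟩ fun σ _ => hc σ
    rw [← Finset.mul_sum, Finset.sum_const, nsmul_eq_mul, Finset.card_univ] at this
    exact lt_irrefl _ this
  have h3 : ∀ᶠ x' : ↥(Pol Kx) in 𝓝 x, 2 * muS (x' : V → ℝ) < 4 * MM V * mu σ (x' : V → ℝ) := by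
    refine (continuous_const.mul h2).continuousAt.eventually_lt
      (continuous_const.mul (h1 σ)).continuousAt ?_
    change 2 * muS (x : V → ℝ) < 4 * MM V * mu σ (x : V → ℝ)
    linarith
  have h4 : ∀ᶠ x' in 𝓝 x, (schedP Kx).s σ x' = 1 := by
    filter_upwards [h3] with x' h
    have := muS_pos x'.2.1
    have h4 : 2 ≤ 4 * MM V * mu σ (x' : V → ℝ) / muS (x' : V → ℝ) := by
      rw [le_div_iff₀ this]; exact h.le
    change sf σ x' = 1
    exact min_eq_left (le_max_of_le_right (by linarith))
  have h5 := h4.self_of_nhds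
  exact ⟨σ, h4, h5, (schedP Kx).pos _ _ (by rw [h5]; norm_num)⟩

noncomputable def LL (V : Type*) [Fintype V] : List (Finset V) :=
  (Finset.univ : Finset (Finset V)).toList.insertionSort (fun σ τ => τ.card ≤ σ.card)

lemma LL_pair : (LL V).Pairwise (fun σ τ => τ.card ≤ σ.card) := by
  have : Std.Total (fun σ τ : Finset V => τ.card ≤ σ.card) := ⟨fun a b => le_total _ _⟩
  have : IsTrans _ (fun σ τ : Finset V => τ.card ≤ σ.card) := ⟨fun a b c h h' => h'.trans h⟩
  exact List.pairwise_insertionSort _ _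

lemma mem_LL (σ : Finset V) : σ ∈ LL V := by simp [LL]

/-- pulled back schedule -/
noncomputable def schedH {K : Type*} [TopologicalSpace K] (S : Sched X V) (p : C(K, X)) :
    Sched (unitInterval × K) V where
  s σ q := (q.1 : ℝ) * S.s σ (p q.2)
  act σ q := S.act σ (p q.2)
  cont σ := by have := S.cont σ; fun_prop
  mem σ q := ⟨mul_nonneg q.1.2.1 (S.mem _ _).1, mul_le_one₀ q.1.2.2 (S.mem _ _).1 (S.mem _ _).2⟩
  pos σ q h := S.pos _ _ (right_ne_zero_of_mul h)
  zero σ q h := by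
    have h1 : Tendsto (fun q : unitInterval × K => p q.2) (𝓝 q) (𝓝 (p q.2)) :=
      (p.continuous.comp continuous_snd).continuousAt
    filter_upwards [h1.eventually (S.zero _ _ h)] with x hx
    rw [hx, mul_zero]
  chain σ τ q := S.chain _ _ _
  ne σ q := S.ne _ _

theorem bridge {K : Type*} [TopologicalSpace K] [CompactSpace K] [T2Space K] (f : C(K, Y)) (y0 : Y)
    (W : V → Set Y) (ho : ∀ i, IsOpen (W i)) (hcov : ∀ y, ∃ i, y ∈ W i)
    (hW : ∀ σ : Finset V, σ.Nonempty → (UU W σ).Nonempty → ContractibleSpace ↥(UU W σ)) :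
    ∃ (p : C(K, ↥(Pol (fun σ => (UU W σ).Nonempty)))) (q : C(↥(Pol (fun σ => (UU W σ).Nonempty)), Y)),
      (q.comp p).Homotopic f := by
  obtain ⟨C⟩ := exists_Ctr y0 W hW
  set Kx : Finset V → Prop := fun σ => (UU W σ).Nonempty with hKx
  obtain ⟨ρ, hρ⟩ := PartitionOfUnity.exists_isSubordinate_of_locallyFinite (X := K) isClosed_univ
    (fun i : V => f ⁻¹' (W i)) (fun i => (ho i).preimage f.continuous)
    (locallyFinite_of_finite _) (fun x _ => by simpa using hcov (f x))
  have hpos : ∀ x i, 0 < ρ i x → f x ∈ W i := fun x i h =>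
    hρ i (subset_tsupport _ (by simpa using h.ne'))
  let p : C(K, ↥(Pol Kx)) := ⟨fun x => ⟨fun i => ρ i x, ⟨fun i => ρ.nonneg i x, by
      rw [← finsum_eq_sum_of_fintype]; exact ρ.sum_eq_one (Set.mem_univ x)⟩,
      ⟨f x, fun i hi => hpos x i ((mem_spt (t := fun i => ρ i x)).1 hi)⟩⟩, by
      refine Continuous.subtype_mk (continuous_pi fun i => ?_) _
      exact (ρ i).continuous⟩
  have hsub : ∀ σ (x : ↥(Pol Kx)), (schedP Kx).act σ x → σ ⊆ spt (x : V → ℝ) := 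
    fun σ x h i hi => mem_spt.2 ((mu_pos h).2.1 i hi)
  let q : C(↥(Pol Kx), Y) := ⟨fun x => fold C (fun σ => (schedP Kx).s σ x) (LL V) y0, by
    rw [continuous_iff_continuousAt]
    intro x
    obtain ⟨σ, h1, h2, h3⟩ := sched_one Kx x
    refine fold_cont_reset ho C (schedP Kx) x _ LL_pair y0 (mem_LL σ) h1 ?_
    obtain ⟨y, hy⟩ := x.2.2
    exact ⟨y, fun i hi => hy i (hsub _ _ h3 hi)⟩⟩
  refine ⟨p, q, ContinuousMap.Homotopic.symm ⟨⟨⟨fun z => fold C (fun σ => (schedH (schedP Kx) p).s σ z) (LL V) (f z.2), ?_⟩, ?_, ?_⟩⟩⟩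
  · rw [continuous_iff_continuousAt]
    intro z
    refine fold_cont ho C _ z _ LL_pair (fun z => f z.2) (by fun_prop) ?_
    intro τ _
    refine Eventually.of_forall fun z' ha i hi => ?_
    exact hpos z'.2 i ((mem_spt (t := fun i => ρ i z'.2)).1 (hsub _ _ ha hi))
  · intro x
    exact fold_zero C _ _ (fun σ => by simp [schedH]) _
  · intro x
    obtain ⟨σ, h1, h2, h3⟩ := sched_one Kx (p x)
    have e : ∀ σ, (schedH (schedP Kx) p).s σ (1, x) = (schedP Kx).s σ (p x) := fun σ => by simp [schedH]
    simp only [e]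
    exact fold_reset C _ _ (mem_LL σ) h2 _ _

end bridge
end CT
end

section
open Filter Topology



namespace CT

section fin
lemma transfer {X X' : Type*} [MetricSpace X] [MetricSpace X'] {A : Set X} {A' : Set X'}
    (hA : IsCompact A) (hA' : IsCompact A') (hne : A.Nonempty)
    (p : C(A, A')) (Q : C(A', A)) (h : (Q.comp p).Homotopic (ContinuousMap.id A)) :
    ∃ F : X' → X, Near2 A' A F F ∧
      ∀ m φ, Z A m φ → B A' m (fun l => φ (l.map F)) → B A m φ := by
  obtain ⟨H⟩ := h
  have hne' : A'.Nonempty := by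
    obtain ⟨a, ha⟩ := hne
    exact ⟨_, (p ⟨a, ha⟩).2⟩
  let ρ : X → A := fun x => ⟨pr hA x, pr_mem hA hne x⟩
  let ρ' : X' → A' := fun x => ⟨pr hA' x, pr_mem hA' hne' x⟩
  have hρ : ∀ a (ha : a ∈ A), ρ a = ⟨a, ha⟩ := fun a ha => Subtype.ext (pr_self hA ha)
  have hρ' : ∀ a (ha : a ∈ A'), ρ' a = ⟨a, ha⟩ := fun a ha => Subtype.ext (pr_self hA' ha)
  have cρ : ContinuousOn ρ A := by
    rw [continuousOn_iff_continuous_domRestrict]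
    have : A.domRestrict ρ = id := by funext a; exact hρ a a.2
    rw [this]; exact continuous_id
  have cρ' : ContinuousOn ρ' A' := by
    rw [continuousOn_iff_continuous_domRestrict]
    have : A'.domRestrict ρ' = id := by funext a; exact hρ' a a.2
    rw [this]; exact continuous_id
  have n1 := near2_cont hA' (r := fun x => (Q (ρ' x) : X)) (A' := A)
    ((continuous_subtype_val.comp Q.continuous).comp_continuousOn cρ') (fun a _ => Subtype.coe_prop _)
  have n2 := near2_cont hA (r := fun x => (p (ρ x) : X')) (A' := A')
    ((continuous_subtype_val.comp p.continuous).comp_continuousOn cρ) (fun a _ => Subtype.coe_prop _)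
  have n3 := htp_cont hA (H := fun z : ℝ × X => (H (Set.projIcc 0 1 zero_le_one z.1, ρ z.2) : X)) (A' := A) (by
      refine (continuous_subtype_val.comp H.continuous).comp_continuousOn ?_
      refine ContinuousOn.prodMk (continuous_projIcc.comp continuous_fst).continuousOn ?_
      exact cρ.comp continuousOn_snd (fun z hz => hz.2)) (fun t _ a _ => Subtype.coe_prop _)
  refine ⟨_, n1, fun m φ hφ hB => ?_⟩
  have e1 := hB.pull n2
  simp only [List.map_map] at e1
  have e2 := B.htp (A := A) (f := fun x => (H (Set.projIcc 0 1 zero_le_one (0:ℝ), ρ (pr hA x)) : X))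
    (m := m) (φ := φ) (A' := A) ?_ hφ n3
  · have e3 : (fun x => (H (Set.projIcc 0 1 zero_le_one (1:ℝ), ρ (pr hA x)) : X)) = pr hA := by
      funext x
      rw [Set.projIcc_right]
      have := H.apply_one (ρ (pr hA x))
      rw [hρ _ (pr_mem hA hne x)] at this ⊢
      exact congrArg Subtype.val this
    simp only [e3] at e2
    have e4 := B.htp' (f := id) e2 hφ (near2_pr hA).htp
    simpa using e4
  · convert e1 using 5 with l x
    rw [Set.projIcc_left]
    have := H.apply_zero (ρ (pr hA x))
    simp only [Function.comp]
    rw [pr_self hA' (Subtype.coe_prop (p (ρ (pr hA x)))), hρ' _ (Subtype.coe_prop (p (ρ (pr hA x))))]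
    exact congrArg Subtype.val this

attribute [local instance] Matrix.normedAddCommGroup

theorem main_UG (n : ℕ) {Y V : Type*} [TopologicalSpace Y] [Fintype V]
    (f : C(↥(UG (n+2)), Y)) (g : C(Y, ↥(UG (n+2))))
    (hgf : (g.comp f).Homotopic (ContinuousMap.id _))
    (W : V → Set Y) (ho : ∀ i, IsOpen (W i)) (hcov : ∀ y, ∃ i, y ∈ W i)
    (hW : ∀ σ : Finset V, σ.Nonempty → (UU W σ).Nonempty → ContractibleSpace ↥(UU W σ)) :
    (4 * (n+2)^3 + 3 * (n+2)^2 + 5*(n+2) + 12) / 6 ≤ Fintype.card V := by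
  classical
  have hne : (UG (n+2)).Nonempty := ⟨1, by simp [UG]⟩
  obtain ⟨a, ha⟩ := hne
  have hcs : CompactSpace ↥(UG (n+2)) := isCompact_iff_compactSpace.1 (isCompact_UG (n+2))
  let Kx : Finset V → Prop := fun σ => (UU W σ).Nonempty
  obtain ⟨p, q, hpq⟩ : ∃ (p : C(↥(UG (n+2)), ↥(Pol Kx))) (q : C(↥(Pol Kx), Y)),
    (q.comp p).Homotopic f := bridge f (f ⟨a, ha⟩) W ho hcov hW
  have hK : ∀ σ τ, σ ⊆ τ → Kx τ → Kx σ := fun σ τ h ⟨y, hy⟩ => ⟨y, fun i hi => hy i (h hi)⟩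
  have hh : ((g.comp q).comp p).Homotopic (ContinuousMap.id _) := by
    have : (g.comp (q.comp p)).Homotopic (g.comp f) :=
      ContinuousMap.Homotopic.comp (ContinuousMap.Homotopic.refl g) hpq
    exact this.trans hgf
  obtain ⟨F, hF, hFB⟩ := transfer (isCompact_UG (n+2)) (isCompact_Pol hK) ⟨a, ha⟩ p (g.comp q) hh
  obtain ⟨φ, hφ, hn⟩ := UG_prod (n+1)
  let φ' : ℕ → List (V → ℝ) → ZMod 2 := fun i l => φ i (l.map F)
  have hφ' : ∀ i ≤ n+1, Z (Pol Kx) (2*i+2) (φ' i) := fun i hi => (hφ i hi).pull hF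
  have hn' : ¬ B (Pol Kx) ((n+1+1)^2+1) (Pd φ' (n+1)) := by
    intro hB
    refine hn (hFB _ _ (Z_Pd _ hφ) ?_)
    convert hB using 1
    funext l
    exact (Pd_map F φ _ l).symm
  have hd : dgr (fun i => 2*(n+1-i)) (n+1) = (n+1+1)^2 := by
    have := dgr_eq (n+1) (n+1) le_rfl
    simpa using this
  have := main_bound (G := Gv Kx) (r := fun i => 2*(n+1-i)) (ψ := fun i => φ' (n+1-i)) n (S := Finset.univ)
    (goodF_Gv hK) ?_ ?_ (by simp)
  · rw [arith]
    simpa using this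
  · intro i hi
    rw [Un_Gv]
    exact hφ' _ (by omega)
  · rw [Un_Gv, hd, Mb_Pd' φ' (Pd φ') rfl (fun _ => rfl)]
    exact hn'

end fin
end CT
end

/-- The covering type of the unitary group `U(n)` is at least `(4n³+3n²+5n+12)/6`:
every good cover of any space homotopy equivalent to `U(n)` has at least that many
members.  (The numerator is divisible by 6, so `/` is exact.) -/
theorem stmt9 (n : ℕ) (hn : 2 ≤ n) (Y : Type*) [TopologicalSpace Y]
    (h : Nonempty (ContinuousMap.HomotopyEquiv ↥(Matrix.unitaryGroup (Fin n) ℂ) Y))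
    (U : Finset (Set Y)) (hU : IsGoodCover U) :
    (4 * n ^ 3 + 3 * n ^ 2 + 5 * n + 12) / 6 ≤ U.card := by
  classical
  obtain ⟨k, rfl⟩ : ∃ k, n = k + 2 := ⟨n - 2, by omega⟩
  obtain ⟨e⟩ := h
  let a : C(↥(CT.UG (k+2)), ↥(Matrix.unitaryGroup (Fin (k+2)) ℂ)) :=
    ⟨fun M => ⟨M.1, Matrix.mem_unitaryGroup_iff'.2 M.2⟩, continuous_subtype_val.subtype_mk _⟩
  let b : C(↥(Matrix.unitaryGroup (Fin (k+2)) ℂ), ↥(CT.UG (k+2))) :=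
    ⟨fun M => ⟨M.1, Matrix.mem_unitaryGroup_iff'.1 M.2⟩, continuous_subtype_val.subtype_mk _⟩
  obtain ⟨h1, h2, h3⟩ := hU
  have key := CT.main_UG k (V := ↥U) (e.toFun.comp a) (b.comp e.invFun) ?_ (fun i => i.1)
    (fun i => h1 _ i.2) ?_ ?_
  · simpa using key
  · have := (ContinuousMap.Homotopic.refl b).comp (e.left_inv.comp (ContinuousMap.Homotopic.refl a))
    exact this
  · intro y
    have : y ∈ ⋃₀ (U : Set (Set Y)) := by rw [h2]; trivial
    obtain ⟨s, hs, hy⟩ := this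
    exact ⟨⟨s, hs⟩, hy⟩
  · intro σ hσ hne
    have he : CT.UU (fun i : ↥U => i.1) σ = ⋂₀ ((σ.image Subtype.val : Finset (Set Y)) : Set (Set Y)) := by
      ext y
      simp [CT.UU]
    rw [he] at hne ⊢
    refine h3 _ ?_ (hσ.image _) hne
    intro s hs
    obtain ⟨i, _, rfl⟩ := Finset.mem_image.1 hs
    exact i.2
end
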